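/- arXiv:1010.4544 — 4 statements merged into one kernel-verified Lean document; each statement's English description precedes it below -/
import Mathlib

section
/- Let u be a nondegenerate linear recurrence sequence of order k ≥ 2 with simple roots, with characteristic polynomial f, and let K ⊆ ℂ be the splitting field of f over ℚ with roots α₁, …, α_k. For integers x₂, …, x_k ≥ 0, let D(0, x₂, …, x_k) be the determinant of the k×k matrix whose (i,1) entry is 1 and whose (i,j) entry for j ≥ 2 is α_i^{x_j}; for a prime p not dividing a_k, let T_u(p) be the largest nonnegative integer T such that p does not divide the integer ∏_{0 ≤ x₂,…,x_k ≤ T} max{1, |N_{K/ℚ}(D(0, x₂, …, x_k))|}, where N_{K/ℚ} denotes the field norm. Then there is a constant C depending only on the sequence u such that for all real y ≥ 2, the number of primes p not dividing a_k with T_u(p) ≤ y is at most C·y^k/log y. -/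
/-!
If `T p ≤ y`, then `p` divides the numerator of `prodNorm k α t` with `t = ⌊y⌋ + 1`, by
maximality of `T p`.  The roots are algebraic integers, so `prodNorm k α t` is a positive integer
`M`, and bounding every conjugate of each determinant by `k! · A ^ (k t)`, where `A` bounds all
conjugates of all roots, gives `M ≤ B ^ ((t + 1) ^ k)` for a constant `B`
(`exists_abs_normD_le`, `prodNorm_le`).  Hence `log M = O(y ^ k)`.

It remains to bound the number of prime divisors of `M` (`card_primeFactors_le`): at most `√y` of
them are at most `√y`, and the product of the others divides `M`, so there are at most
`log M / log √y` of those.  Both contributions are `O(y ^ k / log y)`.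
-/

open Polynomial

/-- The characteristic polynomial `X^k - a₁ X^{k-1} - ⋯ - a_k` of the recurrence
with coefficients `a 0 = a₁, …, a (k-1) = a_k`. -/
noncomputable def charPoly (k : ℕ) (a : Fin k → ℤ) : Polynomial ℤ :=
  X ^ k - ∑ i : Fin k, C (a i) * X ^ (k - 1 - (i : ℕ))

/-- `u` satisfies the linear recurrence `u_{n+k} = a₁ u_{n+k-1} + ⋯ + a_k u_n`. -/
def IsLinRec (k : ℕ) (a : Fin k → ℤ) (u : ℕ → ℤ) : Prop :=
  ∀ n : ℕ, u (n + k) = ∑ i : Fin k, a i * u (n + k - 1 - (i : ℕ))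

/-- The field `K = ℚ(α₁, …, α_k)` generated by the roots, as an intermediate
field of `ℂ/ℚ`; when the `α i` are the roots of the characteristic polynomial,
this is its splitting field over `ℚ`. -/
noncomputable def rootField (k : ℕ) (α : Fin k → ℂ) : IntermediateField ℚ ℂ :=
  IntermediateField.adjoin ℚ (Set.range α)

/-- The root `α i` viewed as an element of `K = ℚ(α₁, …, α_k)`. -/
noncomputable def rootElt (k : ℕ) (α : Fin k → ℂ) (i : Fin k) : rootField k α :=
  ⟨α i, IntermediateField.subset_adjoin ℚ (Set.range α) ⟨i, rfl⟩⟩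

/-- `N_{K/ℚ}(D(0, x₂, …, x_k))`, where `D(0, x₂, …, x_k)` is the determinant of
the `k×k` matrix with `(i,1)` entry `1` and `(i,j)` entry `α_i^{x_j}` for
`j ≥ 2` (here `x : Fin (k-1) → ℕ` lists the exponents `x₂, …, x_k`), computed
inside `K = ℚ(α₁, …, α_k)`. -/
noncomputable def normD (k : ℕ) (α : Fin k → ℂ) (x : Fin (k - 1) → ℕ) : ℚ :=
  Algebra.norm ℚ
    (Matrix.det (Matrix.of fun i j : Fin k =>
      if h : (j : ℕ) = 0 then 1
      else rootElt k α i ^ x ⟨(j : ℕ) - 1, by have := j.isLt; omega⟩))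

/-- `∏_{0 ≤ x₂,…,x_k ≤ T} max{1, |N_{K/ℚ}(D(0, x₂, …, x_k))|}`.  This rational
number is in fact a positive integer, so its numerator is that integer. -/
noncomputable def prodNorm (k : ℕ) (α : Fin k → ℂ) (T : ℕ) : ℚ :=
  ∏ x ∈ Fintype.piFinset fun _ : Fin (k - 1) => Finset.range (T + 1),
    max 1 |normD k α x|

/-- A positive integer `M` has at most `√y` prime divisors up to `√y`, and at most
`log M / log √y` larger ones. -/
lemma card_primeFactors_le (M : ℕ) (hM : M ≠ 0) (y : ℝ) (hy : 2 ≤ y) :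
    (M.primeFactors.card : ℝ) ≤ √y + 2 * Real.log M / Real.log y := by
  have hlog : 0 < Real.log y := Real.log_pos (by linarith)
  have hs : 0 < √y := Real.sqrt_pos.2 (by linarith)
  rw [← Finset.card_filter_add_card_filter_not (s := M.primeFactors) (fun p : ℕ => (p : ℝ) ≤ √y)]
  push_cast
  apply add_le_add
  · have hsub : M.primeFactors.filter (fun p : ℕ => (p : ℝ) ≤ √y) ⊆ Finset.Icc 1 ⌊√y⌋₊ := by
      intro p hp
      rw [Finset.mem_filter] at hp
      exact Finset.mem_Icc.2 ⟨(Nat.prime_of_mem_primeFactors hp.1).one_le, Nat.le_floor hp.2⟩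
    have hcard := Finset.card_le_card hsub
    rw [Nat.card_Icc, Nat.add_sub_cancel] at hcard
    exact (Nat.cast_le.2 hcard).trans (Nat.floor_le hs.le)
  · set S := M.primeFactors.filter (fun p : ℕ => ¬ (p : ℝ) ≤ √y) with hS
    have hprod : √y ^ S.card ≤ ((∏ p ∈ S, p : ℕ) : ℝ) := by
      rw [← Finset.prod_const, Nat.cast_prod]
      refine Finset.prod_le_prod (fun _ _ => hs.le) fun p hp => ?_
      exact (not_le.1 (Finset.mem_filter.1 hp).2).le
    have hle : ∏ p ∈ S, p ≤ M :=
      Nat.le_of_dvd (Nat.pos_of_ne_zero hM)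
        ((Finset.prod_dvd_prod_of_subset _ _ _ (Finset.filter_subset _ _)).trans
          (Nat.prod_primeFactors_dvd M))
    have h := Real.log_le_log (by positivity) (hprod.trans (Nat.cast_le.2 hle))
    rw [Real.log_pow, Real.log_sqrt (by linarith)] at h
    rw [le_div_iff₀ hlog]
    linarith

lemma charPoly_monic (k : ℕ) (a : Fin k → ℤ) : (charPoly k a).Monic := by
  refine (monic_X_pow k).sub_of_left ?_
  rw [degree_X_pow, ← mem_degreeLT]
  refine Submodule.sum_mem _ fun i _ => ?_
  rw [mem_degreeLT]
  refine (degree_C_mul_X_pow_le _ _).trans_lt ?_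
  have := i.isLt
  exact_mod_cast (by omega : k - 1 - (i : ℕ) < k)

lemma isIntegral_root {k : ℕ} {a : Fin k → ℤ} {α : Fin k → ℂ}
    (hroot : ∀ i : Fin k, ((charPoly k a).map (Int.castRingHom ℂ)).IsRoot (α i)) (i : Fin k) :
    IsIntegral ℤ (α i) := by
  refine ⟨charPoly k a, charPoly_monic k a, ?_⟩
  have h := hroot i
  rwa [IsRoot, eval_map] at h

lemma isIntegral_rootElt {k : ℕ} {α : Fin k → ℂ} (hα : ∀ i, IsIntegral ℤ (α i)) (i : Fin k) :
    IsIntegral ℤ (rootElt k α i) := by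
  have hval : Function.Injective ((rootField k α).val.restrictScalars ℤ) :=
    Subtype.val_injective
  exact (isIntegral_algHom_iff _ hval).1 (hα i)

lemma finiteDimensional_rootField {k : ℕ} {α : Fin k → ℂ} (hα : ∀ i, IsIntegral ℤ (α i)) :
    FiniteDimensional ℚ (rootField k α) := by
  refine IntermediateField.finiteDimensional_adjoin ?_
  rintro _ ⟨i, rfl⟩
  exact (hα i).tower_top

lemma exists_int_eq_normD {k : ℕ} {α : Fin k → ℂ} (hα : ∀ i, IsIntegral ℤ (α i))
    (x : Fin (k - 1) → ℕ) : ∃ n : ℤ, (n : ℚ) = normD k α x := by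
  refine IsIntegrallyClosed.isIntegral_iff.1 (Algebra.isIntegral_norm ℚ (IsIntegral.det ?_))
  intro i j
  rw [Matrix.of_apply]
  split_ifs
  · exact isIntegral_one
  · exact (isIntegral_rootElt hα i).pow _

lemma exists_nat_eq_prodNorm {k : ℕ} {α : Fin k → ℂ} (hα : ∀ i, IsIntegral ℤ (α i)) (t : ℕ) :
    ∃ M : ℕ, M ≠ 0 ∧ (M : ℚ) = prodNorm k α t := by
  choose n hn using exists_int_eq_normD hα
  have hM : ((∏ x ∈ Fintype.piFinset fun _ : Fin (k - 1) => Finset.range (t + 1),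
      max 1 (n x).natAbs : ℕ) : ℚ) = prodNorm k α t := by
    simp [prodNorm, ← hn, Nat.cast_natAbs]
  exact ⟨_, Finset.prod_ne_zero_iff.2 fun x _ => by positivity, hM⟩

/-- The norms grow at most exponentially in the largest exponent: a conjugate of the determinant
is a determinant of powers of conjugates of the roots, all of which are bounded. -/
lemma exists_abs_normD_le {k : ℕ} {α : Fin k → ℂ} (hα : ∀ i, IsIntegral ℤ (α i)) :
    ∃ B : ℝ, 1 ≤ B ∧ ∀ (t : ℕ) (x : Fin (k - 1) → ℕ), (∀ j, x j ≤ t) →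
      ((|normD k α x| : ℚ) : ℝ) ≤ B ^ (t + 1) := by
  have := finiteDimensional_rootField hα
  let A : ℝ := 1 + ∑ σ : rootField k α →ₐ[ℚ] ℂ, ∑ i, ‖σ (rootElt k α i)‖
  have hA : 1 ≤ A := le_add_of_nonneg_right (by positivity)
  have hσ : ∀ (σ : rootField k α →ₐ[ℚ] ℂ) i, ‖σ (rootElt k α i)‖ ≤ A := by
    intro σ i
    have h1 : ‖σ (rootElt k α i)‖ ≤ ∑ i, ‖σ (rootElt k α i)‖ :=
      Finset.single_le_sum (f := fun i => ‖σ (rootElt k α i)‖)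
        (fun _ _ => norm_nonneg _) (Finset.mem_univ i)
    have h2 : ∑ i, ‖σ (rootElt k α i)‖ ≤
        ∑ σ : rootField k α →ₐ[ℚ] ℂ, ∑ i, ‖σ (rootElt k α i)‖ :=
      Finset.single_le_sum (f := fun σ : rootField k α →ₐ[ℚ] ℂ => ∑ i, ‖σ (rootElt k α i)‖)
        (fun _ _ => by positivity) (Finset.mem_univ σ)
    linarith
  let E : ℝ := (k.factorial : ℝ) * A ^ k
  have hfac : (1 : ℝ) ≤ k.factorial := by exact_mod_cast k.factorial_pos
  have hE : 1 ≤ E := one_le_mul_of_one_le_of_one_le hfac (one_le_pow₀ hA)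
  refine ⟨E ^ Fintype.card (rootField k α →ₐ[ℚ] ℂ), one_le_pow₀ hE, fun t x hx => ?_⟩
  have hcast : ((|normD k α x| : ℚ) : ℝ) = ‖algebraMap ℚ ℂ (normD k α x)‖ := by
    simp
  rw [hcast, normD, Algebra.norm_eq_prod_embeddings ℚ ℂ, norm_prod, pow_right_comm,
    ← Finset.card_univ, ← Finset.prod_const]
  refine Finset.prod_le_prod (fun _ _ => norm_nonneg _) fun σ _ => ?_
  rw [AlgHom.map_det]
  have hdet := Matrix.det_le (abv := NormedField.toAbsoluteValue ℂ) (x := A ^ t)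
    (A := σ.mapMatrix (Matrix.of fun i j : Fin k =>
      if h : (j : ℕ) = 0 then 1
      else rootElt k α i ^ x ⟨(j : ℕ) - 1, by have := j.isLt; omega⟩)) (by
    intro i j
    change ‖σ _‖ ≤ _
    rw [Matrix.of_apply]
    split_ifs
    · rw [map_one, norm_one]
      exact one_le_pow₀ hA
    · rw [map_pow, norm_pow]
      exact (pow_le_pow_left₀ (norm_nonneg _) (hσ σ i) _).trans (pow_le_pow_right₀ hA (hx _)))
  rw [Fintype.card_fin, nsmul_eq_mul] at hdet
  refine hdet.trans ?_
  rw [mul_pow, pow_right_comm]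
  exact mul_le_mul (le_self_pow₀ hfac t.succ_ne_zero)
    (pow_le_pow_right₀ (one_le_pow₀ hA) t.le_succ) (by positivity) (by positivity)

lemma prodNorm_le {k : ℕ} (hk : 2 ≤ k) {α : Fin k → ℂ} {B : ℝ} (hB : 1 ≤ B)
    (h : ∀ (t : ℕ) (x : Fin (k - 1) → ℕ), (∀ j, x j ≤ t) →
      ((|normD k α x| : ℚ) : ℝ) ≤ B ^ (t + 1)) (t : ℕ) :
    (prodNorm k α t : ℝ) ≤ B ^ ((t + 1) ^ k) := by
  have hexp : (t + 1) ^ k = (t + 1) * (Fintype.piFinset fun _ : Fin (k - 1) =>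
      Finset.range (t + 1)).card := by
    obtain ⟨m, rfl⟩ : ∃ m, k = m + 1 := ⟨k - 1, by omega⟩
    simp [pow_succ, mul_comm]
  rw [hexp, pow_mul, ← Finset.prod_const, prodNorm, Rat.cast_prod]
  refine Finset.prod_le_prod (fun _ _ => by positivity) fun x hx => ?_
  rw [Rat.cast_max, Rat.cast_one]
  refine max_le (one_le_pow₀ hB) (h t x fun j => ?_)
  exact Nat.lt_succ_iff.1 (Finset.mem_range.1 (Fintype.mem_piFinset.1 hx j))

theorem statement6 (k : ℕ) (hk : 2 ≤ k) (a : Fin k → ℤ) (u : ℕ → ℤ)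
    (α : Fin k → ℂ)
    (hak : a ⟨k - 1, by omega⟩ ≠ 0)
    (hrec : IsLinRec k a u)
    (hinj : Function.Injective α)
    (hroot : ∀ i : Fin k, ((charPoly k a).map (Int.castRingHom ℂ)).IsRoot (α i))
    (hnd : ∀ i j : Fin k, i ≠ j → ∀ m : ℕ, 0 < m → (α i / α j) ^ m ≠ 1)
    (T : ℕ → ℕ)
    (hT : ∀ p : ℕ, p.Prime → ¬((p : ℤ) ∣ a ⟨k - 1, by omega⟩) →
      IsGreatest {t : ℕ | ¬((p : ℤ) ∣ (prodNorm k α t).num)} (T p)) :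
    ∃ C : ℝ, 0 < C ∧ ∀ y : ℝ, 2 ≤ y →
      {p : ℕ | p.Prime ∧ ¬((p : ℤ) ∣ a ⟨k - 1, by omega⟩) ∧ (T p : ℝ) ≤ y}.Finite ∧
      ({p : ℕ | p.Prime ∧ ¬((p : ℤ) ∣ a ⟨k - 1, by omega⟩) ∧ (T p : ℝ) ≤ y}.ncard : ℝ) ≤
        C * y ^ k / Real.log y := by
  have hα := isIntegral_root hroot
  obtain ⟨B, hB, hnorm⟩ := exists_abs_normD_le hα
  have hlogB : 0 ≤ Real.log B := Real.log_nonneg hB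
  refine ⟨1 + 2 * (2 ^ k * Real.log B), by positivity, fun y hy => ?_⟩
  have hlog : 0 < Real.log y := Real.log_pos (by linarith)
  obtain ⟨M, hM0, hM⟩ := exists_nat_eq_prodNorm hα (⌊y⌋₊ + 1)
  have hsub : {p : ℕ | p.Prime ∧ ¬((p : ℤ) ∣ a ⟨k - 1, by omega⟩) ∧ (T p : ℝ) ≤ y} ⊆
      (M.primeFactors : Set ℕ) := by
    rintro p ⟨hp, hpa, hpy⟩
    have hdvd : (p : ℤ) ∣ (prodNorm k α (⌊y⌋₊ + 1)).num := by
      by_contra hnot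
      have h1 : ⌊y⌋₊ + 1 ≤ T p := (hT p hp hpa).2 hnot
      have h2 : T p ≤ ⌊y⌋₊ := Nat.le_floor hpy
      omega
    rw [← hM, Rat.num_natCast, Int.natCast_dvd_natCast] at hdvd
    exact Nat.mem_primeFactors.2 ⟨hp, hdvd, hM0⟩
  refine ⟨M.primeFactors.finite_toSet.subset hsub, ?_⟩
  have hcard := Set.ncard_le_ncard hsub M.primeFactors.finite_toSet
  rw [Set.ncard_coe_finset] at hcard
  refine ((Nat.cast_le.2 hcard).trans (card_primeFactors_le M hM0 y hy)).trans ?_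
  have hlogM : Real.log M ≤ 2 ^ k * Real.log B * y ^ k := by
    have hle : (M : ℝ) ≤ B ^ ((⌊y⌋₊ + 1 + 1) ^ k) := by
      have hMle := prodNorm_le hk hB hnorm (⌊y⌋₊ + 1)
      rwa [← hM, Rat.cast_natCast] at hMle
    have h1 := Real.log_le_log (by positivity) hle
    rw [Real.log_pow] at h1
    push_cast at h1
    have hfl : (⌊y⌋₊ : ℝ) ≤ y := Nat.floor_le (by linarith)
    have h2 : ((⌊y⌋₊ : ℝ) + 1 + 1) ^ k ≤ (2 * y) ^ k :=
      pow_le_pow_left₀ (by positivity) (by linarith) k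
    rw [mul_pow] at h2
    linarith [mul_le_mul_of_nonneg_right h2 hlogB]
  have hsqrt : √y * Real.log y ≤ y ^ k := by
    have h1 : √y ≤ y := Real.sqrt_le_iff.2 ⟨by linarith, by nlinarith⟩
    have h2 : Real.log y ≤ y := Real.log_le_self (by linarith)
    calc √y * Real.log y ≤ y * y := mul_le_mul h1 h2 hlog.le (by linarith)
      _ = y ^ 2 := (sq y).symm
      _ ≤ y ^ k := pow_le_pow_right₀ (by linarith) hk
  rw [le_div_iff₀ hlog, add_mul, div_mul_cancel₀ _ hlog.ne']
  linarith
end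

section
/- Let k ≥ 2 and let u : ℕ → ℤ be a nondegenerate linear recurrence sequence of order k with simple roots. Assume there exists a positive integer n₀ coprime to a_k such that u_{n₀} = 0. Then there is a constant c > 0 (depending on u) such that for all sufficiently large x, the number of positive integers n ≤ x with n ∣ u_n is at least c·x/log x. -/
/-!
The integers counted are of the form `n = p n₀` with `p` prime. Let `T` be a period of `u` modulo `n₀`;
it exists because `a_k` is invertible modulo `n₀` (`exists_period`). Let `K` be the splitting field over
`ℚ` of the characteristic polynomial `f` times the `T`-th cyclotomic polynomial, and let `P` be a prime
ideal of `𝓞 K` whose norm is a large prime number `p`. The residue field of `P` is `𝔽_p`, so `f` is a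
product of distinct linear factors modulo `P` and divides `X ^ p - X`, hence also
`X ^ (p n₀) - X ^ n₀`. As `u` defines a linear functional vanishing on the multiples of `f`, this gives
`u (p n₀) ≡ u n₀ = 0` modulo `p`. The residue field also contains a primitive `T`-th root of unity, so
`T ∣ p - 1`, whence `p n₀ ≡ n₀` modulo `T` and `n₀ ∣ u (p n₀)`. Therefore `p n₀ ∣ u (p n₀)`
(`exists_dvd_mul`).

It remains to show that at least `c x / log x` primes `p ≤ x` are norms of prime ideals of `K`
(`exists_degOne_primes_lower`). No density theorem is needed; a lower bound in the style of Chebyshev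
suffices, and it is obtained by elementary means. Let `d = [K : ℚ]`, and consider the `X ^ d`
algebraic integers in a box of side `X` in coordinates with respect to an integral basis, shifted by a
multiple of `X` so that all their norms are of exact order `X ^ d`. The proportion of the box lying in
an ideal `I` is `(1 + O(N(I)^(1/d) / X)) / N(I)`, by a count that uses small representatives of the
classes modulo `I` (`exists_small_rep`, `cnt_bounds`). Factoring `∑ log |N(β)|` over the box into prime
ideals yields `∑ log N(P) / N(P) = d log X + O(1)`, smoothed by these proportions, the sum being over
the prime ideals of residue degree one; all other prime powers contribute `O(1)` (`exists_mertens`).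
Comparing this at the scales `X` and `h X` for a large constant `h` forces many prime ideals of degree
one with norm of order `X ^ d` (`exists_degOne_lower`); the error made for the smaller primes is `O(1)`
by the upper bound of Chebyshev for rational primes.
-/

open Polynomial

/-- The multiset of complex roots of the characteristic polynomial. -/
noncomputable def cRoots (k : ℕ) (a : Fin k → ℤ) : Multiset ℂ :=
  ((charPoly k a).map (Int.castRingHom ℂ)).roots

/-- The characteristic polynomial has `k` distinct roots in `ℂ`. -/
def HasSimpleRoots (k : ℕ) (a : Fin k → ℤ) : Prop :=
  (cRoots k a).toFinset.card = k

/-- The quotient of any two distinct complex roots of the characteristic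
polynomial is not a root of unity. -/
def Nondegen (k : ℕ) (a : Fin k → ℤ) : Prop :=
  ∀ α ∈ cRoots k a, ∀ β ∈ cRoots k a, α ≠ β →
    ∀ m : ℕ, 0 < m → (α / β) ^ m ≠ 1

open Classical in
/-- The number of positive integers `n ≤ x` with `n ∣ u n`. -/
noncomputable def countDiv (u : ℕ → ℤ) (x : ℝ) : ℕ :=
  ((Finset.Icc 1 ⌊x⌋₊).filter fun n : ℕ => (n : ℤ) ∣ u n).card

namespace LinRecDiv

open NumberField Module

/-! ### Lattice points of an ideal in a box -/

section Geometry

variable (K : Type*) [Field K] [NumberField K]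

/-- Index type of the chosen `ℤ`-basis of `𝓞 K`. -/
abbrev Idx : Type _ := Module.Free.ChooseBasisIndex ℤ (𝓞 K)

/-- The `ℤ`-linear isomorphism sending a coordinate vector to the corresponding algebraic integer,
with respect to `RingOfIntegers.basis K`. -/
noncomputable def comb : (Idx K → ℤ) ≃ₗ[ℤ] 𝓞 K := (RingOfIntegers.basis K).equivFun.symm

lemma card_idx : Fintype.card (Idx K) = finrank ℚ K := by
  rw [← RingOfIntegers.rank K, Module.finrank_eq_card_chooseBasisIndex]

open Classical in
/-- The number of elements of `I` in the box `w + ∑ cᵢ ωᵢ`, `0 ≤ cᵢ < X`, where `(ωᵢ)` is the chosen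
integral basis. -/
noncomputable def cnt (w : 𝓞 K) (X : ℕ) (I : Ideal (𝓞 K)) : ℕ :=
  ((Fintype.piFinset fun _ : Idx K => Finset.Ico (0 : ℤ) X).filter fun c => w + comb K c ∈ I).card

variable {K}

/-- Pigeonhole: a nonzero ideal of norm less than `M ^ d` contains a nonzero element whose coordinates
are at most `M` in absolute value. -/
lemma exists_small_mem (I : Ideal (𝓞 K)) (hI : I ≠ ⊥) (M : ℕ)
    (hM : Ideal.absNorm I < M ^ finrank ℚ K) :
    ∃ g : Idx K → ℤ, comb K g ∈ I ∧ g ≠ 0 ∧ ∀ i, |g i| ≤ M := by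
  classical
  have hfin : Finite (𝓞 K ⧸ I) := I.finiteQuotientOfFreeOfNeBot hI
  cases nonempty_fintype (𝓞 K ⧸ I)
  have hcard : (Finset.univ : Finset (𝓞 K ⧸ I)).card <
      (Fintype.piFinset fun _ : Idx K => Finset.Ico (0 : ℤ) M).card := by
    rw [Fintype.card_piFinset]
    simp only [Int.card_Ico, sub_zero, Int.toNat_natCast, Finset.prod_const, Finset.card_univ,
      card_idx]
    convert! hM
    rw [Ideal.absNorm_apply, Submodule.cardQuot_apply, Nat.card_eq_fintype_card]
  obtain ⟨x, hx, y, hy, hxy, h⟩ := Finset.exists_ne_map_eq_of_card_lt_of_maps_to hcard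
    (f := fun c => Ideal.Quotient.mk I (comb K c)) (fun _ _ => by simp)
  refine ⟨x - y, ?_, sub_ne_zero.mpr hxy, fun i => ?_⟩
  · rw [map_sub]; exact Ideal.Quotient.eq.mp h
  · simp only [Fintype.mem_piFinset, Finset.mem_Ico] at hx hy
    have := hx i; have := hy i
    rw [Pi.sub_apply, abs_le]; omega

variable (K) in
/-- Multiplying by a basis element enlarges the coordinates at most by a constant factor `B`. -/
lemma exists_mul_bound : ∃ B : ℕ, ∀ (g : Idx K → ℤ) (M : ℕ), (∀ i, |g i| ≤ M) →
    ∀ i j, |(comb K).symm (comb K g * RingOfIntegers.basis K i) j| ≤ B * M := by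
  classical
  refine ⟨∑ l, ∑ i, ∑ j, ((comb K).symm
    (RingOfIntegers.basis K l * RingOfIntegers.basis K i) j).natAbs, fun g M hg i j => ?_⟩
  have h1 : comb K g * RingOfIntegers.basis K i =
      ∑ l, g l • (RingOfIntegers.basis K l * RingOfIntegers.basis K i) := by
    simp only [comb, Basis.equivFun_symm_apply, Finset.sum_mul, smul_mul_assoc]
  rw [h1, map_sum, Finset.sum_apply]
  refine (Finset.abs_sum_le_sum_abs _ _).trans ?_
  push_cast
  rw [Finset.sum_mul]
  refine Finset.sum_le_sum fun l _ => ?_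
  rw [map_smul, Pi.smul_apply, smul_eq_mul, abs_mul, mul_comm]
  refine mul_le_mul ?_ (hg l) (abs_nonneg _) (by positivity)
  calc _ ≤ ∑ j, |(comb K).symm (RingOfIntegers.basis K l * RingOfIntegers.basis K i) j| :=
        Finset.single_le_sum (f := fun j => |(comb K).symm
          (RingOfIntegers.basis K l * RingOfIntegers.basis K i) j|)
          (fun _ _ => abs_nonneg _) (Finset.mem_univ j)
    _ ≤ _ := Finset.single_le_sum (f := fun i => ∑ j, |(comb K).symm
          (RingOfIntegers.basis K l * RingOfIntegers.basis K i) j|)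
          (fun _ _ => Finset.sum_nonneg fun _ _ => abs_nonneg _) (Finset.mem_univ i)

/-- The integral coordinates of `x` are its coordinates in the `ℚ`-basis `integralBasis K` of `K`. -/
lemma comb_symm_eq (x : 𝓞 K) (j : Idx K) :
    (((comb K).symm x j : ℤ) : ℚ) = (integralBasis K).repr (algebraMap (𝓞 K) K x) j := by
  rw [integralBasis_repr_apply]
  simp [comb]

variable (K) in
/-- Every class modulo `I` has a representative with coordinates `O(N(I)^(1/d))`: divide by a small
element `γ ∈ I`, and round the quotient coordinatewise, so that the remainder is a combination of the
`γ ωᵢ` with coefficients in `[0, 1)`. -/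
lemma exists_small_rep : ∃ C : ℕ, ∀ (I : Ideal (𝓞 K)), I ≠ ⊥ → ∀ M : ℕ,
    Ideal.absNorm I < M ^ finrank ℚ K →
    ∀ y : 𝓞 K, ∃ δ : 𝓞 K, y - δ ∈ I ∧ ∀ i, |(comb K).symm δ i| ≤ (C * M : ℕ) := by
  classical
  obtain ⟨B, hB⟩ := exists_mul_bound K
  refine ⟨Fintype.card (Idx K) * B, fun I hI M hM y => ?_⟩
  obtain ⟨g, hgI, hg0, hgM⟩ := exists_small_mem I hI M hM
  set γ := comb K g with hγ
  have hγ0 : algebraMap (𝓞 K) K γ ≠ 0 := by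
    rw [Ne, FaithfulSMul.algebraMap_eq_zero_iff]
    simpa [hγ] using hg0
  set q : Idx K → ℚ := fun i => (integralBasis K).repr (algebraMap (𝓞 K) K y / algebraMap (𝓞 K) K γ) i with hq
  set z : 𝓞 K := comb K fun i => ⌊q i⌋ with hz
  refine ⟨y - γ * z, by simpa using I.mul_mem_right z hgI, fun j => ?_⟩
  have hzK : algebraMap (𝓞 K) K z = ∑ i, (⌊q i⌋ : ℚ) • (integralBasis K i) := by
    rw [hz, comb, Basis.equivFun_symm_apply]
    simp [integralBasis_apply, Algebra.smul_def]
  have hyK : algebraMap (𝓞 K) K y = algebraMap (𝓞 K) K γ * ∑ i, q i • integralBasis K i := by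
    rw [hq, Basis.sum_repr, mul_div_cancel₀ _ hγ0]
  have hδ : algebraMap (𝓞 K) K (y - γ * z) =
      ∑ i, Int.fract (q i) • algebraMap (𝓞 K) K (γ * RingOfIntegers.basis K i) := by
    rw [map_sub, map_mul, hyK, hzK, ← mul_sub, ← Finset.sum_sub_distrib, Finset.mul_sum]
    refine Finset.sum_congr rfl fun i _ => ?_
    rw [← sub_smul, Int.self_sub_floor, mul_smul_comm, integralBasis_apply, map_mul]
  have key : ((|(comb K).symm (y - γ * z) j| : ℤ) : ℚ) ≤ ((Fintype.card (Idx K) * B * M : ℕ) : ℚ) := by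
    rw [Int.cast_abs, comb_symm_eq, hδ, map_sum, Finsupp.finsetSum_apply]
    refine (Finset.abs_sum_le_sum_abs _ _).trans ?_
    calc _ ≤ ∑ _i : Idx K, ((B * M : ℕ) : ℚ) := by
          refine Finset.sum_le_sum fun i _ => ?_
          rw [map_smul, Finsupp.smul_apply, smul_eq_mul, abs_mul, ← comb_symm_eq,
            abs_of_nonneg (Int.fract_nonneg _)]
          have h1 : |(((comb K).symm (γ * RingOfIntegers.basis K i) j : ℤ) : ℚ)| ≤ ((B * M : ℕ) : ℚ) := by
            exact_mod_cast hB g M hgM i j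
          calc _ ≤ 1 * |(((comb K).symm (γ * RingOfIntegers.basis K i) j : ℤ) : ℚ)| :=
                mul_le_mul_of_nonneg_right (Int.fract_lt_one _).le (abs_nonneg _)
            _ ≤ _ := by rwa [one_mul]
      _ = _ := by simp [mul_assoc]
  exact_mod_cast key

/-- If every class modulo `I` has a representative with coordinates at most `r`, then the translates
of `I ∩ box` by these representatives lie in the box enlarged by `r` and cover the box shrunk by `r`.
The subtraction `X - 2 * r` is truncated; the lower bound is then void, since `d ≠ 0`. -/
lemma cnt_bounds (I : Ideal (𝓞 K)) (hI : I ≠ ⊥) (r : ℕ)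
    (hr : ∀ y : 𝓞 K, ∃ δ : 𝓞 K, y - δ ∈ I ∧ ∀ i, |(comb K).symm δ i| ≤ r) (w : 𝓞 K) (X : ℕ) :
    cnt K w X I * Ideal.absNorm I ≤ (X + 2 * r) ^ finrank ℚ K ∧
    (X - 2 * r) ^ finrank ℚ K ≤ cnt K w X I * Ideal.absNorm I := by
  classical
  have hfin : Finite (𝓞 K ⧸ I) := I.finiteQuotientOfFreeOfNeBot hI
  cases nonempty_fintype (𝓞 K ⧸ I)
  have hD : ∀ q : 𝓞 K ⧸ I, ∃ δ : Idx K → ℤ, Ideal.Quotient.mk I (comb K δ) = q ∧ ∀ i, |δ i| ≤ r := by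
    intro q
    obtain ⟨y, rfl⟩ := Ideal.Quotient.mk_surjective q
    obtain ⟨δ, h1, h2⟩ := hr y
    refine ⟨(comb K).symm δ, ?_, h2⟩
    rw [LinearEquiv.apply_symm_apply]
    exact (Ideal.Quotient.eq.mpr h1).symm
  choose D hD1 hD2 using hD
  have hN : Ideal.absNorm I = (Finset.univ : Finset (𝓞 K ⧸ I)).card := by
    rw [Ideal.absNorm_apply, Submodule.cardQuot_apply, Nat.card_eq_fintype_card, Finset.card_univ]
  rw [hN, cnt, ← Finset.card_product]
  constructor
  · have : ((X + 2 * r) ^ finrank ℚ K : ℕ) =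
        (Fintype.piFinset fun _ : Idx K => Finset.Ico (-r : ℤ) (X + r)).card := by
      rw [Fintype.card_piFinset]
      simp only [Int.card_Ico, Finset.prod_const, Finset.card_univ, card_idx]
      congr 1; omega
    rw [this]
    refine Finset.card_le_card_of_injOn (fun x => x.1 + D x.2) ?_ ?_
    · rintro ⟨c, q⟩ h
      simp only [Finset.coe_product, Set.mem_prod, Finset.mem_coe, Finset.mem_filter,
        Fintype.mem_piFinset, Finset.mem_Ico] at h ⊢
      intro i
      have h1 := h.1.1 i
      have h2 := abs_le.mp (hD2 q i)
      simp only [Pi.add_apply]; omega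
    · rintro ⟨c, q⟩ h ⟨c', q'⟩ h' heq
      simp only [Finset.coe_product, Set.mem_prod, Finset.mem_coe, Finset.mem_filter] at h h' heq
      have e1 := Ideal.Quotient.eq_zero_iff_mem.mpr h.1.2
      have e2 := Ideal.Quotient.eq_zero_iff_mem.mpr h'.1.2
      have e3 := congrArg (fun t => Ideal.Quotient.mk I (w + comb K t)) heq
      simp only [map_add, hD1] at e1 e2 e3
      have hq : q = q' := by
        rw [← add_assoc, ← add_assoc, e1, e2] at e3
        simpa using e3
      subst hq
      simpa using heq
  · have : ((X - 2 * r) ^ finrank ℚ K : ℕ) =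
        (Fintype.piFinset fun _ : Idx K => Finset.Ico (r : ℤ) (X - r)).card := by
      rw [Fintype.card_piFinset]
      simp only [Int.card_Ico, Finset.prod_const, Finset.card_univ, card_idx]
      congr 1; omega
    rw [this]
    refine Finset.card_le_card_of_injOn
      (fun b => (b - D (Ideal.Quotient.mk I (w + comb K b)), Ideal.Quotient.mk I (w + comb K b))) ?_ ?_
    · intro b h
      simp only [Finset.coe_product, Set.mem_prod, Finset.mem_coe, Finset.mem_filter,
        Fintype.mem_piFinset, Finset.mem_Ico] at h ⊢
      refine ⟨⟨fun i => ?_, ?_⟩, Finset.mem_univ _⟩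
      · have h1 := h i
        have h2 := abs_le.mp (hD2 (Ideal.Quotient.mk I (w + comb K b)) i)
        simp only [Pi.sub_apply]; omega
      · rw [← Ideal.Quotient.eq_zero_iff_mem, map_sub, ← add_sub_assoc, map_sub, hD1, sub_self]
    · intro b _ b' _ heq
      simp only [Prod.mk.injEq] at heq
      obtain ⟨h1, h2⟩ := heq
      rw [h2] at h1
      simpa using h1

end Geometry

/-! ### Norms and their factorization -/

section Norms
variable (K : Type*) [Field K] [NumberField K]

/-- Shifting the box by a large multiple `M X` of its side makes all conjugates of its elements of exact
order `X`, so that every norm is of exact order `X ^ d`. The norm is the product of the conjugates. -/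
lemma exists_norm_bounds : ∃ M C : ℕ, 0 < C ∧ ∀ X : ℕ, ∀ c : Idx K → ℤ,
    (∀ i, c i ∈ Finset.Ico (0 : ℤ) X) →
    X ^ finrank ℚ K ≤ Ideal.absNorm (Ideal.span {((M * X : ℕ) : 𝓞 K) + comb K c}) ∧
    Ideal.absNorm (Ideal.span {((M * X : ℕ) : 𝓞 K) + comb K c}) ≤ (C * X) ^ finrank ℚ K := by
  classical
  -- `B` dominates every conjugate of every coordinate vector in the unit box
  obtain ⟨B, hB⟩ : ∃ B : ℕ, ∀ σ : K →ₐ[ℚ] ℂ,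
      ∑ i, ‖σ (algebraMap (𝓞 K) K (RingOfIntegers.basis K i))‖ ≤ B := by
    obtain ⟨B, hB⟩ := exists_nat_ge (∑ σ : K →ₐ[ℚ] ℂ,
      ∑ i, ‖σ (algebraMap (𝓞 K) K (RingOfIntegers.basis K i))‖)
    refine ⟨B, fun σ => le_trans ?_ hB⟩
    exact Finset.single_le_sum (f := fun σ : K →ₐ[ℚ] ℂ =>
      ∑ i, ‖σ (algebraMap (𝓞 K) K (RingOfIntegers.basis K i))‖)
      (fun _ _ => Finset.sum_nonneg fun _ _ => norm_nonneg _) (Finset.mem_univ σ)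
  refine ⟨B + 1, 2 * B + 1, by omega, fun X c hc => ?_⟩
  set β : 𝓞 K := (((B + 1) * X : ℕ) : 𝓞 K) + comb K c with hβ
  have hσ : ∀ σ : K →ₐ[ℚ] ℂ, (X : ℝ) ≤ ‖σ (algebraMap (𝓞 K) K β)‖ ∧
      ‖σ (algebraMap (𝓞 K) K β)‖ ≤ ((2 * B + 1) * X : ℝ) := by
    intro σ
    have h1 : σ (algebraMap (𝓞 K) K β) = (((B + 1) * X : ℕ) : ℂ) +
        σ (algebraMap (𝓞 K) K (comb K c)) := by
      rw [hβ]; simp only [map_add, map_natCast]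
    have h2 : ‖σ (algebraMap (𝓞 K) K (comb K c))‖ ≤ B * X := by
      rw [comb, Basis.equivFun_symm_apply]
      simp only [map_sum, zsmul_eq_mul, map_mul, map_intCast]
      refine (norm_sum_le _ _).trans ?_
      calc _ ≤ ∑ i, ‖σ (algebraMap (𝓞 K) K (RingOfIntegers.basis K i))‖ * X := by
            refine Finset.sum_le_sum fun i _ => ?_
            rw [norm_mul, mul_comm]
            refine mul_le_mul_of_nonneg_left ?_ (norm_nonneg _)
            have := Finset.mem_Ico.mp (hc i)
            rw [Complex.norm_intCast, ← Int.cast_abs, abs_of_nonneg this.1]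
            exact_mod_cast this.2.le
        _ ≤ _ := by
            rw [← Finset.sum_mul]
            exact mul_le_mul_of_nonneg_right (hB σ) (by positivity)
    have h3 : ‖(((B + 1) * X : ℕ) : ℂ)‖ = (B + 1) * X := by
      rw [Complex.norm_natCast]; push_cast; ring
    rw [h1]
    constructor
    · have := norm_sub_norm_le (((B + 1) * X : ℕ) : ℂ) (-σ (algebraMap (𝓞 K) K (comb K c)))
      rw [norm_neg, sub_neg_eq_add] at this
      linarith
    · have := norm_add_le (((B + 1) * X : ℕ) : ℂ) (σ (algebraMap (𝓞 K) K (comb K c)))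
      linarith
  have hnorm : ((Ideal.absNorm (Ideal.span {β}) : ℕ) : ℝ) =
      ∏ σ : K →ₐ[ℚ] ℂ, ‖σ (algebraMap (𝓞 K) K β)‖ := by
    rw [← norm_prod, ← Algebra.norm_eq_prod_embeddings ℚ ℂ, Ideal.absNorm_span_singleton,
      ← Algebra.coe_norm_int]
    simp [Complex.norm_intCast, Nat.cast_natAbs]
  have hcard : finrank ℚ K = (Finset.univ : Finset (K →ₐ[ℚ] ℂ)).card := by
    rw [Finset.card_univ, AlgHom.card]
  rw [hcard]
  constructor
  · have : ((X ^ (Finset.univ : Finset (K →ₐ[ℚ] ℂ)).card : ℕ) : ℝ) ≤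
        ((Ideal.absNorm (Ideal.span {β}) : ℕ) : ℝ) := by
      rw [hnorm, Nat.cast_pow, ← Finset.prod_const]
      exact Finset.prod_le_prod (fun _ _ => by positivity) fun σ _ => (hσ σ).1
    exact_mod_cast this
  · have : ((Ideal.absNorm (Ideal.span {β}) : ℕ) : ℝ) ≤
        (((2 * B + 1) * X) ^ (Finset.univ : Finset (K →ₐ[ℚ] ℂ)).card : ℕ) := by
      rw [hnorm, Nat.cast_pow, ← Finset.prod_const]
      push_cast
      exact Finset.prod_le_prod (fun _ _ => by positivity) fun σ _ => (hσ σ).2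
    exact_mod_cast this

open Classical in
/-- The nonzero prime ideals of `𝓞 K` of norm at most `B`. -/
noncomputable def primesLE (B : ℕ) : Finset (Ideal (𝓞 K)) :=
  (Ideal.finite_setOfPred_absNorm_le (S := 𝓞 K) B).toFinset.filter fun P => P.IsPrime ∧ P ≠ ⊥

variable {K}

lemma mem_primesLE {B : ℕ} {P : Ideal (𝓞 K)} :
    P ∈ primesLE K B ↔ Ideal.absNorm P ≤ B ∧ P.IsPrime ∧ P ≠ ⊥ := by
  simp [primesLE]

/-- The residue characteristic of a prime ideal is the least prime factor of its norm. -/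
lemma norm_eq_minFac_pow {P : Ideal (𝓞 K)} (hP : P.IsPrime) (hP0 : P ≠ ⊥) :
    (Ideal.absNorm P).minFac.Prime ∧ (((Ideal.absNorm P).minFac : ℕ) : 𝓞 K) ∈ P ∧
    ∃ n, 0 < n ∧ Ideal.absNorm P = (Ideal.absNorm P).minFac ^ n := by
  have : P.IsMaximal := hP.isMaximal hP0
  obtain ⟨p, n, hn, hpP, hp, h⟩ := Ideal.exists_prime_and_absNorm_eq_pow P
  have : (Ideal.absNorm P).minFac = p := by rw [h, hp.pow_minFac hn.ne']
  rw [this]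
  exact ⟨hp, hpP, n, hn, h⟩

lemma two_le_norm {P : Ideal (𝓞 K)} (hP : P.IsPrime) (hP0 : P ≠ ⊥) : 2 ≤ Ideal.absNorm P := by
  obtain ⟨h1, h2, n, hn, h⟩ := norm_eq_minFac_pow hP hP0
  rw [h]
  calc 2 ≤ (Ideal.absNorm P).minFac := h1.two_le
    _ ≤ _ := Nat.le_self_pow (Nat.pos_iff_ne_zero.mp hn) _

/-- Unique factorization of `(β)` in logarithmic form: each prime power `P ^ k` containing `β`
contributes `log N(P)`. The summation range `k ≤ B` is long enough because `2 ^ k ≤ N(β) ≤ B`. -/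
lemma log_norm_eq_sum (β : 𝓞 K) (hβ : β ≠ 0) (B : ℕ) (hB : Ideal.absNorm (Ideal.span {β}) ≤ B) :
    Real.log (Ideal.absNorm (Ideal.span {β})) = ∑ P ∈ primesLE K B, ∑ k ∈ Finset.Icc 1 B,
      open Classical in if β ∈ P ^ k then Real.log (Ideal.absNorm P) else 0 := by
  classical
  set J : Ideal (𝓞 K) := Ideal.span {β} with hJ
  have hJ0 : J ≠ 0 := by rw [hJ, Ne, Ideal.zero_eq_bot, Ideal.span_singleton_eq_bot]; exact hβ
  set m := UniqueFactorizationMonoid.normalizedFactors J with hm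
  have hprod : m.prod = J := Ideal.prod_normalizedFactors_eq_self (by simpa using hJ0)
  have hNJ : Ideal.absNorm J ≠ 0 := by rwa [Ne, Ideal.absNorm_eq_zero_iff]
  have hsub : m.toFinset ⊆ primesLE K B := by
    intro P hP
    rw [Multiset.mem_toFinset] at hP
    have hPp := UniqueFactorizationMonoid.prime_of_normalized_factor P hP
    refine mem_primesLE.mpr ⟨?_, Ideal.isPrime_of_prime hPp, hPp.ne_zero⟩
    refine le_trans (Nat.le_of_dvd (Nat.pos_of_ne_zero hNJ) ?_) hB
    exact map_dvd _ (UniqueFactorizationMonoid.dvd_of_mem_normalizedFactors hP)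
  have h1 : Real.log (Ideal.absNorm J) = ∑ P ∈ m.toFinset, m.count P * Real.log (Ideal.absNorm P) := by
    conv_lhs => rw [← hprod, Finset.prod_multiset_count, map_prod]
    push_cast
    rw [Real.log_prod]
    · refine Finset.sum_congr rfl fun P _ => ?_
      rw [map_pow, Nat.cast_pow, Real.log_pow]
    · intro P hP
      have := (mem_primesLE.mp (hsub hP)).2.2
      rw [map_pow, Nat.cast_pow]
      refine pow_ne_zero _ ?_
      rw [Nat.cast_ne_zero, Ne, Ideal.absNorm_eq_zero_iff]; exact this
  rw [h1]
  have h2 : ∑ P ∈ m.toFinset, (m.count P : ℝ) * Real.log (Ideal.absNorm P) =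
      ∑ P ∈ primesLE K B, (m.count P : ℝ) * Real.log (Ideal.absNorm P) := by
    refine Finset.sum_subset hsub fun P _ hP => ?_
    rw [Multiset.mem_toFinset] at hP
    rw [Multiset.count_eq_zero_of_notMem hP]; simp
  rw [h2]
  refine Finset.sum_congr rfl fun P hP => ?_
  obtain ⟨hPB, hPp, hP0⟩ := mem_primesLE.mp hP
  have hirr : Irreducible P := (Ideal.prime_of_isPrime hP0 hPp).irreducible
  have hmem : ∀ k, β ∈ P ^ k ↔ k ≤ m.count P := by
    intro k
    rw [← Ideal.span_singleton_le_iff_mem, ← Ideal.dvd_iff_le, pow_dvd_iff_le_emultiplicity,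
      UniqueFactorizationMonoid.emultiplicity_eq_count_normalizedFactors hirr hJ0]
    simp [hm]
  have hle : m.count P ≤ B := by
    have h3 : Ideal.absNorm P ^ m.count P ∣ Ideal.absNorm J := by
      rw [← map_pow]
      refine map_dvd _ ?_
      rw [Ideal.dvd_iff_le, Ideal.span_singleton_le_iff_mem]
      exact (hmem _).mpr le_rfl
    have h4 := Nat.le_of_dvd (Nat.pos_of_ne_zero hNJ) h3
    have h5 : 2 ^ m.count P ≤ Ideal.absNorm P ^ m.count P :=
      Nat.pow_le_pow_left (two_le_norm hPp hP0) _
    have h6 := Nat.lt_two_pow_self (n := m.count P)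
    omega
  simp only [hmem]
  rw [← Finset.sum_filter, Finset.sum_const, nsmul_eq_mul]
  congr 2
  have : (Finset.Icc 1 B).filter (fun k => k ≤ m.count P) = Finset.Icc 1 (m.count P) := by
    ext k; simp only [Finset.mem_filter, Finset.mem_Icc]; omega
  rw [this, Nat.card_Icc]; simp

/-- At most `[K : ℚ]` prime ideals lie over a given prime number `p`, since their product divides `(p)`. -/
lemma card_fiber_le (S : Finset (Ideal (𝓞 K))) (hS : ∀ P ∈ S, P.IsPrime ∧ P ≠ ⊥) (p : ℕ) :
    (S.filter fun P => (Ideal.absNorm P).minFac = p).card ≤ finrank ℚ K := by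
  classical
  set F := S.filter fun P => (Ideal.absNorm P).minFac = p with hF
  rcases F.eq_empty_or_nonempty with h | ⟨P₀, hP₀⟩
  · simp [h]
  have hmemF : ∀ P ∈ F, P.IsPrime ∧ P ≠ ⊥ ∧ (p : 𝓞 K) ∈ P ∧ p ≤ Ideal.absNorm P := by
    intro P hP
    rw [hF, Finset.mem_filter] at hP
    obtain ⟨h1, h2⟩ := hS P hP.1
    obtain ⟨h3, h4, -⟩ := norm_eq_minFac_pow h1 h2
    rw [hP.2] at h4
    refine ⟨h1, h2, h4, ?_⟩
    have := Nat.minFac_le (n := Ideal.absNorm P) (by have := two_le_norm h1 h2; omega)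
    rwa [hP.2] at this
  have hp : p.Prime := by
    rw [hF, Finset.mem_filter] at hP₀
    rw [← hP₀.2]
    exact (norm_eq_minFac_pow (hS P₀ hP₀.1).1 (hS P₀ hP₀.1).2).1
  have hdvd : ∏ P ∈ F, P ∣ Ideal.span {(p : 𝓞 K)} := by
    refine Finset.prod_primes_dvd _ (fun P hP => ?_) fun P hP => ?_
    · exact Ideal.prime_of_isPrime (hmemF P hP).2.1 (hmemF P hP).1
    · rw [Ideal.dvd_iff_le, Ideal.span_singleton_le_iff_mem]
      exact (hmemF P hP).2.2.1
  have h1 : ∏ P ∈ F, Ideal.absNorm P ∣ p ^ finrank ℚ K := by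
    rw [← map_prod, ← RingOfIntegers.rank K, ← Ideal.absNorm_span_natCast]
    exact map_dvd _ hdvd
  have h2 : p ^ F.card ≤ p ^ finrank ℚ K := by
    calc p ^ F.card = ∏ P ∈ F, p := by rw [Finset.prod_const]
      _ ≤ ∏ P ∈ F, Ideal.absNorm P := Finset.prod_le_prod' fun P hP => (hmemF P hP).2.2.2
      _ ≤ _ := Nat.le_of_dvd (pow_pos hp.pos _) h1
  exact (Nat.pow_le_pow_iff_right hp.one_lt).mp h2

/-- Sums over prime ideals are compared with sums over the rational primes below them. -/
lemma sum_minFac_le (S : Finset (Ideal (𝓞 K))) (hS : ∀ P ∈ S, P.IsPrime ∧ P ≠ ⊥) (g : ℕ → ℝ)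
    (hg : ∀ n, 0 ≤ g n) (Q : Finset ℕ) (hQ : ∀ P ∈ S, (Ideal.absNorm P).minFac ∈ Q) :
    ∑ P ∈ S, g (Ideal.absNorm P).minFac ≤ finrank ℚ K * ∑ p ∈ Q, g p := by
  rw [← Finset.sum_fiberwise_of_maps_to hQ, Finset.mul_sum]
  refine Finset.sum_le_sum fun p _ => ?_
  rw [Finset.sum_congr rfl (g := fun _ => g p)
    (fun P hP => by rw [(Finset.mem_filter.mp hP).2]), Finset.sum_const, nsmul_eq_mul]
  exact mul_le_mul_of_nonneg_right (by exact_mod_cast card_fiber_le S hS p) (hg p)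

end Norms

/-! ### Estimates for sums over primes -/

section Sums

/-- Partial summation against a decreasing nonnegative weight. -/
lemma sum_mul_antitone_le (a g : ℕ → ℝ) (c : ℝ) (hg0 : ∀ n, 0 ≤ g n)
    (hg : ∀ n, 1 ≤ n → g (n + 1) ≤ g n)
    (ha : ∀ m, ∑ n ∈ Finset.Icc 1 m, a n ≤ c * m) (Z : ℕ) :
    ∑ n ∈ Finset.Icc 1 Z, a n * g n ≤ c * ∑ n ∈ Finset.Icc 1 Z, g n := by
  have hD : ∀ m, ∑ n ∈ Finset.Icc 1 m, (c - a n) = c * m - ∑ n ∈ Finset.Icc 1 m, a n := by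
    intro m
    rw [Finset.sum_sub_distrib, Finset.sum_const, nsmul_eq_mul, Nat.card_Icc, Nat.add_sub_cancel,
      mul_comm]
  have key : g Z * ∑ n ∈ Finset.Icc 1 Z, (c - a n) ≤ ∑ n ∈ Finset.Icc 1 Z, (c - a n) * g n := by
    induction Z with
    | zero => simp
    | succ Z ih =>
      rw [Finset.sum_Icc_succ_top (by omega), Finset.sum_Icc_succ_top (by omega)]
      rcases Nat.eq_zero_or_pos Z with rfl | hZ
      · simp [mul_comm]
      have h1 := hg Z hZ
      have h2 : 0 ≤ ∑ n ∈ Finset.Icc 1 Z, (c - a n) := by rw [hD]; linarith [ha Z]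
      nlinarith [mul_le_mul_of_nonneg_right h1 h2]
  have h2 : 0 ≤ ∑ n ∈ Finset.Icc 1 Z, (c - a n) := by rw [hD]; linarith [ha Z]
  have h3 := mul_nonneg (hg0 Z) h2
  have h4 : ∑ n ∈ Finset.Icc 1 Z, (c - a n) * g n =
      c * ∑ n ∈ Finset.Icc 1 Z, g n - ∑ n ∈ Finset.Icc 1 Z, a n * g n := by
    rw [Finset.mul_sum, ← Finset.sum_sub_distrib]
    exact Finset.sum_congr rfl fun _ _ => by ring
  linarith

lemma sum_rpow_le (s : ℝ) (hs0 : 0 < s) (hs1 : s ≤ 1) (Z : ℕ) :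
    ∑ n ∈ Finset.Icc 1 Z, (n : ℝ) ^ (s - 1) ≤ (Z : ℝ) ^ s / s := by
  induction Z with
  | zero => simp [Real.zero_rpow hs0.ne']
  | succ Z ih =>
    rw [Finset.sum_Icc_succ_top (by omega)]
    set n : ℝ := ((Z + 1 : ℕ) : ℝ) with hn
    have hnpos : 0 < n := by positivity
    have hZ : (Z : ℝ) = n * (1 + -(1 / n)) := by
      have : (Z : ℝ) = n - 1 := by rw [hn]; push_cast; ring
      rw [this]; field_simp; ring
    have hge : 1 / n ≤ 1 := by
      rw [div_le_one hnpos, hn]; push_cast; linarith [Nat.cast_nonneg (α := ℝ) Z]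
    have h1 : (Z : ℝ) ^ s ≤ n ^ s * (1 + s * -(1 / n)) := by
      rw [hZ, Real.mul_rpow hnpos.le (by linarith)]
      exact mul_le_mul_of_nonneg_left
        (rpow_one_add_le_one_add_mul_self (by linarith) hs0.le hs1) (by positivity)
    have h2 : n ^ (s - 1) = n ^ s / n := by rw [Real.rpow_sub_one hnpos.ne']
    rw [h2]
    have h3 : n ^ s * (1 + s * -(1 / n)) = n ^ s - s * (n ^ s / n) := by ring
    rw [h3] at h1
    have h4 : (Z : ℝ) ^ s / s ≤ (n ^ s - s * (n ^ s / n)) / s := div_le_div_of_nonneg_right h1 hs0.le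
    have h5 : (n ^ s - s * (n ^ s / n)) / s = n ^ s / s - n ^ s / n := by
      rw [sub_div, mul_div_cancel_left₀ _ hs0.ne']
    linarith

lemma sum_primes_log_rpow_le (s : ℝ) (hs0 : 0 < s) (hs1 : s ≤ 1) (Z : ℕ) :
    ∑ p ∈ (Finset.Icc 1 Z).filter Nat.Prime, Real.log p * (p : ℝ) ^ (s - 1) ≤
      Real.log 4 * ((Z : ℝ) ^ s / s) := by
  have h := sum_mul_antitone_le (fun n => if n.Prime then Real.log n else 0)
    (fun n => (n : ℝ) ^ (s - 1)) (Real.log 4) (fun n => by positivity) ?_ ?_ Z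
  · rw [Finset.sum_filter]
    simp only [ite_mul, zero_mul] at h
    exact h.trans (mul_le_mul_of_nonneg_left (sum_rpow_le s hs0 hs1 Z)
      (Real.log_nonneg (by norm_num)))
  · intro n hn
    refine Real.rpow_le_rpow_of_nonpos (by positivity) (by push_cast; linarith) (by linarith)
  · intro m
    have := Chebyshev.theta_le_log4_mul_x (x := m) (by positivity)
    rw [Chebyshev.theta, Nat.floor_natCast, Finset.sum_filter] at this
    convert! this using 2

/-- Contribution to the sum of `log N(P) / N(P) ^ k` of a prime `P` of norm `p ^ f`, with the main term
(`k = f = 1`) left out. It is summable over `p`. -/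
lemma remainder_le (p f B : ℕ) (hp : p.Prime) (hf : 0 < f) :
    ∑ k ∈ Finset.Icc 1 B, (if k = 1 ∧ (p ^ f).Prime then (0 : ℝ)
      else Real.log ((p ^ f : ℕ) : ℝ) / ((p ^ f : ℕ) : ℝ) ^ k) ≤ 8 * (p : ℝ) ^ (-(3 / 2) : ℝ) := by
  set q : ℝ := ((p ^ f : ℕ) : ℝ) with hq
  have hp2 : (2 : ℝ) ≤ p := by exact_mod_cast hp.two_le
  have hqp : (p : ℝ) ≤ q := by rw [hq]; exact_mod_cast Nat.le_self_pow hf.ne' p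
  have hq2 : 2 ≤ q := hp2.trans hqp
  have hq0 : 0 < q := by linarith
  have hlog0 : 0 ≤ Real.log q := Real.log_nonneg (by linarith)
  have hlog : Real.log q ≤ 4 * q ^ (1 / 4 : ℝ) := by
    have := Real.log_le_rpow_div hq0.le (ε := 1 / 4) (by norm_num)
    linarith
  have hinv : q⁻¹ ≤ 1 / 2 := by rw [← one_div]; exact one_div_le_one_div_of_le (by norm_num) hq2
  have hinv0 : 0 < q⁻¹ := by positivity
  -- geometric tails
  have hgeom : ∀ a : ℕ, ∑ k ∈ Finset.Icc a B, (q ^ k)⁻¹ ≤ 2 * (q ^ a)⁻¹ := by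
    intro a
    have h1 : ∑ k ∈ Finset.Icc a B, (q ^ k)⁻¹ = ∑ j ∈ Finset.range (B + 1 - a), (q ^ (a + j))⁻¹ := by
      rw [← Finset.sum_Ico_eq_sum_range (fun k => (q ^ k)⁻¹)]; rfl
    have h2 : ∀ m, ∑ j ∈ Finset.range m, (q⁻¹) ^ j ≤ 2 := by
      intro m
      refine le_trans (Finset.sum_le_sum fun j _ => ?_) (sum_geometric_two_le m)
      exact pow_le_pow_left₀ hinv0.le hinv j
    rw [h1]
    simp only [pow_add, mul_inv]
    rw [← Finset.mul_sum, mul_comm]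
    refine mul_le_mul_of_nonneg_right ?_ (by positivity)
    simpa using h2 (B + 1 - a)
  by_cases hf1 : f = 1
  · have hpr : (p ^ f).Prime := by rw [hf1, pow_one]; exact hp
    have hqp' : q = p := by rw [hq, hf1, pow_one]
    have h1 : ∑ k ∈ Finset.Icc 1 B, (if k = 1 ∧ (p ^ f).Prime then (0 : ℝ)
        else Real.log q / q ^ k) ≤ ∑ k ∈ Finset.Icc 2 B, Real.log q * (q ^ k)⁻¹ := by
      have h2 : ∑ k ∈ Finset.Icc 2 B, Real.log q * (q ^ k)⁻¹ = ∑ k ∈ Finset.Icc 2 B,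
          (if k = 1 ∧ (p ^ f).Prime then (0 : ℝ) else Real.log q / q ^ k) := by
        refine Finset.sum_congr rfl fun k hk => ?_
        have := (Finset.mem_Icc.mp hk).1
        rw [if_neg (by omega), div_eq_mul_inv]
      rw [h2]
      refine (Finset.sum_subset (Finset.Icc_subset_Icc_left (by norm_num)) fun k hk hk' => ?_).ge
      have : k = 1 := by simp only [Finset.mem_Icc] at hk hk'; omega
      rw [if_pos ⟨this, hpr⟩]
    refine h1.trans ?_
    rw [← Finset.mul_sum]
    calc _ ≤ (4 * q ^ (1 / 4 : ℝ)) * (2 * (q ^ 2)⁻¹) :=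
          mul_le_mul hlog (hgeom 2) (Finset.sum_nonneg fun _ _ => by positivity) (by positivity)
      _ = 8 * q ^ (-(7 / 4) : ℝ) := by
          rw [← Real.rpow_natCast, ← Real.rpow_neg hq0.le]
          have : (-(7 / 4) : ℝ) = 1 / 4 + -((2 : ℕ) : ℝ) := by norm_num
          rw [this, Real.rpow_add hq0]; ring
      _ ≤ _ := by
          rw [hqp']
          refine mul_le_mul_of_nonneg_left ?_ (by norm_num)
          exact Real.rpow_le_rpow_of_exponent_le (by linarith) (by norm_num)
  · have hqp' : (p : ℝ) ^ 2 ≤ q := by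
      rw [hq]; exact_mod_cast Nat.pow_le_pow_right hp.pos (by omega)
    have h1 : ∑ k ∈ Finset.Icc 1 B, (if k = 1 ∧ (p ^ f).Prime then (0 : ℝ)
        else Real.log q / q ^ k) ≤ ∑ k ∈ Finset.Icc 1 B, Real.log q * (q ^ k)⁻¹ := by
      refine Finset.sum_le_sum fun k _ => ?_
      split_ifs
      · positivity
      · rw [div_eq_mul_inv]
    refine h1.trans ?_
    rw [← Finset.mul_sum]
    calc _ ≤ (4 * q ^ (1 / 4 : ℝ)) * (2 * (q ^ 1)⁻¹) :=
          mul_le_mul hlog (hgeom 1) (Finset.sum_nonneg fun _ _ => by positivity) (by positivity)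
      _ = 8 * q ^ (-(3 / 4) : ℝ) := by
          rw [← Real.rpow_natCast, ← Real.rpow_neg hq0.le]
          have : (-(3 / 4) : ℝ) = 1 / 4 + -((1 : ℕ) : ℝ) := by norm_num
          rw [this, Real.rpow_add hq0]; ring
      _ ≤ 8 * ((p : ℝ) ^ 2) ^ (-(3 / 4) : ℝ) := by
          refine mul_le_mul_of_nonneg_left ?_ (by norm_num)
          exact Real.rpow_le_rpow_of_nonpos (by positivity) hqp' (by norm_num)
      _ = _ := by
          rw [← Real.rpow_natCast, ← Real.rpow_mul (by positivity)]; norm_num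

lemma pow_sub_pow_le (d : ℕ) (s : ℝ) (hs0 : 0 ≤ s) (hs1 : s ≤ 1) :
    (1 + s) ^ d - (1 - s) ^ d ≤ (2 ^ d + d) * s := by
  have h1 : (1 + s) ^ d ≤ 1 + 2 ^ d * s := by
    induction d with
    | zero => simp; exact hs0
    | succ d ih =>
      have hp : (1 : ℝ) ≤ 2 ^ d := one_le_pow₀ (by norm_num)
      have h2 : (1 + s) ^ d * s ≤ 2 ^ d * s :=
        mul_le_mul_of_nonneg_right (pow_le_pow_left₀ (by linarith) (by linarith) d) hs0
      rw [pow_succ, pow_succ]; linarith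
  have h2 := one_add_mul_le_pow (a := -s) (by linarith) d
  have h3 : (1 + -s) ^ d = (1 - s) ^ d := by ring
  rw [h3] at h2
  linarith

end Sums

/-! ### A Mertens theorem for prime ideals of degree one -/

section Mertens
variable (K : Type*) [Field K] [NumberField K]

/-- Lattice point count: `cnt K w X I * N(I)` lies between `(X ± C₀ N(I)^(1/d)) ^ d`, uniformly in
`I` and `w`; the lower bound requires `C₀ N(I)^(1/d) ≤ X`. -/
lemma exists_cnt_bounds : ∃ C₀ : ℝ, 1 ≤ C₀ ∧ ∀ (I : Ideal (𝓞 K)), I ≠ ⊥ → ∀ (w : 𝓞 K) (X : ℕ),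
    (cnt K w X I : ℝ) * Ideal.absNorm I ≤
      (X + C₀ * (Ideal.absNorm I : ℝ) ^ (1 / finrank ℚ K : ℝ)) ^ finrank ℚ K ∧
    (C₀ * (Ideal.absNorm I : ℝ) ^ (1 / finrank ℚ K : ℝ) ≤ X →
      (X - C₀ * (Ideal.absNorm I : ℝ) ^ (1 / finrank ℚ K : ℝ)) ^ finrank ℚ K ≤
        (cnt K w X I : ℝ) * Ideal.absNorm I) := by
  obtain ⟨C, hC⟩ := exists_small_rep K
  refine ⟨4 * C + 1, by linarith [Nat.cast_nonneg (α := ℝ) C], fun I hI w X => ?_⟩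
  set d := finrank ℚ K with hd
  have hd0 : d ≠ 0 := finrank_pos.ne'
  set N := Ideal.absNorm I with hN
  have hN1 : 1 ≤ N := Nat.one_le_iff_ne_zero.mpr (by rwa [hN, Ne, Ideal.absNorm_eq_zero_iff])
  set t : ℝ := (N : ℝ) ^ (1 / d : ℝ) with ht
  have ht1 : 1 ≤ t := Real.one_le_rpow (by exact_mod_cast hN1) (by positivity)
  have htd : t ^ d = N := by
    rw [ht, one_div, Real.rpow_inv_natCast_pow (by positivity) hd0]
  set M := ⌊t⌋₊ + 1 with hM
  have hMt : (M : ℝ) ≤ 2 * t := by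
    have := Nat.floor_le (a := t) (by linarith)
    rw [hM]; push_cast; linarith
  have hNM : N < M ^ d := by
    have h1 : t < M := by rw [hM]; push_cast; exact Nat.lt_floor_add_one t
    have h2 : t ^ d < (M : ℝ) ^ d := pow_lt_pow_left₀ h1 (by linarith) hd0
    rw [htd] at h2
    exact_mod_cast h2
  obtain ⟨h1, h2⟩ := cnt_bounds I hI (C * M) (hC I hI M hNM) w X
  have hr : 2 * ((C : ℝ) * M) ≤ (4 * C + 1) * t := by
    nlinarith [mul_le_mul_of_nonneg_left hMt (Nat.cast_nonneg (α := ℝ) C)]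
  constructor
  · have h1' : (cnt K w X I : ℝ) * N ≤ (X + 2 * (C * M)) ^ d := by exact_mod_cast h1
    exact h1'.trans (pow_le_pow_left₀ (by positivity) (by linarith) d)
  · intro hle
    have hle' : 2 * (C * M) ≤ X := by
      have : 2 * ((C : ℝ) * M) ≤ X := hr.trans hle
      exact_mod_cast this
    have h2' : ((X : ℝ) - 2 * (C * M)) ^ d ≤ (cnt K w X I : ℝ) * N := by
      have h3 : (((X - 2 * (C * M) : ℕ)) : ℝ) ^ d ≤ (cnt K w X I : ℝ) * N := by exact_mod_cast h2
      rw [Nat.cast_sub hle'] at h3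
      exact_mod_cast h3
    exact (pow_le_pow_left₀ (by linarith) (by linarith) d).trans h2'

open Classical in
/-- The prime ideals of `𝓞 K` of norm at most `B` whose norm is a prime number, i.e. those of residue
degree one. -/
noncomputable def degOne (B : ℕ) : Finset (Ideal (𝓞 K)) :=
  (primesLE K B).filter fun P => (Ideal.absNorm P).Prime

/-- Prime powers and primes of residue degree at least two contribute only `O(1)` in the Mertens sum. -/
lemma exists_remainder_bound : ∃ C₄ : ℝ, 0 ≤ C₄ ∧ ∀ B B' : ℕ,
    ∑ P ∈ primesLE K B, ∑ k ∈ Finset.Icc 1 B', (if k = 1 ∧ (Ideal.absNorm P).Prime then (0 : ℝ)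
      else Real.log (Ideal.absNorm P) / (Ideal.absNorm P : ℝ) ^ k) ≤ C₄ := by
  have hsum : Summable fun n : ℕ => 8 * (n : ℝ) ^ (-(3 / 2) : ℝ) :=
    (Real.summable_nat_rpow.mpr (by norm_num)).mul_left 8
  have hnn : ∀ n : ℕ, 0 ≤ 8 * (n : ℝ) ^ (-(3 / 2) : ℝ) := fun n => by positivity
  refine ⟨finrank ℚ K * ∑' n : ℕ, 8 * (n : ℝ) ^ (-(3 / 2) : ℝ),
    mul_nonneg (by positivity) (tsum_nonneg hnn), fun B B' => ?_⟩
  calc _ ≤ ∑ P ∈ primesLE K B, 8 * (((Ideal.absNorm P).minFac : ℕ) : ℝ) ^ (-(3 / 2) : ℝ) := by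
        refine Finset.sum_le_sum fun P hP => ?_
        obtain ⟨-, h1, h2⟩ := mem_primesLE.mp hP
        obtain ⟨hp, -, f, hf, h⟩ := norm_eq_minFac_pow h1 h2
        have := remainder_le _ f B' hp hf
        rwa [← h] at this
    _ ≤ _ := by
        refine (sum_minFac_le (primesLE K B) (fun P hP => (mem_primesLE.mp hP).2)
          (fun n : ℕ => 8 * (n : ℝ) ^ (-(3 / 2) : ℝ)) hnn
          ((primesLE K B).image fun P => (Ideal.absNorm P).minFac)
          (fun P hP => Finset.mem_image_of_mem _ hP)).trans ?_
        exact mul_le_mul_of_nonneg_left (hsum.sum_le_tsum _ fun n _ => hnn n) (by positivity)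

/-- A smoothed form of the Mertens theorem for the prime ideals of degree one. The weight `κ X I` is
the proportion of the box of side `X` (shifted away from `0`) that lies in `I`; it is close to
`1 / N(I)` when `N(I)` is small compared with `X ^ d`, and always `O(1 / N(I))`. Averaging
`log_norm_eq_sum` over the box gives `∑ κ X P log N(P) = d log X + O(1)`. -/
lemma exists_mertens : ∃ (κ : ℕ → Ideal (𝓞 K) → ℝ) (C : ℕ) (C₀ C₁ : ℝ),
    0 < C ∧ 1 ≤ C₀ ∧ 0 < C₁ ∧ (∀ X I, 0 ≤ κ X I) ∧ ∀ X : ℕ, 1 ≤ X →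
    (∀ I, I ≠ ⊥ → κ X I * Ideal.absNorm I ≤ C₁) ∧
    (∀ I, I ≠ ⊥ → κ X I * Ideal.absNorm I ≤
      (1 + C₀ * (Ideal.absNorm I : ℝ) ^ (1 / finrank ℚ K : ℝ) / X) ^ finrank ℚ K) ∧
    (∀ I, I ≠ ⊥ → C₀ * (Ideal.absNorm I : ℝ) ^ (1 / finrank ℚ K : ℝ) / X ≤ 1 →
      (1 - C₀ * (Ideal.absNorm I : ℝ) ^ (1 / finrank ℚ K : ℝ) / X) ^ finrank ℚ K ≤
        κ X I * Ideal.absNorm I) ∧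
    ∀ B : ℕ, (C * X) ^ finrank ℚ K ≤ B →
      ∑ P ∈ degOne K B, Real.log (Ideal.absNorm P) * κ X P ≤ finrank ℚ K * Real.log (C * X) ∧
      finrank ℚ K * Real.log X - C₁ ≤ ∑ P ∈ degOne K B, Real.log (Ideal.absNorm P) * κ X P := by
  classical
  obtain ⟨C₀, hC₀, hcnt⟩ := exists_cnt_bounds K
  obtain ⟨M, C, hC, hnorm⟩ := exists_norm_bounds K
  obtain ⟨C₄, hC₄, hrem⟩ := exists_remainder_bound K
  set d := finrank ℚ K with hd
  have hd0 : d ≠ 0 := finrank_pos.ne'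
  set C₃ : ℝ := (1 + C₀ * C) ^ d with hC₃
  have hC₃1 : 1 ≤ C₃ := one_le_pow₀ (by nlinarith [Nat.cast_nonneg (α := ℝ) C])
  refine ⟨fun X I => cnt K ((M * X : ℕ) : 𝓞 K) X I / (X : ℝ) ^ d, C, C₀, C₃ + C₃ * C₄, hC, hC₀,
    by positivity, fun X I => by positivity, fun X hX => ?_⟩
  have hX0 : (0 : ℝ) < X := by exact_mod_cast hX
  have hXd : (0 : ℝ) < (X : ℝ) ^ d := by positivity
  set w : 𝓞 K := ((M * X : ℕ) : 𝓞 K) with hw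
  set box := Fintype.piFinset fun _ : Idx K => Finset.Ico (0 : ℤ) X with hbox
  have hboxcard : (box.card : ℝ) = (X : ℝ) ^ d := by
    rw [hbox, Fintype.card_piFinset]
    simp [card_idx, hd]
  have hnorm' : ∀ c ∈ box, X ^ d ≤ Ideal.absNorm (Ideal.span {w + comb K c}) ∧
      Ideal.absNorm (Ideal.span {w + comb K c}) ≤ (C * X) ^ d := fun c hc =>
    hnorm X c (Fintype.mem_piFinset.mp hc)
  have hpos : ∀ c ∈ box, 0 < Ideal.absNorm (Ideal.span {w + comb K c}) := fun c hc =>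
    lt_of_lt_of_le (by positivity) (hnorm' c hc).1
  -- an ideal meeting the box has norm at most `(C X)^d`, so its density is `O(1 / N)`
  have hcoarse : ∀ I : Ideal (𝓞 K), I ≠ ⊥ →
      (cnt K w X I : ℝ) * Ideal.absNorm I ≤ C₃ * (X : ℝ) ^ d := by
    intro I hI
    rcases Nat.eq_zero_or_pos (cnt K w X I) with h0 | h0
    · rw [h0, Nat.cast_zero, zero_mul]; positivity
    obtain ⟨c, hc⟩ := Finset.card_pos.mp h0
    rw [Finset.mem_filter] at hc
    have h1 : Ideal.absNorm I ≤ (C * X) ^ d := by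
      refine le_trans (Nat.le_of_dvd (hpos c hc.1) ?_) (hnorm' c hc.1).2
      refine map_dvd _ ?_
      rw [Ideal.dvd_iff_le, Ideal.span_singleton_le_iff_mem]
      exact hc.2
    have h2 : (Ideal.absNorm I : ℝ) ^ (1 / d : ℝ) ≤ C * X := by
      have h3 : (Ideal.absNorm I : ℝ) ≤ (C * X : ℝ) ^ d := by exact_mod_cast h1
      calc _ ≤ ((C * X : ℝ) ^ d) ^ (1 / d : ℝ) :=
            Real.rpow_le_rpow (by positivity) h3 (by positivity)
        _ = _ := by rw [one_div, Real.pow_rpow_inv_natCast (by positivity) hd0]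
    refine ((hcnt I hI w X).1).trans ?_
    rw [hC₃, ← mul_pow]
    refine pow_le_pow_left₀ (by positivity) ?_ d
    nlinarith [mul_le_mul_of_nonneg_left h2 (by linarith : (0 : ℝ) ≤ C₀)]
  refine ⟨fun I hI => ?_, fun I hI => ?_, fun I hI h1 => ?_, fun B hB => ?_⟩
  · rw [div_mul_eq_mul_div, div_le_iff₀ hXd]
    refine (hcoarse I hI).trans (mul_le_mul_of_nonneg_right ?_ hXd.le)
    have : 0 ≤ C₃ * C₄ := by positivity
    linarith
  · rw [div_mul_eq_mul_div, div_le_iff₀ hXd, ← mul_pow]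
    refine ((hcnt I hI w X).1).trans_eq ?_
    congr 1; field_simp
  · rw [div_mul_eq_mul_div, le_div_iff₀ hXd, ← mul_pow]
    rw [div_le_one hX0] at h1
    refine Eq.trans_le ?_ ((hcnt I hI w X).2 h1)
    congr 1; field_simp
  · -- exact factorisation of the total log-norm over the box
    have hT : ∑ c ∈ box, Real.log (Ideal.absNorm (Ideal.span {w + comb K c})) =
        ∑ P ∈ primesLE K B, ∑ k ∈ Finset.Icc 1 B,
          Real.log (Ideal.absNorm P) * cnt K w X (P ^ k) := by
      have h1 : ∀ c ∈ box, Real.log (Ideal.absNorm (Ideal.span {w + comb K c})) =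
          ∑ P ∈ primesLE K B, ∑ k ∈ Finset.Icc 1 B,
            if w + comb K c ∈ P ^ k then Real.log (Ideal.absNorm P) else 0 := by
        intro c hc
        refine log_norm_eq_sum _ ?_ B ((hnorm' c hc).2.trans hB)
        intro h0
        have := hpos c hc
        rw [h0] at this
        simp at this
      rw [Finset.sum_congr rfl h1, Finset.sum_comm]
      refine Finset.sum_congr rfl fun P _ => ?_
      rw [Finset.sum_comm]
      refine Finset.sum_congr rfl fun k _ => ?_
      rw [← Finset.sum_filter, Finset.sum_const, nsmul_eq_mul, mul_comm]
      rfl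
    have hB1 : 1 ≤ B := le_trans (Nat.one_le_pow _ _ (by positivity)) hB
    have hlogP : ∀ P ∈ primesLE K B, 0 ≤ Real.log (Ideal.absNorm P) := fun P _ =>
      Real.log_natCast_nonneg _
    set A := ∑ P ∈ degOne K B, Real.log (Ideal.absNorm P) * (cnt K w X P : ℝ) with hA
    have hAκ : ∑ P ∈ degOne K B, Real.log (Ideal.absNorm P) * ((cnt K w X P : ℝ) / (X : ℝ) ^ d) =
        A / (X : ℝ) ^ d := by
      rw [hA, Finset.sum_div]
      exact Finset.sum_congr rfl fun _ _ => by ring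
    have hAite : A = ∑ P ∈ primesLE K B, ∑ k ∈ Finset.Icc 1 B,
        if k = 1 ∧ (Ideal.absNorm P).Prime then Real.log (Ideal.absNorm P) * cnt K w X (P ^ k)
          else 0 := by
      rw [hA, degOne, Finset.sum_filter]
      refine Finset.sum_congr rfl fun P _ => ?_
      rw [Finset.sum_eq_single_of_mem 1 (Finset.mem_Icc.mpr ⟨le_rfl, hB1⟩)]
      · simp
      · intro k _ hk; rw [if_neg (by tauto)]
    have hup : A ≤ ∑ c ∈ box, Real.log (Ideal.absNorm (Ideal.span {w + comb K c})) := by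
      rw [hT, hAite]
      refine Finset.sum_le_sum fun P hP => Finset.sum_le_sum fun k _ => ?_
      have := mul_nonneg (hlogP P hP) (Nat.cast_nonneg (α := ℝ) (cnt K w X (P ^ k)))
      split_ifs
      · exact le_rfl
      · exact this
    have hlow : ∑ c ∈ box, Real.log (Ideal.absNorm (Ideal.span {w + comb K c})) ≤
        A + C₃ * (X : ℝ) ^ d * C₄ := by
      rw [hT, hAite]
      refine le_trans ?_ (add_le_add_right (mul_le_mul_of_nonneg_left (hrem B B) (by positivity)) _)
      rw [Finset.mul_sum, ← Finset.sum_add_distrib]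
      refine Finset.sum_le_sum fun P hP => ?_
      rw [Finset.mul_sum, ← Finset.sum_add_distrib]
      refine Finset.sum_le_sum fun k _ => ?_
      split_ifs
      · simp
      · obtain ⟨-, hPp, hP0⟩ := mem_primesLE.mp hP
        have h1 := hcoarse (P ^ k) (pow_ne_zero k hP0)
        have hN0 : (0 : ℝ) < (Ideal.absNorm P : ℝ) ^ k := by
          have := two_le_norm hPp hP0
          positivity
        rw [map_pow, Nat.cast_pow, ← le_div_iff₀ hN0] at h1
        rw [zero_add]
        refine (mul_le_mul_of_nonneg_left h1 (hlogP P hP)).trans_eq ?_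
        ring
    have hlogup : ∑ c ∈ box, Real.log (Ideal.absNorm (Ideal.span {w + comb K c})) ≤
        (X : ℝ) ^ d * (d * Real.log (C * X)) := by
      rw [← hboxcard, ← nsmul_eq_mul]
      refine Finset.sum_le_card_nsmul _ _ _ fun c hc => ?_
      rw [← Real.log_pow]
      refine Real.log_le_log (by exact_mod_cast hpos c hc) ?_
      exact_mod_cast (hnorm' c hc).2
    have hloglow : (X : ℝ) ^ d * (d * Real.log X) ≤
        ∑ c ∈ box, Real.log (Ideal.absNorm (Ideal.span {w + comb K c})) := by
      rw [← hboxcard, ← nsmul_eq_mul]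
      refine Finset.card_nsmul_le_sum _ _ _ fun c hc => ?_
      rw [← Real.log_pow]
      refine Real.log_le_log hXd ?_
      exact_mod_cast (hnorm' c hc).1
    rw [hAκ]
    constructor
    · rw [div_le_iff₀ hXd]; linarith
    · rw [le_div_iff₀ hXd]
      nlinarith [mul_pos (by linarith : 0 < C₃) hXd]

end Mertens

/-! ### A Chebyshev lower bound for prime ideals of degree one -/

section Chebyshev
variable (K : Type*) [Field K] [NumberField K]

variable {K} in
lemma mem_degOne {B : ℕ} {P : Ideal (𝓞 K)} :
    P ∈ degOne K B ↔ Ideal.absNorm P ≤ B ∧ P.IsPrime ∧ P ≠ ⊥ ∧ (Ideal.absNorm P).Prime := by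
  simp [degOne, mem_primesLE, and_assoc]

/-- Chebyshev-type lower bound. The Mertens sums at the scales `X` and `h X` differ by at least
`d log h - O(1) ≥ 1`. The primes of norm below `(X / C₀) ^ d` contribute `O(1)` to the difference, as
their weights at both scales are `(1 + O(N(P)^(1/d) / X)) / N(P)`. The rest of the difference comes from
primes of norm between `(X / C₀) ^ d` and `(C h X) ^ d`, each contributing `O(log X / X ^ d)`. -/
lemma exists_degOne_lower : ∃ (H : ℕ) (c : ℝ), 0 < H ∧ 0 < c ∧ ∀ X : ℕ, 1 ≤ X →
    c * (X : ℝ) ^ finrank ℚ K ≤ (degOne K ((H * X) ^ finrank ℚ K)).card *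
      Real.log (((H * X) ^ finrank ℚ K : ℕ) : ℝ) := by
  classical
  obtain ⟨κ, C, C₀, C₁, hC, hC₀, hC₁, hκ0, hκ⟩ := exists_mertens K
  set d := finrank ℚ K with hd
  have hd0 : d ≠ 0 := finrank_pos.ne'
  have hd1 : (1 : ℝ) ≤ d := by exact_mod_cast Nat.one_le_iff_ne_zero.mpr hd0
  have hdpos : (0 : ℝ) < d := by linarith
  -- The ratio `h` of the two scales is chosen so that `d log h` exceeds all the error terms by `1`.
  set D : ℝ := (2 ^ d + d) * C₀ with hD
  set C₂ : ℝ := d * (D * (Real.log 4 * d)) with hC₂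
  obtain ⟨h, hh⟩ := exists_nat_ge (Real.exp ((d * Real.log C + C₁ + C₂ + 1) / d))
  have hhpos : (0 : ℝ) < h := lt_of_lt_of_le (Real.exp_pos _) hh
  have hh1 : 1 ≤ h := by exact_mod_cast hhpos
  have hlogh : d * Real.log C + C₁ + C₂ + 1 ≤ d * Real.log h := by
    have := (Real.le_log_iff_exp_le hhpos).mpr hh
    rw [div_le_iff₀ hdpos] at this
    linarith
  refine ⟨C * h, 1 / (C₁ * C₀ ^ d), by positivity, by positivity, fun X hX => ?_⟩
  have hX0 : (0 : ℝ) < X := by exact_mod_cast hX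
  have hXd : (0 : ℝ) < (X : ℝ) ^ d := by positivity
  set Y := h * X with hY
  have hXY : X ≤ Y := Nat.le_mul_of_pos_left X hh1
  have hY1 : 1 ≤ Y := hX.trans hXY
  set B := (C * h * X) ^ d with hB
  obtain ⟨-, -, hX3, hX4⟩ := hκ X hX
  obtain ⟨hY1', hY2, -, hY4⟩ := hκ Y hY1
  have hBX : (C * X) ^ d ≤ B := by
    rw [hB, mul_assoc]
    exact Nat.pow_le_pow_left (Nat.mul_le_mul_left C hXY) d
  have hBY : (C * Y) ^ d ≤ B := by rw [hB, hY, mul_assoc]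
  have hup := (hX4 B hBX).1
  have hlow := (hY4 B hBY).2
  have hCpos : (0 : ℝ) < C := by exact_mod_cast hC
  rw [Real.log_mul hCpos.ne' hX0.ne'] at hup
  have hlogY : Real.log (Y : ℝ) = Real.log h + Real.log X := by
    rw [hY, Nat.cast_mul, Real.log_mul hhpos.ne' hX0.ne']
  rw [hlogY] at hlow
  set s : Ideal (𝓞 K) → ℝ := fun P => C₀ * (Ideal.absNorm P : ℝ) ^ (1 / d : ℝ) / X with hs
  -- primes of norm at most `(X / C₀)^d`: the densities at the scales `X` and `Y` nearly agree
  set small := (degOne K B).filter fun P => s P ≤ 1 with hsmall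
  set big := (degOne K B).filter fun P => ¬ s P ≤ 1 with hbig
  have hsplit : ∑ P ∈ degOne K B, Real.log (Ideal.absNorm P) * κ Y P -
      ∑ P ∈ degOne K B, Real.log (Ideal.absNorm P) * κ X P =
      ∑ P ∈ small, Real.log (Ideal.absNorm P) * (κ Y P - κ X P) +
      ∑ P ∈ big, Real.log (Ideal.absNorm P) * (κ Y P - κ X P) := by
    rw [hsmall, hbig, Finset.sum_filter_add_sum_filter_not, ← Finset.sum_sub_distrib]
    exact Finset.sum_congr rfl fun _ _ => by ring
  have hsmall_le : ∑ P ∈ small, Real.log (Ideal.absNorm P) * (κ Y P - κ X P) ≤ C₂ := by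
    have hmem : ∀ P ∈ small, P.IsPrime ∧ P ≠ ⊥ ∧ (Ideal.absNorm P).Prime ∧ s P ≤ 1 := by
      intro P hP
      rw [hsmall, Finset.mem_filter, mem_degOne] at hP
      exact ⟨hP.1.2.1, hP.1.2.2.1, hP.1.2.2.2, hP.2⟩
    calc _ ≤ ∑ P ∈ small, D / X * (Real.log (Ideal.absNorm P).minFac *
          ((Ideal.absNorm P).minFac : ℝ) ^ ((1 / d : ℝ) - 1)) := by
          refine Finset.sum_le_sum fun P hP => ?_
          obtain ⟨h1, h2, h3, h4⟩ := hmem P hP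
          rw [h3.minFac_eq]
          have hN0 : (0 : ℝ) < Ideal.absNorm P := by exact_mod_cast h3.pos
          have hlog : 0 ≤ Real.log (Ideal.absNorm P) := Real.log_natCast_nonneg _
          have hs0 : 0 ≤ s P := by positivity
          have e1 := hX3 P h2 h4
          have e2 := hY2 P h2
          have e3 : (1 + C₀ * (Ideal.absNorm P : ℝ) ^ (1 / d : ℝ) / Y) ^ d ≤ (1 + s P) ^ d := by
            refine pow_le_pow_left₀ (by positivity) ?_ d
            refine add_le_add_right ?_ _
            exact div_le_div_of_nonneg_left (by positivity) hX0 (by exact_mod_cast hXY)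
          have e4 := pow_sub_pow_le d (s P) hs0 h4
          have e5 : (κ Y P - κ X P) * Ideal.absNorm P ≤ (2 ^ d + d) * s P := by
            have : (1 - C₀ * (Ideal.absNorm P : ℝ) ^ (1 / d : ℝ) / X) ^ d = (1 - s P) ^ d := rfl
            linarith
          rw [← le_div_iff₀ hN0] at e5
          refine (mul_le_mul_of_nonneg_left e5 hlog).trans_eq ?_
          rw [Real.rpow_sub_one hN0.ne', hs, hD]
          ring
      _ = D / X * ∑ P ∈ small, Real.log (Ideal.absNorm P).minFac *
          ((Ideal.absNorm P).minFac : ℝ) ^ ((1 / d : ℝ) - 1) := by rw [Finset.mul_sum]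
      _ ≤ D / X * (d * (Real.log 4 * (((X ^ d : ℕ) : ℝ) ^ (1 / d : ℝ) / (1 / d)))) := by
          refine mul_le_mul_of_nonneg_left ?_ (by positivity)
          refine (sum_minFac_le small (fun P hP => ⟨(hmem P hP).1, (hmem P hP).2.1⟩)
            (fun n : ℕ => Real.log n * (n : ℝ) ^ ((1 / d : ℝ) - 1))
            (fun n => mul_nonneg (Real.log_natCast_nonneg n) (by positivity))
            ((Finset.Icc 1 (X ^ d)).filter Nat.Prime) ?_).trans ?_
          · intro P hP
            obtain ⟨h1, h2, h3, h4⟩ := hmem P hP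
            rw [h3.minFac_eq, Finset.mem_filter, Finset.mem_Icc]
            refine ⟨⟨h3.one_le, ?_⟩, h3⟩
            have e1 : (Ideal.absNorm P : ℝ) ^ (1 / d : ℝ) ≤ X := by
              have h4' := (div_le_one hX0).mp h4
              refine le_trans ?_ h4'
              exact le_mul_of_one_le_left (by positivity) hC₀
            have e2 := pow_le_pow_left₀ (by positivity) e1 d
            rw [one_div, Real.rpow_inv_natCast_pow (by positivity) hd0] at e2
            exact_mod_cast e2
          · refine mul_le_mul_of_nonneg_left ?_ (by positivity)
            exact sum_primes_log_rpow_le _ (by positivity) (by rw [div_le_one hdpos]; exact hd1) _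
      _ = C₂ := by
          rw [Nat.cast_pow, one_div, Real.pow_rpow_inv_natCast hX0.le hd0, hC₂]
          field_simp
  have hbig_le : ∑ P ∈ big, Real.log (Ideal.absNorm P) * (κ Y P - κ X P) ≤
      (degOne K B).card * (Real.log (B : ℝ) * (C₁ * (C₀ ^ d / (X : ℝ) ^ d))) := by
    have hlogB : 0 ≤ Real.log (B : ℝ) := Real.log_natCast_nonneg _
    calc _ ≤ big.card • (Real.log (B : ℝ) * (C₁ * (C₀ ^ d / (X : ℝ) ^ d))) := by
          refine Finset.sum_le_card_nsmul _ _ _ fun P hP => ?_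
          rw [hbig, Finset.mem_filter, mem_degOne] at hP
          obtain ⟨⟨h0, h1, h2, h3⟩, h4⟩ := hP
          have hN0 : (0 : ℝ) < Ideal.absNorm P := by exact_mod_cast h3.pos
          have hlog : 0 ≤ Real.log (Ideal.absNorm P) := Real.log_natCast_nonneg _
          have e1 : Real.log (Ideal.absNorm P) ≤ Real.log B :=
            Real.log_le_log hN0 (by exact_mod_cast h0)
          have e2 : (X : ℝ) ^ d ≤ C₀ ^ d * Ideal.absNorm P := by
            have h4' : (X : ℝ) ≤ C₀ * (Ideal.absNorm P : ℝ) ^ (1 / d : ℝ) := by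
              rw [not_le, hs, one_lt_div hX0] at h4
              exact h4.le
            have := pow_le_pow_left₀ hX0.le h4' d
            rwa [mul_pow, one_div, Real.rpow_inv_natCast_pow (by positivity) hd0] at this
          have e3 : 1 / (Ideal.absNorm P : ℝ) ≤ C₀ ^ d / (X : ℝ) ^ d := by
            rw [div_le_div_iff₀ hN0 hXd]; linarith
          have e4 : κ Y P ≤ C₁ * (C₀ ^ d / (X : ℝ) ^ d) := by
            have := hY1' P h2
            rw [← le_div_iff₀ hN0, div_eq_mul_one_div] at this
            exact this.trans (mul_le_mul_of_nonneg_left e3 hC₁.le)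
          calc _ ≤ Real.log (Ideal.absNorm P) * (C₁ * (C₀ ^ d / (X : ℝ) ^ d)) :=
                mul_le_mul_of_nonneg_left (by linarith [hκ0 X P]) hlog
            _ ≤ _ := mul_le_mul_of_nonneg_right e1 (by positivity)
      _ ≤ _ := by
          rw [nsmul_eq_mul]
          refine mul_le_mul_of_nonneg_right ?_ (by positivity)
          exact_mod_cast Finset.card_filter_le _ _
  have hfin : 1 ≤ (degOne K B).card * (Real.log (B : ℝ) * (C₁ * (C₀ ^ d / (X : ℝ) ^ d))) := by
    linarith
  have e : (degOne K B).card * (Real.log (B : ℝ) * (C₁ * (C₀ ^ d / (X : ℝ) ^ d))) =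
      ((degOne K B).card * Real.log (B : ℝ)) * (C₁ * C₀ ^ d) / (X : ℝ) ^ d := by ring
  rw [e, le_div_iff₀ hXd, one_mul] at hfin
  rw [one_div_mul_eq_div, div_le_iff₀ (by positivity)]
  exact hfin

open Classical in
/-- At least `c x / log x` of the primes `p ≤ x` are norms of prime ideals of `𝓞 K`. -/
theorem exists_degOne_primes_lower : ∃ c : ℝ, 0 < c ∧ ∃ x₀ : ℝ, 2 ≤ x₀ ∧ ∀ x : ℝ, x₀ ≤ x →
    c * x / Real.log x ≤ (((Finset.Icc 1 ⌊x⌋₊).filter fun p : ℕ =>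
      p.Prime ∧ ∃ P : Ideal (𝓞 K), Ideal.absNorm P = p).card : ℝ) := by
  obtain ⟨H, c, hH, hc, hlow⟩ := exists_degOne_lower K
  set d := finrank ℚ K with hd
  have hd0 : d ≠ 0 := finrank_pos.ne'
  have hdpos : (0 : ℝ) < d := by exact_mod_cast Nat.pos_of_ne_zero hd0
  have hH0 : (0 : ℝ) < H := by exact_mod_cast hH
  refine ⟨c / (d * (2 * H) ^ d), by positivity, max 2 ((H : ℝ) ^ d), le_max_left _ _, fun x hx => ?_⟩
  have hx2 : 2 ≤ x := (le_max_left _ _).trans hx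
  have hxH : (H : ℝ) ^ d ≤ x := (le_max_right _ _).trans hx
  have hx0 : 0 < x := by linarith
  have hlogx : 0 < Real.log x := Real.log_pos (by linarith)
  set t : ℝ := x ^ (1 / d : ℝ) with ht
  have htd : t ^ d = x := by rw [ht, one_div, Real.rpow_inv_natCast_pow hx0.le hd0]
  have ht0 : 0 < t := by positivity
  have htH : H ≤ t := by
    rw [← htd] at hxH
    exact le_of_pow_le_pow_left₀ hd0 ht0.le hxH
  -- `X` is the largest side with `(H X) ^ d ≤ x`; at most `d` prime ideals share a norm.
  set X := ⌊t / H⌋₊ with hX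
  have hX1 : 1 ≤ X := Nat.le_floor (by rw [Nat.cast_one, one_le_div hH0]; exact htH)
  have hX1' : (1 : ℝ) ≤ X := by exact_mod_cast hX1
  have hXle : H * (X : ℝ) ≤ t := by
    have := Nat.floor_le (a := t / H) (by positivity)
    rw [le_div_iff₀ hH0] at this; linarith
  have hXge : t ≤ 2 * H * X := by
    have := Nat.lt_floor_add_one (t / H)
    rw [div_lt_iff₀ hH0] at this
    nlinarith
  set B := (H * X) ^ d with hB
  have hBx : (B : ℝ) ≤ x := by
    rw [hB, ← htd]; push_cast
    exact pow_le_pow_left₀ (by positivity) hXle d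
  have hB0 : (0 : ℝ) < B := by rw [hB]; push_cast; positivity
  set Q := (Finset.Icc 1 ⌊x⌋₊).filter fun p : ℕ =>
      p.Prime ∧ ∃ P : Ideal (𝓞 K), Ideal.absNorm P = p with hQ
  have hcard : ((degOne K B).card : ℝ) ≤ d * Q.card := by
    have := sum_minFac_le (degOne K B) (fun P hP => ⟨(mem_degOne.mp hP).2.1, (mem_degOne.mp hP).2.2.1⟩)
      (fun _ => 1) (fun _ => zero_le_one) Q ?_
    · simpa using this
    · intro P hP
      obtain ⟨h0, h1, h2, h3⟩ := mem_degOne.mp hP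
      rw [h3.minFac_eq, hQ, Finset.mem_filter, Finset.mem_Icc]
      refine ⟨⟨h3.one_le, Nat.le_floor (le_trans ?_ hBx)⟩, h3, P, rfl⟩
      exact_mod_cast h0
  have h1 : c * (X : ℝ) ^ d ≤ d * Q.card * Real.log x :=
    calc _ ≤ (degOne K B).card * Real.log (B : ℝ) := hlow X hX1
      _ ≤ d * Q.card * Real.log x :=
        mul_le_mul hcard (Real.log_le_log hB0 hBx) (Real.log_natCast_nonneg _) (by positivity)
  have h2 : x ≤ (2 * H) ^ d * (X : ℝ) ^ d := by
    rw [← htd, ← mul_pow]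
    exact pow_le_pow_left₀ ht0.le hXge d
  rw [div_le_iff₀ hlogx, div_mul_eq_mul_div, div_le_iff₀ (by positivity)]
  calc c * x ≤ c * ((2 * H) ^ d * (X : ℝ) ^ d) := mul_le_mul_of_nonneg_left h2 hc.le
    _ = (2 * H) ^ d * (c * (X : ℝ) ^ d) := by ring
    _ ≤ (2 * H) ^ d * (d * Q.card * Real.log x) := mul_le_mul_of_nonneg_left h1 (by positivity)
    _ = _ := by ring

end Chebyshev

/-! ### Linear recurrences and their characteristic polynomial -/

section Recurrence

lemma charPoly_monic (k : ℕ) (a : Fin k → ℤ) :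
    (charPoly k a).Monic ∧ (charPoly k a).natDegree = k := by
  have hdeg : (∑ i : Fin k, C (a i) * X ^ (k - 1 - (i : ℕ)) : ℤ[X]).degree < k := by
    refine (Polynomial.degree_sum_le _ _).trans_lt ?_
    rw [Finset.sup_lt_iff (by exact_mod_cast WithBot.bot_lt_coe k)]
    intro i _
    refine (degree_C_mul_X_pow_le _ _).trans_lt ?_
    have := i.2
    exact_mod_cast (by omega : k - 1 - (i : ℕ) < k)
  have hm : (charPoly k a).Monic := monic_X_pow_sub (n := k) hdeg
  refine ⟨hm, natDegree_eq_of_degree_eq_some ?_⟩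
  rw [charPoly, degree_sub_eq_left_of_degree_lt (by rwa [degree_X_pow]), degree_X_pow]

lemma charPoly_coeff_zero (k : ℕ) (hk : 2 ≤ k) (a : Fin k → ℤ) (l : Fin k)
    (hl : (l : ℕ) = k - 1) :
    (charPoly k a).coeff 0 = - a l := by
  rw [charPoly, coeff_sub, coeff_X_pow, if_neg (by omega), zero_sub, finsetSum_coeff]
  congr 1
  rw [Finset.sum_eq_single l]
  · simp [hl]
  · intro i _ hi
    rw [coeff_C_mul, coeff_X_pow, if_neg, mul_zero]
    intro h
    apply hi
    ext
    have := i.2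
    omega
  · simp

/-- The linear functional on `R[X]` with `X ^ n ↦ u n`. -/
noncomputable def seqFunctional (R : Type*) [CommRing R] (u : ℕ → ℤ) : R[X] →ₗ[R] R :=
  Polynomial.lsum fun n => LinearMap.mulRight R (u n : R)

lemma seqFunctional_C_mul_X_pow (R : Type*) [CommRing R] (u : ℕ → ℤ) (b : R) (n : ℕ) :
    seqFunctional R u (C b * X ^ n) = b * u n := by
  rw [C_mul_X_pow_eq_monomial, seqFunctional, Polynomial.lsum_apply, sum_monomial_index] <;> simp

/-- The recurrence says that the functional attached to `u` kills the multiples of `charPoly k a`. -/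
lemma seqFunctional_mul_charPoly (R : Type*) [CommRing R] {k : ℕ} {a : Fin k → ℤ}
    {u : ℕ → ℤ} (hrec : IsLinRec k a u) (g : R[X]) :
    seqFunctional R u (g * (charPoly k a).map (Int.castRingHom R)) = 0 := by
  induction g using Polynomial.induction_on' with
  | add p q hp hq => rw [add_mul, map_add, hp, hq, add_zero]
  | monomial m b =>
    have h1 : monomial m b * (charPoly k a).map (Int.castRingHom R) =
        C b * X ^ (m + k) - ∑ i : Fin k, C (b * a i) * X ^ (m + k - 1 - (i : ℕ)) := by
      rw [charPoly, ← C_mul_X_pow_eq_monomial]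
      simp only [Polynomial.map_sub, Polynomial.map_pow, map_X, Polynomial.map_sum,
        Polynomial.map_mul, map_C, mul_sub, Finset.mul_sum, pow_add, mul_assoc]
      congr 1
      refine Finset.sum_congr rfl fun i _ => ?_
      have : m + k - 1 - (i : ℕ) = m + (k - 1 - i) := by have := i.2; omega
      rw [this, C_mul, pow_add, eq_intCast]
      ring
    rw [h1, map_sub, map_sum]
    simp only [seqFunctional_C_mul_X_pow]
    rw [hrec m]
    push_cast
    rw [Finset.mul_sum, sub_eq_zero]
    exact Finset.sum_congr rfl fun i _ => by ring

lemma cast_eq_of_dvd (R : Type*) [CommRing R] {k : ℕ} {a : Fin k → ℤ}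
    {u : ℕ → ℤ} (hrec : IsLinRec k a u) {m n : ℕ}
    (h : (charPoly k a).map (Int.castRingHom R) ∣ X ^ m - X ^ n) : (u m : R) = u n := by
  obtain ⟨g, hg⟩ := h
  have h1 := congrArg (seqFunctional R u) hg
  rw [mul_comm, seqFunctional_mul_charPoly R hrec, map_sub] at h1
  have h2 := seqFunctional_C_mul_X_pow R u 1
  simp only [C_1, one_mul] at h2
  rwa [h2, h2, sub_eq_zero] at h1

/-- `u` is purely periodic modulo `n₀`: the class of `X` in `(ℤ/n₀)[X] / (charPoly)` is a unit, because
the constant coefficient `-a_k` is prime to `n₀`, and it has finite order in this finite ring. -/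
lemma exists_period (k : ℕ) (hk : 2 ≤ k) (a : Fin k → ℤ) (u : ℕ → ℤ) (hrec : IsLinRec k a u)
    (n₀ : ℕ) (hn₀ : 0 < n₀) (l : Fin k) (hl : (l : ℕ) = k - 1)
    (hcop : IsCoprime (n₀ : ℤ) (a l)) :
    ∃ T : ℕ, 0 < T ∧ ∀ n j, (n₀ : ℤ) ∣ u (n + T * j) - u n := by
  rcases Nat.lt_or_ge 1 n₀ with h1 | h1
  swap
  · have : n₀ = 1 := by omega
    subst this
    exact ⟨1, one_pos, fun n j => by simp⟩
  have : NeZero n₀ := ⟨by omega⟩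
  have : Fact (1 < n₀) := ⟨h1⟩
  set f : (ZMod n₀)[X] := (charPoly k a).map (Int.castRingHom (ZMod n₀)) with hf
  have hmon : f.Monic := (charPoly_monic k a).1.map _
  have hfin : Module.Finite (ZMod n₀) (AdjoinRoot f) := hmon.finite_adjoinRoot
  have hfin' : Finite (AdjoinRoot f) := Module.finite_of_finite (ZMod n₀)
  have hunit : IsUnit (AdjoinRoot.root f) := by
    have h2 : AdjoinRoot.mk f f.divX * AdjoinRoot.root f =
        AdjoinRoot.of f ((a l : ℤ) : ZMod n₀) := by
      have h3 := congrArg (AdjoinRoot.mk f) (divX_mul_X_add f)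
      rw [map_add, map_mul, AdjoinRoot.mk_X, AdjoinRoot.mk_self, AdjoinRoot.mk_C, hf, coeff_map,
        charPoly_coeff_zero k hk a l hl, ← hf] at h3
      rw [eq_neg_of_add_eq_zero_left h3, ← map_neg]
      simp
    have h3 : IsUnit ((a l : ℤ) : ZMod n₀) := by
      obtain ⟨x, y, hxy⟩ := hcop
      have := congrArg (Int.cast : ℤ → ZMod n₀) hxy
      push_cast at this
      rw [ZMod.natCast_self, mul_zero, zero_add] at this
      exact IsUnit.of_mul_eq_one _ ((mul_comm _ _).trans this)
    have h4 := h3.map (AdjoinRoot.of f)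
    rw [← h2] at h4
    exact isUnit_of_mul_isUnit_right h4
  obtain ⟨r, hr⟩ := hunit
  refine ⟨orderOf r, orderOf_pos r, fun n j => ?_⟩
  have hdvd : f ∣ X ^ (n + orderOf r * j) - X ^ n := by
    rw [← AdjoinRoot.mk_eq_zero, map_sub, map_pow, map_pow, AdjoinRoot.mk_X, ← hr, sub_eq_zero,
      ← Units.val_pow_eq_pow_val, ← Units.val_pow_eq_pow_val, pow_add, pow_mul, pow_orderOf_eq_one,
      one_pow, mul_one]
  have := cast_eq_of_dvd (ZMod n₀) hrec hdvd
  rw [← sub_eq_zero, ← Int.cast_sub] at this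
  exact (ZMod.intCast_zmod_eq_zero_iff_dvd _ _).mp this

lemma charPoly_separable (k : ℕ) (a : Fin k → ℤ) (hs : HasSimpleRoots k a) :
    ((charPoly k a).map (Int.castRingHom ℚ)).Separable := by
  classical
  obtain ⟨hmon, hdeg⟩ := charPoly_monic k a
  rw [← Polynomial.separable_map (algebraMap ℚ ℂ), Polynomial.map_map,
    show (algebraMap ℚ ℂ).comp (Int.castRingHom ℚ) = Int.castRingHom ℂ from RingHom.ext_int _ _]
  have hmonC : ((charPoly k a).map (Int.castRingHom ℂ)).Monic := hmon.map _
  rw [← nodup_roots_iff_of_splits hmonC.ne_zero (IsAlgClosed.splits _)]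
  refine Multiset.toFinset_card_eq_card_iff_nodup.mp (le_antisymm (Multiset.toFinset_card_le _) ?_)
  have h1 := Polynomial.card_roots' ((charPoly k a).map (Int.castRingHom ℂ))
  rw [hmon.natDegree_map, hdeg] at h1
  exact h1.trans_eq hs.symm

variable {K : Type*} [Field K] [NumberField K]

/-- The roots of the characteristic polynomial are algebraic integers, so it factors over `𝓞 K` into
distinct monic linear factors as soon as it splits in `K`. -/
lemma exists_factorization (k : ℕ) (a : Fin k → ℤ) (hs : HasSimpleRoots k a)
    (hsplit : ((charPoly k a).map (Int.castRingHom K)).Splits) :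
    ∃ s : Finset (𝓞 K),
      (charPoly k a).map (Int.castRingHom (𝓞 K)) = ∏ α ∈ s, (X - C α) := by
  classical
  obtain ⟨hmon, hdeg⟩ := charPoly_monic k a
  have hsep := charPoly_separable k a hs
  have hcomp : (algebraMap ℚ K).comp (Int.castRingHom ℚ) = Int.castRingHom K := RingHom.ext_int _ _
  have hsepK : ((charPoly k a).map (Int.castRingHom K)).Separable := by
    rw [← hcomp, ← Polynomial.map_map]; exact hsep.map
  set fK := (charPoly k a).map (Int.castRingHom K) with hfK
  set fO := (charPoly k a).map (Int.castRingHom (𝓞 K)) with hfO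
  have hmonO : fO.Monic := hmon.map _
  have hdegO : fO.natDegree = k := by rw [hfO, hmon.natDegree_map, hdeg]
  have hmapO : fO.map (algebraMap (𝓞 K) K) = fK := by
    rw [hfO, Polynomial.map_map, hfK]; congr 1
  have hcardK : fK.roots.toFinset.card = k := by
    rw [Multiset.toFinset_card_of_nodup (nodup_roots hsepK), ← hsplit.natDegree_eq_card_roots, hfK,
      hmon.natDegree_map, hdeg]
  have hle : k ≤ fO.roots.toFinset.card := by
    rw [← hcardK]
    refine Finset.card_le_card_of_surjOn (algebraMap (𝓞 K) K) ?_
    intro x hx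
    have hx' : fK.eval x = 0 := by
      have := Multiset.mem_toFinset.mp (Finset.mem_coe.mp hx)
      exact (mem_roots'.mp this).2
    have hintegral : IsIntegral ℤ x := ⟨charPoly k a, hmon, by
      rw [← eval_map]; exact hx'⟩
    obtain ⟨y, rfl⟩ := (IsIntegralClosure.isIntegral_iff (A := 𝓞 K)).mp hintegral
    refine ⟨y, ?_, rfl⟩
    rw [Finset.mem_coe, Multiset.mem_toFinset, mem_roots hmonO.ne_zero, IsRoot.def]
    apply RingOfIntegers.coe_injective
    have h2 := eval₂_at_apply (p := fO) (algebraMap (𝓞 K) K) y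
    rw [← eval_map, hmapO] at h2
    exact (h2.symm.trans hx').trans (map_zero _).symm
  have hcard : fO.roots.card = fO.natDegree := by
    refine le_antisymm (card_roots' _) ?_
    rw [hdegO]
    exact hle.trans (Multiset.toFinset_card_le _)
  have hnodup : fO.roots.Nodup := by
    refine Multiset.toFinset_card_eq_card_iff_nodup.mp (le_antisymm (Multiset.toFinset_card_le _) ?_)
    rw [hcard, hdegO]; exact hle
  refine ⟨fO.roots.toFinset, ?_⟩
  rw [Finset.prod, Multiset.toFinset_val, hnodup.dedup]
  exact (prod_multiset_X_sub_C_of_monic_of_roots_card_eq hmonO hcard).symm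

end Recurrence

/-! ### Divisibility of `u (p n₀)` by `p n₀` -/

section Divisibility

variable {K : Type*} [Field K] [NumberField K]

lemma dvd_of_mem_of_absNorm_prime {P : Ideal (𝓞 K)} {p : ℕ} (hp : p.Prime)
    (hP : Ideal.absNorm P = p) {z : ℤ} (hz : (z : 𝓞 K) ∈ P) : (p : ℤ) ∣ z := by
  have h := Ideal.absNorm_dvd_norm_of_mem hz
  have h2 := Algebra.norm_algebraMap (R := ℤ) (S := 𝓞 K) z
  rw [eq_intCast] at h2
  rw [h2, hP] at h
  exact (Nat.prime_iff_prime_int.mp hp).dvd_of_dvd_pow h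

/-- Modulo a prime `P` of norm `p` at which the roots stay distinct, the characteristic polynomial
divides `X ^ p - X`, and hence `X ^ (p n₀) - X ^ n₀`; so `u (p n₀) ≡ u n₀ = 0`. -/
lemma dvd_of_factorization {k : ℕ} {a : Fin k → ℤ} {u : ℕ → ℤ} (hrec : IsLinRec k a u)
    {n₀ : ℕ} (hu₀ : u n₀ = 0) {s : Finset (𝓞 K)}
    (hs : (charPoly k a).map (Int.castRingHom (𝓞 K)) = ∏ α ∈ s, (X - C α))
    {P : Ideal (𝓞 K)} {p : ℕ} (hp : p.Prime) (hP : Ideal.absNorm P = p)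
    (hdist : ∀ α ∈ s, ∀ β ∈ s, α - β ∈ P → α = β) : (p : ℤ) ∣ u (p * n₀) := by
  apply dvd_of_mem_of_absNorm_prime hp hP
  have hprime : P.IsPrime := Ideal.isPrime_of_irreducible_absNorm (by rw [hP]; exact hp)
  have hne : P ≠ ⊥ := by
    rintro rfl
    rw [Ideal.absNorm_bot] at hP
    exact hp.ne_zero hP.symm
  have hmax : P.IsMaximal := hprime.isMaximal hne
  let : Field (𝓞 K ⧸ P) := Ideal.Quotient.field P
  have hcard : Nat.card (𝓞 K ⧸ P) = p := hP
  have : Finite (𝓞 K ⧸ P) := Nat.finite_of_card_ne_zero (by rw [hcard]; exact hp.ne_zero)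
  let : Fintype (𝓞 K ⧸ P) := Fintype.ofFinite _
  rw [← Ideal.Quotient.eq_zero_iff_mem, map_intCast]
  have hdvd : (charPoly k a).map (Int.castRingHom (𝓞 K ⧸ P)) ∣ X ^ (p * n₀) - X ^ n₀ := by
    have h1 : (charPoly k a).map (Int.castRingHom (𝓞 K ⧸ P)) =
        ∏ α ∈ s, (X - C (Ideal.Quotient.mk P α)) := by
      have := congrArg (Polynomial.map (Ideal.Quotient.mk P)) hs
      rw [Polynomial.map_map, Polynomial.map_prod] at this
      simp only [Polynomial.map_sub, map_X, map_C] at this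
      rw [← this]
      congr 1
    have h2 : (X ^ p - X : (𝓞 K ⧸ P)[X]) ∣ X ^ (p * n₀) - X ^ n₀ := by
      rw [pow_mul]
      exact sub_dvd_pow_sub_pow _ _ _
    refine Dvd.dvd.trans ?_ h2
    rw [h1]
    refine Finset.prod_dvd_of_coprime ?_ ?_
    · intro α hα β hβ hαβ
      apply isCoprime_X_sub_C_of_isUnit_sub
      rw [isUnit_iff_ne_zero, ← map_sub, Ne, Ideal.Quotient.eq_zero_iff_mem]
      exact fun h => hαβ (hdist α hα β hβ h)
    · intro α _
      rw [dvd_iff_isRoot, IsRoot.def, eval_sub, eval_pow, eval_X, sub_eq_zero]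
      have := FiniteField.pow_card (Ideal.Quotient.mk P α)
      rwa [← Nat.card_eq_fintype_card, hcard] at this
  rw [cast_eq_of_dvd _ hrec hdvd, hu₀, Int.cast_zero]

/-- A primitive `T`-th root of unity stays primitive in the residue field, whose multiplicative group has
order `p - 1`. -/
lemma dvd_sub_one_of_root {T : ℕ} (hT : 0 < T) {ζ : K} (hζ : IsPrimitiveRoot ζ T)
    {P : Ideal (𝓞 K)} {p : ℕ} (hp : p.Prime) (hP : Ideal.absNorm P = p) (hTp : T < p) :
    T ∣ p - 1 := by
  have hprime : P.IsPrime := Ideal.isPrime_of_irreducible_absNorm (by rw [hP]; exact hp)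
  have hne : P ≠ ⊥ := by
    rintro rfl
    rw [Ideal.absNorm_bot] at hP
    exact hp.ne_zero hP.symm
  have hmax : P.IsMaximal := hprime.isMaximal hne
  let : Field (𝓞 K ⧸ P) := Ideal.Quotient.field P
  have hcard : Nat.card (𝓞 K ⧸ P) = p := hP
  have : Finite (𝓞 K ⧸ P) := Nat.finite_of_card_ne_zero (by rw [hcard]; exact hp.ne_zero)
  let : Fintype (𝓞 K ⧸ P) := Fintype.ofFinite _
  have hintegral : IsIntegral ℤ ζ := hζ.isIntegral hT
  have hz : IsPrimitiveRoot (⟨ζ, hintegral⟩ : 𝓞 K) T :=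
    IsPrimitiveRoot.of_map_of_injective (f := algebraMap (𝓞 K) K) hζ RingOfIntegers.coe_injective
  have : NeZero T := ⟨hT.ne'⟩
  have hq := hz.idealQuotient_mk (I := P) (by rw [hP]; exact hp.ne_one)
    (by rw [hP]; exact (hp.coprime_iff_not_dvd).mpr fun h => absurd (Nat.le_of_dvd hT h) (by omega))
  have h1 := FiniteField.pow_card_sub_one_eq_one _ (hq.ne_zero hT.ne')
  rw [← Nat.card_eq_fintype_card, hcard] at h1
  exact hq.dvd_of_pow_eq_one _ h1

/-- The splitting field of the product of the characteristic polynomial and a cyclotomic polynomial. -/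
lemma exists_field (k : ℕ) (a : Fin k → ℤ) (T : ℕ) (hT : 0 < T) :
    ∃ (K : Type) (_ : Field K) (_ : NumberField K),
      ((charPoly k a).map (Int.castRingHom K)).Splits ∧
      ∃ ζ : K, IsPrimitiveRoot ζ T := by
  set f := (charPoly k a).map (Int.castRingHom ℚ) with hf
  have hf0 : f ≠ 0 := ((charPoly_monic k a).1.map _).ne_zero
  have hc0 : cyclotomic T ℚ ≠ 0 := cyclotomic_ne_zero T ℚ
  have hNF : NumberField (SplittingField (f * cyclotomic T ℚ)) :=
    { to_charZero := charZero_of_injective_algebraMap (algebraMap ℚ _).injective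
      to_finiteDimensional := by
        have : FiniteDimensional ℚ (SplittingField (f * cyclotomic T ℚ)) := inferInstance
        convert this }
  refine ⟨SplittingField (f * cyclotomic T ℚ), inferInstance, hNF, ?_⟩
  have hsp := SplittingField.splits (f * cyclotomic T ℚ)
  have hinj := (algebraMap ℚ (SplittingField (f * cyclotomic T ℚ))).injective
  rw [Polynomial.map_mul] at hsp
  have hne : (f.map (algebraMap ℚ (SplittingField (f * cyclotomic T ℚ)))) *
    ((cyclotomic T ℚ).map (algebraMap ℚ _)) ≠ 0 :=
    mul_ne_zero ((Polynomial.map_ne_zero_iff hinj).mpr hf0)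
      ((Polynomial.map_ne_zero_iff hinj).mpr hc0)
  have h1 := hsp.of_dvd hne (dvd_mul_right _ _)
  have h2 := hsp.of_dvd hne (dvd_mul_left _ _)
  have h3 : f.map (algebraMap ℚ (SplittingField (f * cyclotomic T ℚ))) =
      (charPoly k a).map (Int.castRingHom _) :=
    (Polynomial.map_map _ _ _).trans (congrArg (fun φ => (charPoly k a).map φ)
      (RingHom.ext_int _ _))
  refine ⟨h3 ▸ h1, ?_⟩
  rw [map_cyclotomic] at h2
  have : NeZero (T : SplittingField (f * cyclotomic T ℚ)) := ⟨by exact_mod_cast hT.ne'⟩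
  obtain ⟨ζ, hζ⟩ := h2.exists_eval_eq_zero (by
    rw [degree_cyclotomic]; exact_mod_cast (Nat.totient_pos.mpr hT).ne')
  exact ⟨ζ, (isRoot_cyclotomic_iff (n := T)).mp hζ⟩

/-- All large primes `p` that are norms of ideals of a suitable number field satisfy
`p n₀ ∣ u (p n₀)`. -/
theorem exists_dvd_mul (k : ℕ) (hk : 2 ≤ k) (a : Fin k → ℤ) (u : ℕ → ℤ)
    (hrec : IsLinRec k a u) (hsimple : HasSimpleRoots k a)
    (n₀ : ℕ) (hn₀ : 0 < n₀)
    (l : Fin k) (hl : (l : ℕ) = k - 1) (hcop : IsCoprime (n₀ : ℤ) (a l)) (hu₀ : u n₀ = 0) :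
    ∃ (K : Type) (_ : Field K) (_ : NumberField K) (W : ℕ), ∀ (p : ℕ) (P : Ideal (𝓞 K)),
      p.Prime → Ideal.absNorm P = p → W < p → ((p * n₀ : ℕ) : ℤ) ∣ u (p * n₀) := by
  classical
  obtain ⟨T, hT, hper⟩ := exists_period k hk a u hrec n₀ hn₀ l hl hcop
  obtain ⟨K, _, _, hsplit, ζ, hζ⟩ := exists_field k a T hT
  obtain ⟨s, hs⟩ := exists_factorization k a hsimple hsplit
  -- A prime `p` beyond this bound divides no norm of a difference of distinct roots, and is prime to `T`
  -- and to `n₀`.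
  refine ⟨K, inferInstance, inferInstance, (∑ q ∈ s ×ˢ s,
    Ideal.absNorm (Ideal.span {q.1 - q.2})) + T + n₀, fun p P hp hP hW => ?_⟩
  have h1 : (p : ℤ) ∣ u (p * n₀) := by
    refine dvd_of_factorization hrec hu₀ hs hp hP fun α hα β hβ hmem => ?_
    by_contra hne
    have h2 : p ∣ Ideal.absNorm (Ideal.span {α - β}) := by
      rw [← hP]
      exact Ideal.absNorm_dvd_absNorm_of_le ((Ideal.span_singleton_le_iff_mem _).mpr hmem)
    have h3 : Ideal.absNorm (Ideal.span {α - β}) ≠ 0 := by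
      rw [Ne, Ideal.absNorm_eq_zero_iff, Ideal.span_singleton_eq_bot]
      exact sub_ne_zero.mpr hne
    have h4 := Nat.le_of_dvd (Nat.pos_of_ne_zero h3) h2
    have h5 := Finset.single_le_sum (f := fun q : 𝓞 K × 𝓞 K =>
      Ideal.absNorm (Ideal.span {q.1 - q.2})) (fun _ _ => Nat.zero_le _)
      (Finset.mk_mem_product hα hβ)
    simp only at h5
    omega
  have h2 : (n₀ : ℤ) ∣ u (p * n₀) := by
    obtain ⟨j, hj⟩ := dvd_sub_one_of_root hT hζ hp hP (by omega)
    have h3 := hper n₀ (j * n₀)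
    rw [hu₀, sub_zero] at h3
    have h4 : p * n₀ = n₀ + T * (j * n₀) := by
      have : p = 1 + T * j := by have := hp.pos; omega
      rw [this]; ring
    rwa [h4]
  push_cast
  refine IsCoprime.mul_dvd ?_ h1 h2
  rw [Nat.isCoprime_iff_coprime, hp.coprime_iff_not_dvd]
  intro h
  have := Nat.le_of_dvd hn₀ h
  omega

end Divisibility

end LinRecDiv

theorem statement9 (k : ℕ) (hk : 2 ≤ k) (a : Fin k → ℤ) (u : ℕ → ℤ)
    (hak : a ⟨k - 1, by omega⟩ ≠ 0)
    (hrec : IsLinRec k a u)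
    (hsimple : HasSimpleRoots k a)
    (hnd : Nondegen k a)
    (n₀ : ℕ) (hn₀ : 0 < n₀)
    (hcop : IsCoprime (n₀ : ℤ) (a ⟨k - 1, by omega⟩))
    (hu₀ : u n₀ = 0) :
    ∃ c : ℝ, 0 < c ∧ ∃ x₀ : ℝ, ∀ x : ℝ, x₀ ≤ x →
      c * x / Real.log x ≤ (countDiv u x : ℝ) := by
  classical
  obtain ⟨K, _, _, W, hW⟩ := LinRecDiv.exists_dvd_mul k hk a u hrec hsimple n₀ hn₀ _ rfl hcop hu₀
  obtain ⟨c, hc, x₀, hx₀, hlow⟩ := LinRecDiv.exists_degOne_primes_lower K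
  have hn : (0 : ℝ) < n₀ := by exact_mod_cast hn₀
  have hn1 : (1 : ℝ) ≤ n₀ := by exact_mod_cast hn₀
  have hlog : ∀ᶠ x : ℝ in Filter.atTop, W * Real.log x ≤ c / (2 * n₀) * x := by
    have h := Real.isLittleO_log_id_atTop.def
      (c := c / (2 * n₀) / (W + 1)) (by positivity)
    filter_upwards [h, Filter.eventually_ge_atTop 1] with x hx hx1
    have h0 := Real.log_nonneg hx1
    rw [Real.norm_of_nonneg h0, id, Real.norm_of_nonneg (by linarith), div_mul_eq_mul_div,
      le_div_iff₀ (by positivity)] at hx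
    linarith
  obtain ⟨x₁, hx₁⟩ := Filter.eventually_atTop.mp hlog
  -- Half of the main term `c (x / n₀) / log x` absorbs the at most `W` exceptional small primes.
  refine ⟨c / (2 * n₀), by positivity, max x₁ (x₀ * n₀), fun x hx => ?_⟩
  have hxx := hx₁ x ((le_max_left _ _).trans hx)
  have hxn : x₀ * n₀ ≤ x := (le_max_right _ _).trans hx
  have hy : x₀ ≤ x / n₀ := by rwa [le_div_iff₀ hn]
  have hy2 : 2 ≤ x / n₀ := hx₀.trans hy
  have hyx : x / n₀ ≤ x := div_le_self (by nlinarith) hn1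
  have hlogpos : 0 < Real.log (x / n₀) := Real.log_pos (by linarith)
  have hlogle : Real.log (x / n₀) ≤ Real.log x := Real.log_le_log (by linarith) hyx
  have hlogx : 0 < Real.log x := hlogpos.trans_le hlogle
  have h1 := hlow (x / n₀) hy
  set S := (Finset.Icc 1 ⌊x / n₀⌋₊).filter fun p : ℕ =>
    p.Prime ∧ ∃ P : Ideal (NumberField.RingOfIntegers K), Ideal.absNorm P = p with hS
  have h2 : S.card ≤ W + countDiv u x := by
    have h3 : S.card ≤ (Finset.Icc 1 W).card + (S.filter fun p => W < p).card := by
      refine (Finset.card_le_card (t := Finset.Icc 1 W ∪ S.filter fun p => W < p) ?_).trans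
        (Finset.card_union_le _ _)
      intro p hp
      have := (Finset.mem_Icc.mp (Finset.mem_filter.mp hp).1).1
      rw [Finset.mem_union, Finset.mem_Icc, Finset.mem_filter]
      rcases Nat.lt_or_ge W p with h | h
      · exact Or.inr ⟨hp, h⟩
      · exact Or.inl ⟨this, h⟩
    rw [Nat.card_Icc, Nat.add_sub_cancel] at h3
    refine h3.trans (Nat.add_le_add_left ?_ _)
    refine Finset.card_le_card_of_injOn (fun p => p * n₀) ?_ ?_
    · intro p hp
      rw [Finset.mem_coe, Finset.mem_filter, hS, Finset.mem_filter, Finset.mem_Icc] at hp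
      obtain ⟨⟨⟨hp1, hpx⟩, hpp, P, hP⟩, hWp⟩ := hp
      rw [Finset.mem_coe, Finset.mem_filter, Finset.mem_Icc]
      refine ⟨⟨Nat.mul_pos hp1 hn₀, ?_⟩, hW p P hpp hP hWp⟩
      have := (Nat.le_floor_iff (by linarith)).mp hpx
      apply Nat.le_floor
      push_cast
      rwa [le_div_iff₀ hn] at this
    · intro p _ q _ h
      exact Nat.eq_of_mul_eq_mul_right hn₀ h
  have h3 : (S.card : ℝ) ≤ W + countDiv u x := by exact_mod_cast h2
  have h4 : c * (x / n₀) / Real.log x ≤ c * (x / n₀) / Real.log (x / n₀) :=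
    div_le_div_of_nonneg_left (by positivity) hlogpos hlogle
  have h5 : (W : ℝ) ≤ c / (2 * n₀) * x / Real.log x := by rwa [le_div_iff₀ hlogx]
  have h6 : c * (x / n₀) / Real.log x =
      c / (2 * n₀) * x / Real.log x + c / (2 * n₀) * x / Real.log x := by
    field_simp; ring
  linarith
end

section
/- Let u : ℕ → ℤ be a nondegenerate linear recurrence sequence of order k ≥ 2 whose characteristic polynomial splits into k distinct linear factors over ℤ (i.e., has k distinct integer roots). Let M_u(x) be the set of positive integers n ≤ x such that n ∣ u_n and n is not of the form p·n₀ with p prime and n₀ a positive integer satisfying u_{n₀} = 0. Then there is a positive constant c₄(k) depending only on k such that for all sufficiently large x (with the threshold depending on u), #M_u(x) ≤ x/L(x)^{c₄(k)}, where L(x) = exp(√(log x · log log x)). -/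
/-!
The exponent is `c₄ = θ / 2` with `θ = 1 / (2k + 2)`.

Let `r₁, …, r_k` be the integer roots. Inverting a Vandermonde matrix gives an integer `D ≠ 0` and
integers `b_i` with `D u_n = v_n := ∑ b_i r_i ^ n` (`exists_repr`). Put `y = L(x)`. The integers
`n ≤ x` all of whose prime factors are at most `y` number at most `x / L(x) ^ (1/5)` by Rankin's
method (`card_smooth_le`, `eventually_card_smooth_le`). Any other `n` counted by `M_u(x)` is `p * m`
with `p > y` prime; Fermat's little theorem turns `p ∣ v_{pm}` into `p ∣ v_m`, and `v_m ≠ 0` because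
`n` is not `p` times a zero of `u` (`countM_le_add`).

The pairs `(p, m)` are counted in `card_pairs_le` in three classes, with parameters `z ≈ x ^ (1/3)`
and `W ≈ L(x) ^ θ`.
* If `m ≤ z`, then `p` is one of the `O(m)` prime factors of `v_m`; this gives `O(z ^ 2)` pairs.
* Call `p` bad if it divides some determinant `det ((r_i ^ 2) ^ y_j)` with distinct exponents
  `y_j < W`. By nondegeneracy the `r_i ^ 2` are distinct positive integers, so these determinants
  are nonzero by Descartes' rule of signs (`det_pow_ne_zero`). Hence there are only
  `O(W ^ (k + 1))` bad primes (`card_badPrimes_le`), each belonging to at most `x / y` pairs.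
* If `p` is good and `m > z`, then `p ≤ x / z`. Among `W` consecutive `m` of a fixed parity, fewer
  than `k` satisfy `p ∣ v_m` (`card_window_lt`); otherwise Cramer's rule would force `p` to divide
  every `b_i r_i ^ a`. So `p` belongs to `O(x / (p W) + 1)` pairs, and one sums over `p`.

Fixing the parity of `m` is what replaces `r_i` by `r_i ^ 2` and makes Descartes' rule applicable
to negative roots.
-/

open Polynomial

/-- `L(x) = exp(√(log x · log log x))`. -/
noncomputable def Lfun (x : ℝ) : ℝ :=
  Real.exp (Real.sqrt (Real.log x * Real.log (Real.log x)))

open Classical in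
/-- The number of positive integers `n ≤ x` such that `n ∣ u n` and `n` is not
of the form `p·n₀` with `p` prime and `u n₀ = 0`. -/
noncomputable def countM (u : ℕ → ℤ) (x : ℝ) : ℕ :=
  ((Finset.Icc 1 ⌊x⌋₊).filter fun n : ℕ => (n : ℤ) ∣ u n ∧
    ¬∃ p n₀ : ℕ, p.Prime ∧ 0 < n₀ ∧ u n₀ = 0 ∧ n = p * n₀).card


/-! ### Generalized Vandermonde determinants and zeros modulo a prime -/

/-- A nonzero polynomial has fewer sign variations than nonzero coefficients. -/
theorem signVariations_lt_card_support (n : ℕ) : ∀ (P : ℤ[X]), P.support.card = n → P ≠ 0 →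
    P.signVariations < n := by
  induction n with
  | zero => intro P hP h0; simp at hP; exact absurd hP h0
  | succ n ih =>
    intro P hP h0
    have h1 := P.signVariations_le_eraseLead_succ
    have h2 : P.eraseLead.support.card = n := card_support_eraseLead' hP
    by_cases h3 : P.eraseLead = 0
    · have h4 := signVariations_eq_eraseLead_add_ite h0
      have h5 : ¬ (SignType.sign P.leadingCoeff = -SignType.sign P.eraseLead.leadingCoeff) := by
        simp [h3, h0]
      rw [if_neg h5, h3, signVariations_zero] at h4
      omega
    · have := ih _ h2 h3
      omega

/-- A generalized Vandermonde determinant with distinct positive nodes and distinct exponents is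
nonzero: a vanishing combination of its rows would be a nonzero polynomial with at most `k` nonzero
coefficients and at least `k` positive roots, contradicting Descartes' rule of signs. -/
theorem det_pow_ne_zero {k : ℕ} (s : Fin k → ℤ) (hs : Function.Injective s) (hpos : ∀ i, 0 < s i)
    (y : Fin k → ℕ) (hy : Function.Injective y) :
    (Matrix.of fun j i : Fin k => s i ^ y j).det ≠ 0 := by
  intro hdet
  obtain ⟨v, hv0, hv⟩ := Matrix.exists_vecMul_eq_zero_iff.mpr hdet
  set P : ℤ[X] := ∑ j, C (v j) * X ^ y j with hP
  have hcoeff : ∀ j, P.coeff (y j) = v j := by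
    intro j
    rw [hP, finsetSum_coeff, Finset.sum_eq_single j]
    · simp
    · intro b _ hb
      rw [coeff_C_mul_X_pow, if_neg]
      exact fun h => hb (hy h.symm)
    · simp
  have hP0 : P ≠ 0 := by
    obtain ⟨j, hj⟩ := Function.ne_iff.mp hv0
    intro h
    apply hj
    rw [← hcoeff j, h]; simp
  have hsupp : P.support.card ≤ k := by
    have : P.support ⊆ Finset.univ.image y := by
      intro n hn
      by_contra hcon
      rw [mem_support_iff] at hn
      apply hn
      rw [hP, finsetSum_coeff]
      apply Finset.sum_eq_zero
      intro j _
      rw [coeff_C_mul_X_pow, if_neg]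
      rintro rfl
      exact hcon (Finset.mem_image_of_mem _ (Finset.mem_univ _))
    calc _ ≤ _ := Finset.card_le_card this
      _ ≤ _ := Finset.card_image_le
      _ = k := by simp
  have hroots : k ≤ P.roots.countP (0 < ·) := by
    have hsub : (Finset.univ.image s).val ≤ P.roots.filter (0 < ·) := by
      rw [Multiset.le_iff_subset (Finset.nodup _)]
      intro t ht
      rw [Finset.mem_val, Finset.mem_image] at ht
      obtain ⟨i, -, rfl⟩ := ht
      rw [Multiset.mem_filter, mem_roots hP0]
      refine ⟨?_, hpos i⟩
      have := congrFun hv i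
      simp only [Matrix.vecMul, dotProduct, Matrix.of_apply, Pi.zero_apply] at this
      rw [IsRoot, hP, eval_finsetSum]
      simpa using this
    have := Multiset.card_le_card hsub
    rw [Multiset.countP_eq_card_filter]
    rw [Finset.card_val, Finset.card_image_of_injective _ hs] at this
    simpa using this
  have h1 := P.roots_countP_pos_le_signVariations
  have h2 := signVariations_lt_card_support _ P rfl hP0
  omega

theorem card_primeFactors_le_s10 {n e : ℕ} (hn : n ≠ 0) (h : n ≤ 2 ^ e) : n.primeFactors.card ≤ e := by
  have h1 : 2 ^ n.primeFactors.card ≤ n := by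
    calc 2 ^ n.primeFactors.card ≤ ∏ p ∈ n.primeFactors, p :=
          Finset.pow_card_le_prod _ _ _ fun p hp => (Nat.prime_of_mem_primeFactors hp).two_le
      _ ≤ n := Nat.le_of_dvd (Nat.pos_of_ne_zero hn) (Nat.prod_primeFactors_dvd n)
  exact (Nat.pow_le_pow_iff_right (by norm_num)).mp (h1.trans h)

/-- If `p` divides no determinant `det ((r i ^ 2) ^ y j)` with distinct exponents `y j < W`, then
among the `W` indices `a, a + 2, …, a + 2 (W - 1)` fewer than `k` give a value of `∑ b i * r i ^ m`
divisible by `p`. With `k` such indices, Cramer's rule gives `p ∣ det * (b i₀ * r i₀ ^ a)`. -/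
theorem card_window_lt {k : ℕ} (b r : Fin k → ℤ) (i₀ : Fin k) (p W a : ℕ) (hp : p.Prime)
    (hr : ¬ (p : ℤ) ∣ r i₀) (hb : ¬ (p : ℤ) ∣ b i₀)
    (hgood : ∀ y : Fin k → ℕ, Function.Injective y → (∀ j, y j < W) →
      ¬ (p : ℤ) ∣ (Matrix.of fun j i : Fin k => (r i ^ 2) ^ y j).det) :
    ((Finset.range W).filter fun j => (p : ℤ) ∣ ∑ i, b i * r i ^ (a + 2 * j)).card < k := by
  by_contra! hcon
  obtain ⟨T, hT, hTk⟩ := Finset.exists_subset_card_eq hcon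
  set y : Fin k → ℕ := fun j => T.orderEmbOfFin hTk j with hy
  have hyT : ∀ j, y j ∈ T := fun j => Finset.orderEmbOfFin_mem T hTk j
  have hyinj : Function.Injective y := (T.orderEmbOfFin hTk).injective
  have hpZ : Prime (p : ℤ) := Nat.prime_iff_prime_int.mp hp
  set M : Matrix (Fin k) (Fin k) ℤ := Matrix.of fun j i : Fin k => (r i ^ 2) ^ y j with hM
  set w : Fin k → ℤ := fun i => b i * r i ^ a with hw
  have hMw : ∀ j, (p : ℤ) ∣ (M.mulVec w) j := by
    intro j
    have h1 := (Finset.mem_filter.mp (hT (hyT j))).2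
    convert h1 using 1
    simp only [Matrix.mulVec, dotProduct, hM, hw, Matrix.of_apply]
    refine Finset.sum_congr rfl fun i _ => ?_
    rw [pow_add, pow_mul]; ring
  have hadj : M.adjugate.mulVec (M.mulVec w) = M.det • w := by
    rw [Matrix.mulVec_mulVec, Matrix.adjugate_mul, Matrix.smul_mulVec, Matrix.one_mulVec]
  have h2 : (p : ℤ) ∣ M.det * w i₀ := by
    have := congrFun hadj i₀
    simp only [Pi.smul_apply, smul_eq_mul] at this
    rw [← this]
    change (p : ℤ) ∣ ∑ j, M.adjugate i₀ j * (M.mulVec w) j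
    exact Finset.dvd_sum fun j _ => (hMw j).mul_left _
  rcases hpZ.dvd_or_dvd h2 with h | h
  · exact hgood y hyinj (fun j => Finset.mem_range.mp (Finset.mem_filter.mp (hT (hyT j))).1) h
  · rcases hpZ.dvd_or_dvd h with h | h
    · exact hb h
    · exact hr (hpZ.dvd_of_dvd_pow h)

/-- Cutting `[1, X]` into blocks of `W` consecutive integers of equal parity and applying
`card_window_lt` to each block. -/
theorem card_zeros_mod_le {k : ℕ} (b r : Fin k → ℤ) (i₀ : Fin k) (p W X : ℕ) (hp : p.Prime)
    (hW : 0 < W) (hr : ¬ (p : ℤ) ∣ r i₀) (hb : ¬ (p : ℤ) ∣ b i₀)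
    (hgood : ∀ y : Fin k → ℕ, Function.Injective y → (∀ j, y j < W) →
      ¬ (p : ℤ) ∣ (Matrix.of fun j i : Fin k => (r i ^ 2) ^ y j).det) :
    ((Finset.Icc 1 X).filter fun m => (p : ℤ) ∣ ∑ i, b i * r i ^ m).card ≤
      k * (2 * (X / W + 1)) := by
  set S := (Finset.Icc 1 X).filter fun m => (p : ℤ) ∣ ∑ i, b i * r i ^ m with hS
  have key := Finset.card_le_mul_card_image_of_maps_to (s := S)
    (t := Finset.range 2 ×ˢ Finset.range (X / W + 1)) (f := fun m => (m % 2, m / 2 / W)) ?_ k ?_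
  · simpa using key
  · intro m hm
    have h1 := (Finset.mem_Icc.mp (Finset.mem_filter.mp hm).1).2
    simp only [Finset.mem_product, Finset.mem_range]
    refine ⟨Nat.mod_lt _ (by norm_num), Nat.lt_succ_of_le (Nat.div_le_div_right ?_)⟩
    omega
  · rintro ⟨e, q⟩ -
    refine le_trans ?_ (card_window_lt b r i₀ p W (e + 2 * (q * W)) hp hr hb hgood).le
    refine Finset.card_le_card_of_injOn (fun m => m / 2 % W) ?_ ?_
    · intro m hm
      simp only [Finset.coe_filter, Set.mem_ofPred_eq, Prod.mk.injEq] at hm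
      obtain ⟨hm, he, hq⟩ := hm
      simp only [Finset.coe_filter, Set.mem_ofPred_eq, Finset.mem_range]
      refine ⟨Nat.mod_lt _ hW, ?_⟩
      have h1 := Nat.div_add_mod (m / 2) W
      have h2 : e + 2 * (q * W) + 2 * (m / 2 % W) = m := by
        rw [hq, mul_comm W q] at h1; omega
      rw [h2]
      exact (Finset.mem_filter.mp hm).2
    · intro m hm m' hm' h
      simp only [Finset.coe_filter, Set.mem_ofPred_eq, Prod.mk.injEq] at hm hm'
      have h1 := Nat.div_add_mod (m / 2) W
      have h2 := Nat.div_add_mod (m' / 2) W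
      simp only at h
      rw [hm.2.2] at h1
      rw [hm'.2.2] at h2
      omega

/-! ### Power sum representation and bad primes -/

theorem root_pow_eq {k : ℕ} {a : Fin k → ℤ} {t : ℤ} (ht : (charPoly k a).eval t = 0) :
    t ^ k = ∑ i : Fin k, a i * t ^ (k - 1 - (i : ℕ)) := by
  simpa [charPoly, eval_finsetSum, sub_eq_zero] using ht

theorem eval_root_eq_zero {k : ℕ} {a : Fin k → ℤ} {r : Fin k → ℤ}
    (hf : charPoly k a = ∏ i : Fin k, (X - C (r i))) (i : Fin k) :
    (charPoly k a).eval (r i) = 0 := by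
  rw [hf, eval_prod]
  exact Finset.prod_eq_zero (Finset.mem_univ i) (by simp)

/-- A nonzero multiple of `u` is an integer combination of the powers of the roots. The multiplier
`D` is the Vandermonde determinant, which clears the denominators of the coefficients. -/
theorem exists_repr {k : ℕ} {a : Fin k → ℤ} {u : ℕ → ℤ} (hu : IsLinRec k a u) {r : Fin k → ℤ}
    (hinj : Function.Injective r) (hf : charPoly k a = ∏ i : Fin k, (X - C (r i))) :
    ∃ (D : ℤ) (b : Fin k → ℤ), D ≠ 0 ∧ ∀ n, D * u n = ∑ i, b i * r i ^ n := by
  set V := (Matrix.vandermonde r).transpose with hV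
  set b := V.adjugate.mulVec (fun j : Fin k => u j) with hb
  have hVb : V.mulVec b = V.det • (fun j : Fin k => u j) := by
    rw [hb, Matrix.mulVec_mulVec, Matrix.mul_adjugate, Matrix.smul_mulVec, Matrix.one_mulVec]
  refine ⟨V.det, b, ?_, ?_⟩
  · rw [hV, Matrix.det_transpose]
    exact Matrix.det_vandermonde_ne_zero_iff.mpr hinj
  · intro n
    induction n using Nat.strong_induction_on with
    | _ n ih =>
      by_cases hn : n < k
      · have := congrFun hVb ⟨n, hn⟩
        simp only [Pi.smul_apply, smul_eq_mul] at this
        rw [← this]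
        change ∑ i, r i ^ n * b i = _
        exact Finset.sum_congr rfl fun i _ => mul_comm _ _
      · obtain ⟨m, rfl⟩ := Nat.exists_eq_add_of_le' (not_lt.mp hn)
        rw [hu m, Finset.mul_sum]
        have h1 : ∀ j : Fin k, V.det * (a j * u (m + k - 1 - j)) =
            ∑ i, b i * (r i ^ m * (a j * r i ^ (k - 1 - (j : ℕ)))) := by
          intro j
          have hj := j.2
          rw [mul_left_comm, ih _ (by omega), Finset.mul_sum]
          refine Finset.sum_congr rfl fun i _ => ?_
          rw [show m + k - 1 - (j : ℕ) = m + (k - 1 - j) by omega, pow_add]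
          ring
        rw [Finset.sum_congr rfl fun j _ => h1 j, Finset.sum_comm]
        refine Finset.sum_congr rfl fun i _ => ?_
        rw [← Finset.mul_sum, ← Finset.mul_sum, ← root_pow_eq (eval_root_eq_zero hf i), pow_add]

theorem root_ne_zero {k : ℕ} {a : Fin k → ℤ} {l : Fin k} (hl : (l : ℕ) = k - 1)
    (ha : a l ≠ 0)
    {t : ℤ} (ht : (charPoly k a).eval t = 0) : t ≠ 0 := by
  rintro rfl
  have h := root_pow_eq ht
  have hk := l.2
  rw [Finset.sum_eq_single l] at h
  · simp [show k ≠ 0 by omega, hl] at h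
    exact ha h.symm
  · intro j _ hj
    have : k - 1 - (j : ℕ) ≠ 0 := by
      have h1 := j.2
      have h2 : (j : ℕ) ≠ k - 1 := fun h => hj (Fin.ext (h.trans hl.symm))
      omega
    simp [this]
  · simp

/-- By nondegeneracy no two distinct roots are opposite, since `(r / -r) ^ 2 = 1`. -/
theorem sq_injective {k : ℕ} {a : Fin k → ℤ} {l : Fin k} (hl : (l : ℕ) = k - 1)
    (ha : a l ≠ 0)
    {r : Fin k → ℤ} (hinj : Function.Injective r)
    (hf : charPoly k a = ∏ i : Fin k, (X - C (r i))) (hnd : Nondegen k a) :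
    Function.Injective fun i => r i ^ 2 := by
  intro i j hij
  rcases sq_eq_sq_iff_eq_or_eq_neg.mp hij with h | h
  · exact hinj h
  · exfalso
    have h0 := root_ne_zero hl ha (eval_root_eq_zero hf j)
    have hmem : ∀ l, ((r l : ℤ) : ℂ) ∈ cRoots k a := by
      intro l
      have hne : (charPoly k a).map (Int.castRingHom ℂ) ≠ 0 := by
        rw [hf]
        exact ((monic_prod_of_monic _ _ fun i _ => monic_X_sub_C (r i)).map _).ne_zero
      rw [cRoots, mem_roots hne, IsRoot, eval_map, eval₂_at_intCast, Int.cast_id,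
        eval_root_eq_zero hf l]
      simp
    have h0' : ((r j : ℤ) : ℂ) ≠ 0 := by exact_mod_cast h0
    refine hnd _ (hmem i) _ (hmem j) ?_ 2 (by norm_num) ?_
    · intro h'
      have : r i = r j := by exact_mod_cast h'
      omega
    · rw [h, Int.cast_neg, neg_div, div_self h0']; norm_num

/-- Fermat's little theorem: the terms of index `p * m` and `m` are congruent modulo `p`. -/
theorem dvd_of_dvd_prime_mul {k : ℕ} (b r : Fin k → ℤ) {p m : ℕ} (hp : p.Prime)
    (h : (p : ℤ) ∣ ∑ i, b i * r i ^ (p * m)) : (p : ℤ) ∣ ∑ i, b i * r i ^ m := by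
  have := Fact.mk hp
  rw [← ZMod.intCast_zmod_eq_zero_iff_dvd] at h ⊢
  rw [← h]
  push_cast
  refine Finset.sum_congr rfl fun i _ => ?_
  rw [mul_comm p m, pow_mul, ZMod.pow_card]

/-- The primes dividing some determinant `det ((r i ^ 2) ^ y j)` with distinct exponents `y j < W`.
A determinant equal to `0` would contribute no primes under this encoding; `det_pow_ne_zero` shows
that this does not happen when the `r i ^ 2` are distinct and nonzero. -/
noncomputable def badPrimes {k : ℕ} (r : Fin k → ℤ) (W : ℕ) : Finset ℕ :=
  ((Finset.univ : Finset (Fin k → Fin W)).filter Function.Injective).biUnion fun y =>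
    (Matrix.of fun j i : Fin k => (r i ^ 2) ^ (y j : ℕ)).det.natAbs.primeFactors

theorem not_dvd_of_notMem_badPrimes {k : ℕ} {r : Fin k → ℤ}
    (hinj : Function.Injective fun i => r i ^ 2) (hr : ∀ i, r i ≠ 0) {W p : ℕ} (hp : p.Prime)
    (hbad : p ∉ badPrimes r W) (y : Fin k → ℕ) (hy : Function.Injective y) (hyW : ∀ j, y j < W) :
    ¬ (p : ℤ) ∣ (Matrix.of fun j i : Fin k => (r i ^ 2) ^ y j).det := by
  intro h
  apply hbad
  rw [badPrimes, Finset.mem_biUnion]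
  refine ⟨fun j => ⟨y j, hyW j⟩, ?_, ?_⟩
  · simp only [Finset.mem_filter, Finset.mem_univ, true_and]
    intro i j hij
    exact hy (by simpa using hij)
  · rw [Nat.mem_primeFactors]
    refine ⟨hp, Int.natCast_dvd.mp h, ?_⟩
    rw [Int.natAbs_ne_zero]
    exact det_pow_ne_zero _ hinj (fun i => by have := hr i; positivity) y hy

/-- There are at most `W ^ k` determinants, and each is at most `2 ^ O(W)` in absolute value, so it
has `O(W)` prime factors. -/
theorem card_badPrimes_le {k : ℕ} {r : Fin k → ℤ}
    (hinj : Function.Injective fun i => r i ^ 2) (hr : ∀ i, r i ≠ 0) (R : ℕ)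
    (hR : ∀ i, |r i| ≤ R) {W : ℕ} (hW : 0 < W) :
    (badPrimes r W).card ≤ (k.factorial + 2 * k * R) * W ^ (k + 1) := by
  have h1 : ∀ y ∈ ((Finset.univ : Finset (Fin k → Fin W)).filter Function.Injective),
      (Matrix.of fun j i : Fin k => (r i ^ 2) ^ (y j : ℕ)).det.natAbs.primeFactors.card ≤
        (k.factorial + 2 * k * R) * W := by
    intro y hy
    have hy' : Function.Injective y := (Finset.mem_filter.mp hy).2
    have hne : (Matrix.of fun j i : Fin k => (r i ^ 2) ^ (y j : ℕ)).det ≠ 0 :=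
      det_pow_ne_zero _ hinj (fun i => by have := hr i; positivity) (fun j => (y j : ℕ))
        (Fin.val_injective.comp hy')
    refine card_primeFactors_le_s10 (Int.natAbs_ne_zero.mpr hne) ?_
    have hent : ∀ j i : Fin k, AbsoluteValue.abs
        ((Matrix.of fun j i : Fin k => (r i ^ 2) ^ (y j : ℕ)) j i) ≤ (2 : ℤ) ^ (2 * R * W) := by
      intro j i
      simp only [Matrix.of_apply, AbsoluteValue.abs_apply, abs_pow]
      have h2 : |r i| ≤ 2 ^ R := (hR i).trans (by exact_mod_cast Nat.lt_two_pow_self.le)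
      calc (|r i| ^ 2) ^ (y j : ℕ) ≤ (((2 : ℤ) ^ R) ^ 2) ^ (y j : ℕ) := by gcongr
        _ = (2 : ℤ) ^ (2 * R * (y j : ℕ)) := by rw [← pow_mul, ← pow_mul]; ring_nf
        _ ≤ _ := by
          apply pow_le_pow_right₀ (by norm_num)
          exact Nat.mul_le_mul_left _ (y j).2.le
    have hdet := Matrix.det_le hent
    simp only [AbsoluteValue.abs_apply, Fintype.card_fin, nsmul_eq_mul] at hdet
    zify
    calc _ ≤ _ := hdet
      _ ≤ (2 : ℤ) ^ (k.factorial * W) * (2 ^ (2 * R * W)) ^ k := by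
        gcongr
        have : k.factorial ≤ 2 ^ (k.factorial * W) :=
          Nat.lt_two_pow_self.le.trans (Nat.pow_le_pow_right (by norm_num)
            (Nat.le_mul_of_pos_right _ hW))
        exact_mod_cast this
      _ = _ := by rw [← pow_mul, ← pow_add]; ring_nf
  have h2 := Finset.card_biUnion_le_card_mul _ _ _ h1
  have h3 : ((Finset.univ : Finset (Fin k → Fin W)).filter Function.Injective).card ≤ W ^ k := by
    refine (Finset.card_filter_le _ _).trans ?_
    simp
  calc _ ≤ _ := h2
    _ ≤ W ^ k * ((k.factorial + 2 * k * R) * W) := Nat.mul_le_mul_right _ h3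
    _ = _ := by ring

/-- A nonzero term `∑ b i * r i ^ m` is at most `2 ^ O(m)` in absolute value, so it has `O(m)`
prime factors. -/
theorem card_primeFactors_term_le {k : ℕ} (b r : Fin k → ℤ) (R B : ℕ)
    (hR : ∀ i, |r i| ≤ R) (hB : ∀ i, |b i| ≤ B) {m : ℕ} (hm : 0 < m)
    (hne : ∑ i, b i * r i ^ m ≠ 0) :
    (∑ i, b i * r i ^ m).natAbs.primeFactors.card ≤ (k * B + R) * m := by
  refine card_primeFactors_le_s10 (Int.natAbs_ne_zero.mpr hne) ?_
  zify
  calc |∑ i, b i * r i ^ m| ≤ ∑ i, |b i * r i ^ m| := Finset.abs_sum_le_sum_abs _ _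
    _ ≤ ∑ i : Fin k, (B : ℤ) * (2 ^ R) ^ m := by
      gcongr with i
      rw [abs_mul, abs_pow]
      have h2 : |r i| ≤ 2 ^ R := (hR i).trans (by exact_mod_cast Nat.lt_two_pow_self.le)
      have := hB i
      gcongr
    _ = (k * B : ℕ) * (2 : ℤ) ^ (R * m) := by
      rw [Finset.sum_const, Finset.card_univ, Fintype.card_fin, ← pow_mul]; push_cast; simp; ring
    _ ≤ (2 : ℤ) ^ (k * B * m) * (2 : ℤ) ^ (R * m) := by
      gcongr
      have : k * B ≤ 2 ^ (k * B * m) := Nat.lt_two_pow_self.le.trans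
        (Nat.pow_le_pow_right (by norm_num) (Nat.le_mul_of_pos_right _ hm))
      exact_mod_cast this
    _ = _ := by rw [← pow_add]; ring_nf

/-! ### Counting products of a large prime and its cofactor -/

theorem sum_inv_Icc_le (n : ℕ) {x : ℝ} (hx : 1 ≤ x) (hn : (n : ℝ) ≤ x) :
    ∑ i ∈ Finset.Icc 1 n, ((i : ℝ))⁻¹ ≤ 1 + Real.log x := by
  have h := harmonic_le_one_add_log n
  rw [harmonic_eq_sum_Icc] at h
  push_cast at h
  refine h.trans ?_
  rcases Nat.eq_zero_or_pos n with rfl | hpos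
  · simpa using Real.log_nonneg hx
  · have : (0 : ℝ) < n := by exact_mod_cast hpos
    gcongr

theorem not_dvd_of_abs_lt {t : ℤ} (ht : t ≠ 0) {p B : ℕ} (hB : |t| ≤ B) (hp : B < p) :
    ¬ (p : ℤ) ∣ t := by
  intro h
  have h1 := Int.le_of_dvd (abs_pos.mpr ht) ((dvd_abs _ _).mpr h)
  have : (B : ℤ) < p := by exact_mod_cast hp
  omega

open Classical in
/-- Bound for the number of `n = p * m ≤ x` with `p > y` prime dividing the nonzero integer
`∑ b i * r i ^ m`. The three summands correspond to `m ≤ z`, to bad `p`, and to good `p ≤ x / z`.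
The hypotheses `R ≤ y` and `B ≤ y` ensure that `p > y` divides neither `r i₀` nor `b i₀`. -/
theorem card_pairs_le {k : ℕ} {b r : Fin k → ℤ} (hinj : Function.Injective fun i => r i ^ 2)
    (hr : ∀ i, r i ≠ 0) {R B : ℕ} (hR : ∀ i, |r i| ≤ R) (hB : ∀ i, |b i| ≤ B)
    {i₀ : Fin k} (hb : b i₀ ≠ 0) {x y : ℝ} (hx : 1 ≤ x) (hy : 1 ≤ y) (hRy : R ≤ y) (hBy : B ≤ y)
    {W z : ℕ} (hW : 0 < W) (hz : 0 < z) :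
    (((Finset.Icc 1 ⌊x⌋₊).filter fun n : ℕ => ∃ p m : ℕ, p.Prime ∧ y < p ∧ n = p * m ∧
      ∑ i, b i * r i ^ m ≠ 0 ∧ (p : ℤ) ∣ ∑ i, b i * r i ^ m).card : ℝ) ≤
    (k * B + R) * (z : ℝ) ^ 2 + (k.factorial + 2 * k * R) * (W : ℝ) ^ (k + 1) * (x / y) +
      2 * k * (x / W * (1 + Real.log x) + x / z) := by
  have hx0 : 0 < x := by linarith
  have hy0 : 0 < y := by linarith
  have hz0 : (0 : ℝ) < z := by exact_mod_cast hz
  have hW0 : (0 : ℝ) < W := by exact_mod_cast hW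
  set v : ℕ → ℤ := fun m => ∑ i, b i * r i ^ m with hv
  -- `Q1`: `m ≤ z`; `Q2`: `p` bad; `Q3`: `p` good, where `m > z` forces `p ≤ x / z`.
  set Q1 : Finset ℕ := (Finset.Icc 1 z).biUnion fun m =>
    (v m).natAbs.primeFactors.image fun p => p * m with hQ1
  set Q2 : Finset ℕ := ((badPrimes r W).filter fun p : ℕ => y < p).biUnion fun p =>
    (Finset.Icc 1 ⌊x / p⌋₊).image fun m => p * m with hQ2
  set G : Finset ℕ := (Finset.Icc 1 ⌊x / z⌋₊).filter fun p : ℕ =>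
    p.Prime ∧ y < p ∧ p ∉ badPrimes r W with hG
  set Q3 : Finset ℕ := G.biUnion fun p =>
    ((Finset.Icc 1 ⌊x / p⌋₊).filter fun m => (p : ℤ) ∣ v m).image fun m => p * m with hQ3
  have hsub : ((Finset.Icc 1 ⌊x⌋₊).filter fun n : ℕ => ∃ p m : ℕ, p.Prime ∧ y < p ∧ n = p * m ∧
      v m ≠ 0 ∧ (p : ℤ) ∣ v m) ⊆ Q1 ∪ Q2 ∪ Q3 := by
    intro n hn
    obtain ⟨hn, p, m, hp, hyp, rfl, hvm, hpv⟩ := Finset.mem_filter.mp hn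
    rw [Finset.mem_Icc] at hn
    have hp0 : (0 : ℝ) < p := by exact_mod_cast hp.pos
    have hm : 1 ≤ m := Nat.pos_of_ne_zero (by rintro rfl; simp at hn)
    have hpm : (p : ℝ) * m ≤ x := by exact_mod_cast (Nat.le_floor_iff hx0.le).mp hn.2
    have hmx : m ≤ ⌊x / p⌋₊ := by
      rw [Nat.le_floor_iff (by positivity), le_div_iff₀ hp0]; linarith
    by_cases hmz : m ≤ z
    · refine Finset.mem_union_left _ (Finset.mem_union_left _ ?_)
      refine Finset.mem_biUnion.mpr ⟨m, Finset.mem_Icc.mpr ⟨hm, hmz⟩, ?_⟩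
      refine Finset.mem_image.mpr ⟨p, ?_, rfl⟩
      rw [Nat.mem_primeFactors]
      exact ⟨hp, Int.natCast_dvd.mp hpv, Int.natAbs_ne_zero.mpr hvm⟩
    by_cases hbad : p ∈ badPrimes r W
    · refine Finset.mem_union_left _ (Finset.mem_union_right _ ?_)
      refine Finset.mem_biUnion.mpr ⟨p, Finset.mem_filter.mpr ⟨hbad, hyp⟩, ?_⟩
      exact Finset.mem_image.mpr ⟨m, Finset.mem_Icc.mpr ⟨hm, hmx⟩, rfl⟩
    · refine Finset.mem_union_right _ (Finset.mem_biUnion.mpr ⟨p, ?_, ?_⟩)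
      · refine Finset.mem_filter.mpr ⟨Finset.mem_Icc.mpr ⟨hp.one_lt.le, ?_⟩, hp, hyp, hbad⟩
        rw [Nat.le_floor_iff (by positivity), le_div_iff₀ hz0]
        have : (z : ℝ) ≤ m := by exact_mod_cast (not_le.mp hmz).le
        nlinarith
      · exact Finset.mem_image.mpr
          ⟨m, Finset.mem_filter.mpr ⟨Finset.mem_Icc.mpr ⟨hm, hmx⟩, hpv⟩, rfl⟩
  have h1 : (Q1.card : ℝ) ≤ (k * B + R) * (z : ℝ) ^ 2 := by
    have : Q1.card ≤ (Finset.Icc 1 z).card * ((k * B + R) * z) := by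
      refine Finset.card_biUnion_le_card_mul _ _ _ fun m hm => Finset.card_image_le.trans ?_
      rw [Finset.mem_Icc] at hm
      by_cases hvm : v m = 0
      · simp [hvm]
      · exact (card_primeFactors_term_le b r R B hR hB hm.1 hvm).trans
          (Nat.mul_le_mul_left _ hm.2)
    rw [Nat.card_Icc, Nat.add_sub_cancel] at this
    calc (Q1.card : ℝ) ≤ ((z * ((k * B + R) * z) : ℕ) : ℝ) := by exact_mod_cast this
      _ = _ := by push_cast; ring
  have h2 : (Q2.card : ℝ) ≤ (k.factorial + 2 * k * R) * (W : ℝ) ^ (k + 1) * (x / y) := by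
    have : (Q2.card : ℝ) ≤ ∑ p ∈ (badPrimes r W).filter fun p : ℕ => y < p, x / y := by
      refine (Nat.cast_le.mpr Finset.card_biUnion_le).trans ?_
      push_cast
      refine Finset.sum_le_sum fun p hp => ?_
      have hyp := (Finset.mem_filter.mp hp).2
      have hp0 : 0 < (p : ℝ) := hy0.trans hyp
      calc _ ≤ (((Finset.Icc 1 ⌊x / p⌋₊).card : ℕ) : ℝ) := Nat.cast_le.mpr Finset.card_image_le
        _ = (⌊x / p⌋₊ : ℝ) := by simp
        _ ≤ x / p := Nat.floor_le (by positivity)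
        _ ≤ x / y := by gcongr
    refine this.trans ?_
    rw [Finset.sum_const, nsmul_eq_mul]
    gcongr
    calc _ ≤ ((badPrimes r W).card : ℝ) := Nat.cast_le.mpr (Finset.card_filter_le _ _)
      _ ≤ (((k.factorial + 2 * k * R) * W ^ (k + 1) : ℕ) : ℝ) :=
        Nat.cast_le.mpr (card_badPrimes_le hinj hr R hR hW)
      _ = _ := by push_cast; ring
  have h3 : (Q3.card : ℝ) ≤ 2 * k * (x / W * (1 + Real.log x) + x / z) := by
    have hterm : ∀ p ∈ G, (((((Finset.Icc 1 ⌊x / p⌋₊).filter fun m => (p : ℤ) ∣ v m).image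
        fun m => p * m).card : ℕ) : ℝ) ≤ 2 * k * (x / W * (p : ℝ)⁻¹ + 1) := by
      intro p hp
      obtain ⟨-, hpp, hyp, hbad⟩ := Finset.mem_filter.mp hp
      have hp0 : 0 < (p : ℝ) := hy0.trans hyp
      have hlt : ∀ C : ℕ, (C : ℝ) ≤ y → C < p := fun C hC => by exact_mod_cast hC.trans_lt hyp
      have hc := card_zeros_mod_le b r i₀ p W ⌊x / p⌋₊ hpp hW
        (not_dvd_of_abs_lt (hr i₀) (hR i₀) (hlt R hRy)) (not_dvd_of_abs_lt hb (hB i₀) (hlt B hBy))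
        (not_dvd_of_notMem_badPrimes hinj hr hpp hbad)
      calc _ ≤ ((((Finset.Icc 1 ⌊x / p⌋₊).filter fun m => (p : ℤ) ∣ v m).card : ℕ) : ℝ) :=
            Nat.cast_le.mpr Finset.card_image_le
        _ ≤ ((k * (2 * (⌊x / p⌋₊ / W + 1)) : ℕ) : ℝ) := Nat.cast_le.mpr hc
        _ = 2 * k * (((⌊x / p⌋₊ / W : ℕ) : ℝ) + 1) := by push_cast; ring
        _ ≤ 2 * k * (x / p / W + 1) := by
          gcongr
          refine Nat.cast_div_le.trans ?_
          gcongr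
          exact Nat.floor_le (by positivity)
        _ = _ := by field_simp
    have hGsub : G ⊆ Finset.Icc 1 ⌊x / z⌋₊ := Finset.filter_subset _ _
    have hfl : (⌊x / z⌋₊ : ℝ) ≤ x / z := Nat.floor_le (by positivity)
    calc (Q3.card : ℝ) ≤ ∑ p ∈ G, (((((Finset.Icc 1 ⌊x / p⌋₊).filter
            fun m => (p : ℤ) ∣ v m).image fun m => p * m).card : ℕ) : ℝ) := by
          exact_mod_cast Finset.card_biUnion_le
      _ ≤ ∑ p ∈ G, 2 * k * (x / W * (p : ℝ)⁻¹ + 1) := Finset.sum_le_sum hterm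
      _ ≤ ∑ p ∈ Finset.Icc 1 ⌊x / z⌋₊, 2 * k * (x / W * (p : ℝ)⁻¹ + 1) :=
          Finset.sum_le_sum_of_subset_of_nonneg hGsub fun p _ _ => by positivity
      _ = 2 * k * (x / W * ∑ p ∈ Finset.Icc 1 ⌊x / z⌋₊, (p : ℝ)⁻¹ + ⌊x / z⌋₊) := by
          rw [← Finset.mul_sum, Finset.sum_add_distrib, ← Finset.mul_sum]
          simp
      _ ≤ _ := by
          gcongr
          refine sum_inv_Icc_le _ hx (hfl.trans ?_)
          exact div_le_self hx0.le (by exact_mod_cast hz)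
  calc _ ≤ ((Q1 ∪ Q2 ∪ Q3).card : ℝ) := Nat.cast_le.mpr (Finset.card_le_card hsub)
    _ ≤ (Q1.card : ℝ) + Q2.card + Q3.card := by
      exact_mod_cast (Finset.card_union_le _ _).trans
        (Nat.add_le_add_right (Finset.card_union_le _ _) _)
    _ ≤ _ := by linarith

/-! ### Smooth numbers by Rankin's method -/

/-- The primes in `[2 ^ (j + 1), 2 ^ (j + 2))` have product at most `4 ^ (2 ^ (j + 2))`, by the
primorial bound, which limits their number. -/
theorem sum_inv_primes_dyadic_le (j : ℕ) :
    ∑ p ∈ (Finset.range (2 ^ (j + 2))).filter (fun p => p.Prime ∧ 2 ^ (j + 1) ≤ p), ((p : ℝ))⁻¹ ≤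
      4 * ((j : ℝ) + 1)⁻¹ := by
  set A := (Finset.range (2 ^ (j + 2))).filter (fun p => p.Prime ∧ 2 ^ (j + 1) ≤ p) with hA
  have h1 : (2 ^ (j + 1)) ^ A.card ≤ 2 ^ (2 * 2 ^ (j + 2)) := by
    calc (2 ^ (j + 1)) ^ A.card ≤ ∏ p ∈ A, p :=
          Finset.pow_card_le_prod _ _ _ fun p hp => (Finset.mem_filter.mp hp).2.2
      _ ≤ primorial (2 ^ (j + 2)) := by
          refine Finset.prod_le_prod_of_subset_of_one_le' ?_ ?_
          · intro p hp
            have := Finset.mem_filter.mp hp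
            rw [Finset.mem_range] at this
            simp only [Finset.mem_filter, Finset.mem_range]
            exact ⟨by omega, this.2.1⟩
          · intro p hp _
            simp only [Finset.mem_filter] at hp
            exact hp.2.one_lt.le
      _ ≤ 4 ^ (2 ^ (j + 2)) := primorial_le_four_pow _
      _ = _ := by rw [pow_mul]; norm_num
  rw [← pow_mul] at h1
  have h2 : (j + 1) * A.card ≤ 2 * 2 ^ (j + 2) := (Nat.pow_le_pow_iff_right (by norm_num)).mp h1
  have h3 : ((j : ℝ) + 1) * A.card ≤ 4 * 2 ^ (j + 1) := by
    have : (((j + 1) * A.card : ℕ) : ℝ) ≤ ((2 * 2 ^ (j + 2) : ℕ) : ℝ) := Nat.cast_le.mpr h2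
    push_cast at this
    refine this.trans (le_of_eq ?_)
    ring
  calc ∑ p ∈ A, ((p : ℝ))⁻¹ ≤ ∑ p ∈ A, ((2 : ℝ) ^ (j + 1))⁻¹ := by
        refine Finset.sum_le_sum fun p hp => ?_
        have : (2 : ℝ) ^ (j + 1) ≤ p := by exact_mod_cast (Finset.mem_filter.mp hp).2.2
        gcongr
    _ = A.card / (2 : ℝ) ^ (j + 1) := by rw [Finset.sum_const, nsmul_eq_mul, div_eq_mul_inv]
    _ ≤ _ := by
        rw [← div_eq_mul_inv, div_le_div_iff₀ (by positivity) (by positivity)]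
        linarith

/-- A weak form of Mertens' theorem: `harmonic J` is about `log J`, so this bounds
`∑_{p < t} 1 / p` by `O(log log t)`. -/
theorem sum_inv_primesBelow_le (J : ℕ) :
    ∑ p ∈ Nat.primesBelow (2 ^ (J + 1)), ((p : ℝ))⁻¹ ≤ 4 * (harmonic J : ℝ) := by
  induction J with
  | zero => simp
  | succ J ih =>
    have hsplit : Nat.primesBelow (2 ^ (J + 1 + 1)) = Nat.primesBelow (2 ^ (J + 1)) ∪
        (Finset.range (2 ^ (J + 2))).filter (fun p => p.Prime ∧ 2 ^ (J + 1) ≤ p) := by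
      ext p
      have : 2 ^ (J + 1) ≤ 2 ^ (J + 2) := Nat.pow_le_pow_right (by norm_num) (by omega)
      simp only [Nat.mem_primesBelow, Finset.mem_union, Finset.mem_filter, Finset.mem_range]
      constructor
      · rintro ⟨h1, h2⟩
        by_cases h : p < 2 ^ (J + 1)
        · exact Or.inl ⟨h, h2⟩
        · exact Or.inr ⟨h1, h2, not_lt.mp h⟩
      · rintro (⟨h1, h2⟩ | ⟨h1, h2, -⟩)
        · exact ⟨h1.trans_le this, h2⟩
        · exact ⟨h1, h2⟩
    rw [hsplit, Finset.sum_union, harmonic_succ]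
    · have := sum_inv_primes_dyadic_le J
      push_cast
      linarith
    · rw [Finset.disjoint_left]
      intro p h1 h2
      have h1 := (Nat.mem_primesBelow.mp h1).1
      have h2 := (Finset.mem_filter.mp h2).2.2
      omega

/-- The completely multiplicative function `n ↦ n ^ (-σ)`. -/
noncomputable def rpowHom (σ : ℝ) : ℕ →* ℝ where
  toFun n := (n : ℝ) ^ (-σ)
  map_one' := by simp
  map_mul' m n := by
    push_cast
    exact Real.mul_rpow (Nat.cast_nonneg _) (Nat.cast_nonneg _)

theorem rpowHom_apply (σ : ℝ) (n : ℕ) : rpowHom σ n = (n : ℝ) ^ (-σ) := rfl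

theorem prime_rpow_le {σ : ℝ} (hσ : 1 / 2 ≤ σ) {p : ℕ} (hp : p.Prime) :
    (p : ℝ) ^ (-σ) ≤ 3 / 4 := by
  have h2 : (2 : ℝ) ≤ p := by exact_mod_cast hp.two_le
  calc (p : ℝ) ^ (-σ) ≤ (p : ℝ) ^ (-(1 / 2 : ℝ)) :=
        Real.rpow_le_rpow_of_exponent_le (by linarith) (by linarith)
    _ ≤ (2 : ℝ) ^ (-(1 / 2 : ℝ)) :=
        Real.rpow_le_rpow_of_nonpos (by norm_num) h2 (by norm_num)
    _ = (√2)⁻¹ := by rw [Real.rpow_neg (by norm_num), Real.sqrt_eq_rpow]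
    _ ≤ 3 / 4 := by
        rw [inv_le_comm₀ (by positivity) (by norm_num)]
        exact Real.le_sqrt_of_sq_le (by norm_num)

theorem inv_one_sub_le_exp {t : ℝ} (ht0 : 0 ≤ t) (ht : t ≤ 3 / 4) :
    (1 - t)⁻¹ ≤ Real.exp (4 * t) := by
  have h1 : (1 - t)⁻¹ ≤ 4 * t + 1 := by
    rw [inv_le_iff_one_le_mul₀ (by linarith)]
    nlinarith
  exact h1.trans (Real.add_one_le_exp _)

open Classical in
/-- Rankin's bound for `y`-smooth numbers: with `σ = 1 - η`, each `n ≤ x` is counted with weight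
`(x / n) ^ σ ≥ 1`, and the weighted sum is at most `x ^ σ` times the Euler product
`∏_{p ≤ y} (1 - p ^ (-σ))⁻¹`, where `p ^ (-σ) ≤ y ^ η / p`. -/
theorem card_smooth_le {x y η : ℝ} (hx : 1 ≤ x) (hy : 1 ≤ y) (hη : 0 ≤ η) (hη' : η ≤ 1 / 2)
    {J : ℕ} (hJ : y < 2 ^ (J + 1)) :
    (((Finset.Icc 1 ⌊x⌋₊).filter fun n : ℕ => ∀ p : ℕ, p.Prime → p ∣ n → (p : ℝ) ≤ y).card : ℝ) ≤
      x ^ (1 - η) * Real.exp (4 * (y ^ η * (4 * (1 + Real.log J)))) := by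
  have hx0 : 0 < x := by linarith
  have hy0 : 0 < y := by linarith
  set σ := 1 - η with hσ
  have hσ' : 1 / 2 ≤ σ := by linarith
  set N := ⌊y⌋₊ + 1 with hN
  set T := (Finset.Icc 1 ⌊x⌋₊).filter fun n : ℕ => ∀ p : ℕ, p.Prime → p ∣ n → (p : ℝ) ≤ y with hT
  have hTs : ∀ n ∈ T, n ∈ N.smoothNumbers := by
    intro n hn
    rw [Nat.mem_smoothNumbers']
    intro p hp hpn
    exact Nat.lt_succ_of_le (Nat.le_floor ((Finset.mem_filter.mp hn).2 p hp hpn))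
  have hnorm : ∀ {p : ℕ}, p.Prime → ‖rpowHom σ p‖ < 1 := by
    intro p hp
    rw [rpowHom_apply, Real.norm_of_nonneg (by positivity)]
    linarith [prime_rpow_le hσ' hp]
  have hsum := (EulerProduct.summable_and_hasSum_smoothNumbers_prod_primesBelow_geometric
    hnorm N).2
  have hsum' : HasSum (N.smoothNumbers.indicator (rpowHom σ))
      (∏ p ∈ N.primesBelow, (1 - rpowHom σ p)⁻¹) := hasSum_subtype_iff_indicator.mp hsum
  have h1 : ∑ n ∈ T, (n : ℝ) ^ (-σ) ≤ ∏ p ∈ N.primesBelow, (1 - (p : ℝ) ^ (-σ))⁻¹ := by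
    have hnn : ∀ n, 0 ≤ N.smoothNumbers.indicator (rpowHom σ) n :=
      Set.indicator_nonneg fun m _ => by rw [rpowHom_apply]; positivity
    have := sum_le_hasSum T (fun n _ => hnn n) hsum'
    simp only [rpowHom_apply] at this
    refine le_trans (le_of_eq ?_) this
    refine Finset.sum_congr rfl fun n hn => ?_
    rw [Set.indicator_of_mem (hTs n hn), rpowHom_apply]
  have h2 : ∏ p ∈ N.primesBelow, (1 - (p : ℝ) ^ (-σ))⁻¹ ≤
      Real.exp (4 * (y ^ η * (4 * (1 + Real.log J)))) := by
    calc _ ≤ ∏ p ∈ N.primesBelow, Real.exp (4 * (p : ℝ) ^ (-σ)) := by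
          refine Finset.prod_le_prod (fun p hp => ?_) fun p hp => ?_
          · have := prime_rpow_le hσ' (Nat.mem_primesBelow.mp hp).2
            rw [inv_nonneg]; linarith
          · exact inv_one_sub_le_exp (by positivity)
              (prime_rpow_le hσ' (Nat.mem_primesBelow.mp hp).2)
      _ = Real.exp (4 * ∑ p ∈ N.primesBelow, (p : ℝ) ^ (-σ)) := by
          rw [← Real.exp_sum, Finset.mul_sum]
      _ ≤ _ := by
          gcongr
          calc ∑ p ∈ N.primesBelow, (p : ℝ) ^ (-σ) ≤ ∑ p ∈ N.primesBelow, y ^ η * (p : ℝ)⁻¹ := by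
                refine Finset.sum_le_sum fun p hp => ?_
                obtain ⟨hpN, hp⟩ := Nat.mem_primesBelow.mp hp
                have hp0 : (0 : ℝ) < p := by exact_mod_cast hp.pos
                have hpy : (p : ℝ) ≤ y := (Nat.le_floor_iff hy0.le).mp (Nat.le_of_lt_succ hpN)
                rw [show -σ = η + (-1) by rw [hσ]; ring, Real.rpow_add hp0, Real.rpow_neg_one]
                gcongr
            _ = y ^ η * ∑ p ∈ N.primesBelow, (p : ℝ)⁻¹ := by rw [Finset.mul_sum]
            _ ≤ y ^ η * (4 * (1 + Real.log J)) := by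
                gcongr
                calc _ ≤ ∑ p ∈ Nat.primesBelow (2 ^ (J + 1)), (p : ℝ)⁻¹ := by
                      refine Finset.sum_le_sum_of_subset_of_nonneg ?_ fun p _ _ => by positivity
                      intro p hp
                      rw [Nat.mem_primesBelow] at hp ⊢
                      refine ⟨hp.1.trans_le ?_, hp.2⟩
                      have : ⌊y⌋₊ < 2 ^ (J + 1) := by
                        rw [Nat.floor_lt hy0.le]; exact_mod_cast hJ
                      omega
                  _ ≤ 4 * (harmonic J : ℝ) := sum_inv_primesBelow_le J
                  _ ≤ _ := by gcongr; exact harmonic_le_one_add_log J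
  calc (T.card : ℝ) = ∑ n ∈ T, (1 : ℝ) := by simp
    _ ≤ ∑ n ∈ T, x ^ σ * (n : ℝ) ^ (-σ) := by
      refine Finset.sum_le_sum fun n hn => ?_
      have hn := Finset.mem_Icc.mp (Finset.mem_filter.mp hn).1
      have hn0 : (0 : ℝ) < n := by exact_mod_cast hn.1
      have hnx : (n : ℝ) ≤ x := (Nat.le_floor_iff hx0.le).mp hn.2
      rw [Real.rpow_neg hn0.le, ← div_eq_mul_inv, one_le_div (by positivity)]
      exact Real.rpow_le_rpow hn0.le hnx (by linarith)
    _ = x ^ σ * ∑ n ∈ T, (n : ℝ) ^ (-σ) := by rw [Finset.mul_sum]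
    _ ≤ _ := by
      gcongr
      exact h1.trans h2

/-! ### Asymptotics of `L(x)` -/

open Filter Topology in
theorem eventually_log_params : ∀ᶠ x : ℝ in atTop, 1 ≤ Real.log (Real.log x) ∧ 1 ≤ Real.log x ∧
    1 ≤ x := by
  have h1 : Tendsto (fun x => Real.log (Real.log x)) atTop atTop :=
    Real.tendsto_log_atTop.comp Real.tendsto_log_atTop
  filter_upwards [h1.eventually_ge_atTop 1, Real.tendsto_log_atTop.eventually_ge_atTop 1,
    eventually_ge_atTop 1] with x h1 h2 h3 using ⟨h1, h2, h3⟩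

open Filter Topology in
theorem tendsto_Lfun : Tendsto Lfun atTop atTop := by
  refine Real.tendsto_exp_atTop.comp (Real.tendsto_sqrt_atTop.comp ?_)
  exact Real.tendsto_log_atTop.atTop_mul_atTop₀
    (Real.tendsto_log_atTop.comp Real.tendsto_log_atTop)

open Filter Topology in
theorem eventually_loglog_le (δ : ℝ) (hδ : 0 < δ) :
    ∀ᶠ x : ℝ in atTop, Real.log (Real.log x) ≤ δ * Real.log x := by
  have h := (Real.isLittleO_log_id_atTop.comp_tendsto Real.tendsto_log_atTop).bound hδ
  filter_upwards [h, eventually_log_params] with x h hx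
  simp only [Function.comp, id, Real.norm_eq_abs] at h
  rwa [abs_of_nonneg (by linarith), abs_of_nonneg (by linarith)] at h

open Filter Topology in
theorem eventually_Lfun_rpow_le (A : ℝ) (hA : 0 < A) : ∀ᶠ x : ℝ in atTop, Lfun x ^ A ≤ x := by
  filter_upwards [eventually_loglog_le (1 / A ^ 2) (by positivity), eventually_log_params]
    with x h ⟨h1, h2, h3⟩
  have hs : √(Real.log x * Real.log (Real.log x)) ≤ Real.log x / A := by
    apply Real.sqrt_le_iff.mpr
    refine ⟨by positivity, ?_⟩
    calc _ ≤ Real.log x * (1 / A ^ 2 * Real.log x) := by gcongr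
      _ = _ := by ring
  rw [Lfun, ← Real.exp_mul]
  calc _ ≤ Real.exp (Real.log x / A * A) := by gcongr
    _ = x := by rw [div_mul_cancel₀ _ hA.ne', Real.exp_log (by linarith)]

open Filter Topology in
theorem eventually_log_le_Lfun (ε : ℝ) (hε : 0 < ε) :
    ∀ᶠ x : ℝ in atTop, 1 + Real.log x ≤ Lfun x ^ ε := by
  filter_upwards [eventually_loglog_le (ε ^ 2 / 4) (by positivity), eventually_log_params]
    with x h ⟨h1, h2, h3⟩
  have hs : 2 / ε * Real.log (Real.log x) ≤ √(Real.log x * Real.log (Real.log x)) := by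
    apply Real.le_sqrt_of_sq_le
    have : (2 / ε * Real.log (Real.log x)) ^ 2 =
      (4 / ε ^ 2 * Real.log (Real.log x)) * Real.log (Real.log x) := by ring
    rw [this]
    gcongr
    calc _ ≤ 4 / ε ^ 2 * (ε ^ 2 / 4 * Real.log x) := by gcongr
      _ = _ := by field_simp
  rw [Lfun, ← Real.exp_mul]
  have h2 : 2 ≤ Real.log x := by
    rw [← Real.exp_log (show 0 < Real.log x by linarith)]
    linarith [Real.add_one_le_exp (Real.log (Real.log x))]
  calc 1 + Real.log x ≤ Real.log x ^ 2 := by nlinarith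
    _ = Real.exp (2 * Real.log (Real.log x)) := by
      rw [mul_comm, Real.exp_mul, Real.exp_log (by linarith)]; norm_cast
    _ ≤ _ := by
      apply Real.exp_le_exp.mpr
      calc 2 * Real.log (Real.log x) = 2 / ε * Real.log (Real.log x) * ε := by field_simp
        _ ≤ _ := by gcongr

open Filter Topology in
open Classical in
/-- The `L(x)`-smooth numbers up to `x` number at most `x / L(x) ^ (1/5)`. The true exponent is
close to `1 / 2`; `1 / 5` comes from `x ^ (1 - η) = x / L(x) ^ (1/4)` for the chosen `η`, less the
Euler product, which is only `L(x) ^ o(1)`. -/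
theorem eventually_card_smooth_le : ∀ᶠ x : ℝ in atTop,
    (((Finset.Icc 1 ⌊x⌋₊).filter fun n : ℕ =>
      ∀ p : ℕ, p.Prime → p ∣ n → (p : ℝ) ≤ Lfun x).card : ℝ) ≤ x / Lfun x ^ (1 / 5 : ℝ) := by
  -- With `l = log x`, this makes the exponent `16 * l ^ (1/4) * (1 + log (3 * l))` of the
  -- Euler product at most `√l / 20`.
  have hlit : ∀ᶠ l : ℝ in atTop, 1 + Real.log (3 * l) ≤ 1 / 320 * l ^ (1 / 4 : ℝ) := by
    have h1 := (isLittleO_log_rpow_atTop (r := 1 / 4) (by norm_num)).bound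
      (show (0 : ℝ) < 1 / 640 by norm_num)
    have h2 : Tendsto (fun l : ℝ => l ^ (1 / 4 : ℝ)) atTop atTop :=
      tendsto_rpow_atTop (by norm_num)
    filter_upwards [h1, h2.eventually_ge_atTop (640 * (1 + Real.log 3)), eventually_ge_atTop 1]
      with l h1 h2 h3
    rw [Real.norm_eq_abs, Real.norm_eq_abs, abs_of_nonneg (Real.log_nonneg h3),
      abs_of_nonneg (by positivity)] at h1
    rw [Real.log_mul (by norm_num) (by linarith)]
    linarith
  filter_upwards [Real.tendsto_log_atTop.eventually hlit, eventually_log_params,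
    eventually_loglog_le (1 / 4) (by norm_num), eventually_Lfun_rpow_le 1 one_pos]
    with x hlit ⟨h1, h2, h3⟩ hll hLx
  set l := Real.log x with hl
  set s := √(l * Real.log l) with hs
  have hx0 : 0 < x := by linarith
  have hl0 : 0 < l := by linarith
  have hs2 : s ^ 2 = l * Real.log l := Real.sq_sqrt (by positivity)
  have hs0 : 0 < s := Real.sqrt_pos.mpr (by positivity)
  have hL : Lfun x = Real.exp s := rfl
  -- `η` is chosen so that `L(x) ^ η = (log x) ^ (1/4)`
  set η := Real.log l / (4 * s) with hη
  have hLη : Lfun x ^ η = l ^ (1 / 4 : ℝ) := by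
    rw [hL, ← Real.exp_mul, Real.rpow_def_of_pos hl0]
    congr 1
    rw [hη]; field_simp
  have hlogs : Real.log l ≤ s := by
    apply Real.le_sqrt_of_sq_le
    rw [sq]
    gcongr
    linarith
  have hη' : η ≤ 1 / 2 := by
    rw [hη, div_le_iff₀ (by positivity)]
    linarith
  have hxη : x ^ (1 - η) = x * Real.exp (-(s / 4)) := by
    rw [Real.rpow_sub hx0, Real.rpow_one, Real.rpow_def_of_pos hx0, div_eq_mul_inv, ← Real.exp_neg]
    congr 3
    rw [← hl, hη]
    field_simp
    exact hs2.symm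
  -- The crude bound `L(x) ≤ x` suffices here, since only `log J` enters the estimate.
  have hJ : Lfun x < 2 ^ (⌈2 * l⌉₊ + 1) := by
    rw [Real.rpow_one] at hLx
    have h4 : x ≤ (2 : ℝ) ^ (2 * l) := by
      rw [Real.rpow_def_of_pos (by norm_num)]
      calc x = Real.exp l := (Real.exp_log hx0).symm
        _ ≤ _ := by
          gcongr
          nlinarith [Real.log_two_gt_d9]
    calc Lfun x ≤ (2 : ℝ) ^ (2 * l) := hLx.trans h4
      _ ≤ (2 : ℝ) ^ ((⌈2 * l⌉₊ : ℕ) : ℝ) :=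
        Real.rpow_le_rpow_of_exponent_le (by norm_num) (Nat.le_ceil _)
      _ = 2 ^ ⌈2 * l⌉₊ := Real.rpow_natCast _ _
      _ < _ := pow_lt_pow_right₀ (by norm_num) (Nat.lt_succ_self _)
  have hJl : Real.log (⌈2 * l⌉₊ : ℝ) ≤ Real.log (3 * l) := by
    have h5 := (Nat.ceil_lt_add_one (show 0 ≤ 2 * l by linarith)).le
    have h6 : (0 : ℝ) < (⌈2 * l⌉₊ : ℝ) := by
      have := Nat.le_ceil (2 * l)
      linarith
    apply Real.log_le_log h6
    linarith
  have hLge : 1 ≤ Lfun x := by rw [hL]; exact Real.one_le_exp hs0.le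
  refine (card_smooth_le h3 hLge (by positivity) hη' hJ).trans ?_
  rw [hxη, hLη, hL, ← Real.exp_mul, div_eq_mul_inv x, ← Real.exp_neg, mul_assoc, ← Real.exp_add]
  gcongr
  have hq : l ^ (1 / 4 : ℝ) * l ^ (1 / 4 : ℝ) ≤ s := by
    rw [← Real.rpow_add hl0, show (1 / 4 + 1 / 4 : ℝ) = 1 / 2 by norm_num, ← Real.sqrt_eq_rpow]
    apply Real.sqrt_le_sqrt
    nlinarith
  have hq0 : 0 ≤ l ^ (1 / 4 : ℝ) := by positivity
  have : l ^ (1 / 4 : ℝ) * (4 * (1 + Real.log (⌈2 * l⌉₊ : ℝ))) ≤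
      l ^ (1 / 4 : ℝ) * (4 * (1 / 320 * l ^ (1 / 4 : ℝ))) := by
    gcongr
    linarith
  linarith

/-! ### The counting bound -/

open Filter Topology in
open Classical in
/-- The bound of `card_pairs_le` with `y = L(x)`, `W = ⌈L(x) ^ θ⌉` and `z = ⌈x ^ (1/3)⌉`, where
`θ = 1 / (2k + 2)` makes `W ^ (k + 1)` of size `L(x) ^ (1/2)`. -/
theorem eventually_card_pairs_le {k : ℕ} {b r : Fin k → ℤ}
    (hinj : Function.Injective fun i => r i ^ 2) (hr : ∀ i, r i ≠ 0) :
    ∃ K : ℝ, 0 ≤ K ∧ ∀ᶠ x : ℝ in atTop,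
    (((Finset.Icc 1 ⌊x⌋₊).filter fun n : ℕ => ∃ p m : ℕ, p.Prime ∧ Lfun x < p ∧ n = p * m ∧
      ∑ i, b i * r i ^ m ≠ 0 ∧ (p : ℤ) ∣ ∑ i, b i * r i ^ m).card : ℝ) ≤
      K * (x / Lfun x ^ (3 / 4 * (1 / (2 * k + 2)) : ℝ)) := by
  by_cases hb : ∃ i₀, b i₀ ≠ 0
  swap
  · push Not at hb
    refine ⟨0, le_rfl, Eventually.of_forall fun x => ?_⟩
    simp [hb]
  obtain ⟨i₀, hb⟩ := hb
  set R : ℕ := ∑ i, (r i).natAbs with hRdef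
  set B : ℕ := ∑ i, (b i).natAbs with hBdef
  have habs : ∀ (f : Fin k → ℤ) (i : Fin k), |f i| ≤ ((∑ i, (f i).natAbs : ℕ) : ℤ) := by
    intro f i
    rw [Int.abs_eq_natAbs]
    exact_mod_cast Finset.single_le_sum (f := fun i => (f i).natAbs) (fun _ _ => Nat.zero_le _)
      (Finset.mem_univ i)
  set θ : ℝ := 1 / (2 * k + 2) with hθ
  have hθ0 : 0 < θ := by positivity
  have hθ1 : θ ≤ 1 / 2 := by
    rw [hθ]
    gcongr
    linarith [(Nat.cast_nonneg k : (0 : ℝ) ≤ k)]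
  set C : ℝ := k.factorial + 2 * k * R with hC
  refine ⟨4 * (k * B + R) + C * 2 ^ (k + 1) + 4 * k, by positivity, ?_⟩
  filter_upwards [eventually_log_params, tendsto_Lfun.eventually_ge_atTop (1 + R + B),
    eventually_Lfun_rpow_le 3 (by norm_num), eventually_log_le_Lfun (θ / 4) (by positivity)]
    with x ⟨_, h2, hx1⟩ hL hL3 hlog
  have hx0 : 0 < x := by linarith
  set L := Lfun x with hLdef
  have hL1 : 1 ≤ L := by
    linarith [(Nat.cast_nonneg R : (0 : ℝ) ≤ R), (Nat.cast_nonneg B : (0 : ℝ) ≤ B)]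
  have hL0 : 0 < L := by linarith
  set E := x / L ^ (3 / 4 * θ) with hE
  have hdiv : ∀ e : ℝ, 3 / 4 * θ ≤ e → x / L ^ e ≤ E := by
    intro e he
    rw [hE]
    gcongr
  have hceil : ∀ t : ℝ, 1 ≤ t → (⌈t⌉₊ : ℝ) ≤ 2 * t := fun t ht => by
    linarith [(Nat.ceil_lt_add_one (show 0 ≤ t by linarith)).le]
  set W := ⌈L ^ θ⌉₊ with hW
  set z := ⌈x ^ (1 / 3 : ℝ)⌉₊ with hz
  have hLθ1 : 1 ≤ L ^ θ := Real.one_le_rpow hL1 hθ0.le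
  have hxt1 : 1 ≤ x ^ (1 / 3 : ℝ) := Real.one_le_rpow hx1 (by norm_num)
  have hWle : (W : ℝ) ≤ 2 * L ^ θ := hceil _ hLθ1
  have hWge : L ^ θ ≤ W := Nat.le_ceil _
  have hzle : (z : ℝ) ≤ 2 * x ^ (1 / 3 : ℝ) := hceil _ hxt1
  have hzge : x ^ (1 / 3 : ℝ) ≤ z := Nat.le_ceil _
  have hLx : L ≤ x ^ (1 / 3 : ℝ) := by
    calc L = (L ^ (3 : ℝ)) ^ (1 / 3 : ℝ) := by
          rw [← Real.rpow_mul hL0.le]; norm_num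
      _ ≤ _ := by gcongr
  have hx3 : x = (x ^ (1 / 3 : ℝ)) ^ 3 := by
    rw [← Real.rpow_natCast, ← Real.rpow_mul hx0.le]; norm_num
  have hxE : x / L ≤ E := by
    have := hdiv 1 (by linarith)
    rwa [Real.rpow_one] at this
  have hxdiv : x / x ^ (1 / 3 : ℝ) ≤ E := le_trans (by gcongr) hxE
  have hz2 : (z : ℝ) ^ 2 ≤ 4 * E := by
    calc (z : ℝ) ^ 2 ≤ (2 * x ^ (1 / 3 : ℝ)) ^ 2 := by gcongr
      _ = 4 * ((x ^ (1 / 3 : ℝ)) ^ 3 / x ^ (1 / 3 : ℝ)) := by field_simp; ring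
      _ = 4 * (x / x ^ (1 / 3 : ℝ)) := by rw [← hx3]
      _ ≤ 4 * E := by gcongr
  have hxz : x / z ≤ E := le_trans (by gcongr) hxdiv
  have hWk : (W : ℝ) ^ (k + 1) * (x / L) ≤ 2 ^ (k + 1) * E := by
    have h3 : (L ^ θ) ^ (k + 1) = L ^ (1 / 2 : ℝ) := by
      rw [← Real.rpow_natCast, ← Real.rpow_mul hL0.le]
      congr 1
      rw [hθ]; push_cast; field_simp
    calc (W : ℝ) ^ (k + 1) * (x / L) ≤ (2 * L ^ θ) ^ (k + 1) * (x / L) := by gcongr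
      _ = 2 ^ (k + 1) * (x / L ^ (1 / 2 : ℝ)) := by
        rw [mul_pow, h3, mul_assoc]
        congr 1
        have h4 : L = L ^ (1 / 2 : ℝ) * L ^ (1 / 2 : ℝ) := by
          rw [← Real.rpow_add hL0]; norm_num
        have h5 : L ^ (1 / 2 : ℝ) ≠ 0 := by positivity
        nth_rw 2 [h4]
        field_simp
      _ ≤ _ := by
        gcongr
        exact hdiv _ (by linarith)
  -- The harmonic factor `1 + log x` is absorbed at the cost of `L ^ (θ / 4)`.
  have hxW : x / W * (1 + Real.log x) ≤ E := by
    calc x / W * (1 + Real.log x) ≤ x / L ^ θ * L ^ (θ / 4) := by gcongr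
      _ = E := by
        rw [hE, show 3 / 4 * θ = θ - θ / 4 by ring, Real.rpow_sub hL0]
        field_simp
  have hmain := card_pairs_le hinj hr (habs r) (habs b) hb hx1 hL1 (by rw [← hRdef]; linarith
      [(Nat.cast_nonneg B : (0 : ℝ) ≤ B)]) (by rw [← hBdef]; linarith
      [(Nat.cast_nonneg R : (0 : ℝ) ≤ R)])
    (W := W) (z := z) (Nat.ceil_pos.mpr (by positivity)) (Nat.ceil_pos.mpr (by positivity))
  refine hmain.trans ?_
  rw [← hRdef, ← hBdef, ← hC]
  have t1 : (k * B + R : ℝ) * (z : ℝ) ^ 2 ≤ (k * B + R) * (4 * E) := by gcongr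
  have t2 : C * (W : ℝ) ^ (k + 1) * (x / L) ≤ C * (2 ^ (k + 1) * E) := by
    rw [mul_assoc]; gcongr
  have t3 : 2 * (k : ℝ) * (x / W * (1 + Real.log x) + x / z) ≤ 2 * k * (E + E) := by gcongr
  linarith

open Classical in
/-- An `n` counted by `countM` is either `y`-smooth or of the form `p * m` with `p > y` prime
dividing the nonzero integer `D * u m`. -/
theorem countM_le_add {k : ℕ} {u : ℕ → ℤ} {D : ℤ} {b r : Fin k → ℤ} (hD : D ≠ 0)
    (hrep : ∀ n, D * u n = ∑ i, b i * r i ^ n) (x y : ℝ) :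
    countM u x ≤ ((Finset.Icc 1 ⌊x⌋₊).filter fun n : ℕ =>
        ∀ p : ℕ, p.Prime → p ∣ n → (p : ℝ) ≤ y).card +
      ((Finset.Icc 1 ⌊x⌋₊).filter fun n : ℕ => ∃ p m : ℕ, p.Prime ∧ y < p ∧ n = p * m ∧
        ∑ i, b i * r i ^ m ≠ 0 ∧ (p : ℤ) ∣ ∑ i, b i * r i ^ m).card := by
  refine le_trans (Finset.card_le_card ?_) (Finset.card_union_le _ _)
  intro n hn
  obtain ⟨hn, hdvd, hnot⟩ := Finset.mem_filter.mp hn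
  rw [Finset.mem_union, Finset.mem_filter, Finset.mem_filter]
  by_cases hs : ∀ p : ℕ, p.Prime → p ∣ n → (p : ℝ) ≤ y
  · exact Or.inl ⟨hn, hs⟩
  · push Not at hs
    obtain ⟨p, hp, ⟨m, rfl⟩, hyp⟩ := hs
    have hm : 0 < m := Nat.pos_of_ne_zero (by rintro rfl; simp at hn)
    refine Or.inr ⟨hn, p, m, hp, hyp, rfl, ?_, ?_⟩
    · rw [← hrep m]
      exact mul_ne_zero hD fun h => hnot ⟨p, m, hp, hm, h, rfl⟩
    · apply dvd_of_dvd_prime_mul b r hp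
      rw [← hrep]
      refine Dvd.dvd.mul_left (dvd_trans ?_ hdvd) _
      push_cast
      exact dvd_mul_right _ _

theorem statement10 (k : ℕ) (hk : 2 ≤ k) :
    ∃ c₄ : ℝ, 0 < c₄ ∧
      ∀ (a : Fin k → ℤ) (u : ℕ → ℤ),
        a ⟨k - 1, by omega⟩ ≠ 0 →
        IsLinRec k a u →
        (∃ r : Fin k → ℤ, Function.Injective r ∧
          charPoly k a = ∏ i : Fin k, (X - C (r i))) →
        Nondegen k a →
        ∃ x₀ : ℝ, ∀ x : ℝ, x₀ ≤ x →
          (countM u x : ℝ) ≤ x / Lfun x ^ c₄ := by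
  set θ : ℝ := 1 / (2 * k + 2) with hθ
  have hθ0 : 0 < θ := by positivity
  have hθ1 : θ ≤ 1 / 6 := by
    rw [hθ]
    have : (2 : ℝ) ≤ k := by exact_mod_cast hk
    gcongr
    linarith
  refine ⟨θ / 2, by positivity, ?_⟩
  rintro a u ha hu ⟨r, hinj, hf⟩ hnd
  obtain ⟨D, b, hD, hrep⟩ := exists_repr hu hinj hf
  obtain ⟨K, hK, hpairs⟩ := eventually_card_pairs_le (b := b) (sq_injective rfl ha hinj hf hnd)
    (fun i => root_ne_zero rfl ha (eval_root_eq_zero hf i))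
  rw [← hθ] at hpairs
  have htend : Filter.Tendsto (fun x => Lfun x ^ (θ / 4)) Filter.atTop Filter.atTop :=
    (tendsto_rpow_atTop (by positivity)).comp tendsto_Lfun
  refine Filter.eventually_atTop.mp ?_
  filter_upwards [hpairs, eventually_card_smooth_le, htend.eventually_ge_atTop (1 + K),
    tendsto_Lfun.eventually_ge_atTop 1, Filter.eventually_ge_atTop 1] with x h1 h2 hKL hL1 hx1
  have hL0 : 0 < Lfun x := by linarith
  have hx0 : 0 < x := by linarith
  have h3 : (countM u x : ℝ) ≤ _ := Nat.cast_le.mpr (countM_le_add hD hrep x (Lfun x))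
  push_cast at h3
  have h4 : x / Lfun x ^ (1 / 5 : ℝ) ≤ x / Lfun x ^ (3 / 4 * θ) := by
    gcongr
    linarith
  -- The constant `1 + K` is absorbed by the remaining factor `L(x) ^ (θ / 4)`.
  calc (countM u x : ℝ) ≤ (1 + K) * (x / Lfun x ^ (3 / 4 * θ)) := by linarith
    _ ≤ Lfun x ^ (θ / 4) * (x / Lfun x ^ (3 / 4 * θ)) := by gcongr
    _ = x / Lfun x ^ (θ / 2) := by
      rw [show 3 / 4 * θ = θ / 2 + θ / 4 by ring, Real.rpow_add hL0]
      field_simp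
end

section
/- Let A and a be integers with A ≠ 0 and |a| ≥ 2, and let u_n = A·a^n for all n ≥ 0. Then there is a constant C (depending on A and a) such that for all x ≥ 2, the number of positive integers n ≤ x with n ∣ u_n is at most C·(log x)^{ω(|a|)}, where ω(m) denotes the number of distinct prime factors of m. -/
/-!
If `n ∣ A * a ^ n`, then a prime `q ∤ a` satisfies `v_q(n) ≤ v_q(A)`, so `v_q(n)` can be read off
from `gcd(n, |A|)`. Hence `n` is determined by the divisor `gcd(n, |A|)` of `|A|` together with the
exponents `v_p(n)` for the `ω(|a|)` primes `p ∣ a`. For `n ≤ x` each exponent is at most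
`log x / log 2`, so there are at most `τ(|A|) * (1 + log x / log 2) ^ ω(|a|)` such `n`, and
`1 ≤ log x / log 2` for `x ≥ 2`.
-/

lemma factorization_le_of_dvd_mul_pow {B b n q : ℕ} (hB : B ≠ 0) (hb : b ≠ 0)
    (h : n ∣ B * b ^ n) (hq : q ∉ b.primeFactors) : n.factorization q ≤ B.factorization q := by
  have hbn : b ^ n ≠ 0 := pow_ne_zero _ hb
  have hn : n ≠ 0 := by
    rintro rfl
    exact mul_ne_zero hB hbn (zero_dvd_iff.mp h)
  have h1 := (Nat.factorization_le_iff_dvd hn (mul_ne_zero hB hbn)).mpr h q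
  rw [Nat.factorization_mul hB hbn, Nat.factorization_pow] at h1
  have h2 : b.factorization q = 0 := by
    rwa [← Finsupp.notMem_support_iff, Nat.support_factorization]
  simpa [h2] using h1

lemma eq_of_gcd_eq_of_factorization_eq {B b m n : ℕ} (hB : B ≠ 0) (hb : b ≠ 0)
    (hm0 : m ≠ 0) (hn0 : n ≠ 0) (hm : m ∣ B * b ^ m) (hn : n ∣ B * b ^ n)
    (hg : m.gcd B = n.gcd B)
    (hf : ∀ p ∈ b.primeFactors, m.factorization p = n.factorization p) : m = n := by
  refine Nat.eq_of_factorization_eq hm0 hn0 fun q => ?_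
  by_cases hq : q ∈ b.primeFactors
  · exact hf q hq
  · have h1 := congrArg (fun k => k.factorization q) hg
    simp only [Nat.factorization_gcd hm0 hB, Nat.factorization_gcd hn0 hB,
      Finsupp.inf_apply] at h1
    rwa [inf_eq_left.mpr (factorization_le_of_dvd_mul_pow hB hb hm hq),
      inf_eq_left.mpr (factorization_le_of_dvd_mul_pow hB hb hn hq)] at h1

open Classical in
lemma card_filter_dvd_mul_pow_le (A a : ℤ) (hA : A ≠ 0) (ha : a ≠ 0) (N : ℕ) :
    ((Finset.Icc 1 N).filter fun n : ℕ => (n : ℤ) ∣ A * a ^ n).card ≤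
      A.natAbs.divisors.card * (Nat.log 2 N + 1) ^ a.natAbs.primeFactors.card := by
  have hB : A.natAbs ≠ 0 := Int.natAbs_ne_zero.mpr hA
  have hb : a.natAbs ≠ 0 := Int.natAbs_ne_zero.mpr ha
  have key : ∀ n : ℕ, (n : ℤ) ∣ A * a ^ n → n ∣ A.natAbs * a.natAbs ^ n := fun n h => by
    simpa [Int.natAbs_mul, Int.natAbs_pow] using Int.natCast_dvd.mp h
  let T : Finset (ℕ × (a.natAbs.primeFactors → ℕ)) :=
    A.natAbs.divisors ×ˢ Fintype.piFinset fun _ => Finset.range (Nat.log 2 N + 1)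
  have hT : T.card = A.natAbs.divisors.card * (Nat.log 2 N + 1) ^ a.natAbs.primeFactors.card := by
    simp [T, Finset.card_product]
  rw [← hT]
  refine Finset.card_le_card_of_injOn
    (fun n => (n.gcd A.natAbs, fun p => n.factorization p)) ?_ ?_
  · intro n hn
    simp only [Finset.coe_filter, Finset.mem_Icc, Set.mem_setOf_eq] at hn
    obtain ⟨⟨h1, hN⟩, -⟩ := hn
    simp only [T, Finset.mem_coe, Finset.mem_product, Nat.mem_divisors, Fintype.mem_piFinset,
      Finset.mem_range]
    refine ⟨⟨Nat.gcd_dvd_right _ _, hB⟩, fun p => Nat.lt_succ_of_le ?_⟩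
    have hp : (p : ℕ).Prime := Nat.prime_of_mem_primeFactors p.2
    refine Nat.le_log_of_pow_le one_lt_two ?_
    calc 2 ^ n.factorization p ≤ (p : ℕ) ^ n.factorization p :=
          Nat.pow_le_pow_left hp.two_le _
      _ ≤ n := Nat.le_of_dvd h1 (Nat.ordProj_dvd n p)
      _ ≤ N := hN
  · intro m hm n hn hmn
    simp only [Finset.coe_filter, Finset.mem_Icc, Set.mem_setOf_eq] at hm hn
    simp only [Prod.mk.injEq] at hmn
    exact eq_of_gcd_eq_of_factorization_eq hB hb (by omega) (by omega) (key m hm.2) (key n hn.2)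
      hmn.1 fun p hp => congrFun hmn.2 ⟨p, hp⟩

open Classical in
theorem statement12 (A a : ℤ) (hA : A ≠ 0) (ha : 2 ≤ |a|) :
    ∃ C : ℝ, 0 < C ∧ ∀ x : ℝ, 2 ≤ x →
      (((Finset.Icc 1 ⌊x⌋₊).filter fun n : ℕ => (n : ℤ) ∣ A * a ^ n).card : ℝ) ≤
        C * Real.log x ^ (a.natAbs.primeFactors.card) := by
  have ha0 : a ≠ 0 := by
    rintro rfl
    simp at ha
  have hl2 : 0 < Real.log 2 := Real.log_pos one_lt_two
  have hτ : 0 < A.natAbs.divisors.card :=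
    Finset.card_pos.mpr (Nat.nonempty_divisors.mpr (Int.natAbs_ne_zero.mpr hA))
  refine ⟨A.natAbs.divisors.card * (2 / Real.log 2) ^ a.natAbs.primeFactors.card,
    by positivity, fun x hx => ?_⟩
  have hL : ((Nat.log 2 ⌊x⌋₊ : ℕ) : ℝ) + 1 ≤ 2 / Real.log 2 * Real.log x := by
    have hN : ⌊x⌋₊ ≠ 0 := (Nat.floor_pos.mpr (by linarith)).ne'
    have h1 : (2 : ℝ) ^ Nat.log 2 ⌊x⌋₊ ≤ x := by
      calc (2 : ℝ) ^ Nat.log 2 ⌊x⌋₊ ≤ (⌊x⌋₊ : ℝ) := by exact_mod_cast Nat.pow_log_le_self 2 hN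
        _ ≤ x := Nat.floor_le (by linarith)
    have h2 := Real.log_le_log (by positivity) h1
    rw [Real.log_pow] at h2
    have h3 : Real.log 2 ≤ Real.log x := Real.log_le_log two_pos hx
    rw [div_mul_eq_mul_div, le_div_iff₀ hl2]
    linarith
  calc _ ≤ ((A.natAbs.divisors.card *
        (Nat.log 2 ⌊x⌋₊ + 1) ^ a.natAbs.primeFactors.card : ℕ) : ℝ) := by
        exact_mod_cast card_filter_dvd_mul_pow_le A a hA ha0 ⌊x⌋₊
    _ ≤ A.natAbs.divisors.card *
        (2 / Real.log 2 * Real.log x) ^ a.natAbs.primeFactors.card := by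
        push_cast
        gcongr
    _ = _ := by rw [mul_pow, mul_assoc]
end
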